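/- arXiv:1504.02923 — 2 statements merged into one kernel-verified Lean document; each statement's English description precedes it below -/
import Mathlib

section
/- Let A ∈ ℝ^{m×n} with m < n satisfy the URP, let b ∈ ℝᵐ, and let x be a solution of Aw = b of minimal ‖·‖₀ with k := ‖x‖₀. If 2k ≤ m, then: (i) there exist p ∈ (0,1) and λ > 0 such that every global minimizer of G_p over {w : Aw = b} equals x; and (ii) for every p < 0 there exists λ > 0 such that every global minimizer of G_p over {w : Aw = b} equals x. -/
open MeasureTheory Filter
open scoped BigOperators

noncomputable section

/-- `l0 w` is the number of nonzero entries of `w`. -/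
def l0 {n : ℕ} (w : Fin n → ℝ) : ℕ := (Finset.univ.filter fun i => w i ≠ 0).card

/-- Euclidean (`ℓ²`) norm of a vector. -/
def l2 {k : ℕ} (v : Fin k → ℝ) : ℝ := Real.sqrt (∑ i, v i ^ 2)

/-- Restriction `h_T` of a vector to a finset `T` (zero outside `T`). -/
def restr {n : ℕ} (T : Finset (Fin n)) (h : Fin n → ℝ) : Fin n → ℝ :=
  fun i => if i ∈ T then h i else 0

/-- Unique Representation Property: every `m` columns of `A` are linearly independent. -/
def URP {m n : ℕ} (A : Matrix (Fin m) (Fin n) ℝ) : Prop :=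
  ∀ S : Finset (Fin n), S.card = m →
    LinearIndependent ℝ (fun j : S => (fun i : Fin m => A i (j : Fin n)))

/-- Conditions (I)-(II) on the penalty component `g`. -/
def PenaltyConds (g : ℝ → ℝ) : Prop :=
  g 0 = 0 ∧ (∀ w, g (-w) = g w) ∧ Continuous g ∧
    ((StrictMonoOn g (Set.Ioi 0) ∧ StrictConcaveOn ℝ (Set.Ioi 0) g) ∨
      (∃ γ : ℝ, 0 < γ ∧ StrictMonoOn g (Set.Ioc 0 γ) ∧
        StrictConcaveOn ℝ (Set.Ioc 0 γ) g ∧ ∀ w, γ ≤ w → g w = g γ))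

/-- Spectral (`ℓ² → ℓ²` operator) norm of a matrix. -/
def specNorm {m n : ℕ} (A : Matrix (Fin m) (Fin n) ℝ) : ℝ :=
  sSup {c | ∃ v : Fin n → ℝ, l2 v ≤ 1 ∧ c = l2 (A.mulVec v)}

/-- The `p`-shrinkage function `s_{λ,p}`. -/
def pshrinkFun (lam p t : ℝ) : ℝ :=
  if t ≤ 0 then 0 else max (t - lam ^ (2 - p) * t ^ (p - 1)) 0

/-- `f_p(x) = ∫₀ˣ s_{λ,p}(t) dt`. -/
def pf (lam p x : ℝ) : ℝ := ∫ t in (0 : ℝ)..x, pshrinkFun lam p t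

/-- Legendre–Fenchel transform `f_p*(w) = sup_{x ≥ 0} (x·w − f_p(x))`. -/
def pfstar (lam p w : ℝ) : ℝ := sSup ((fun x => x * w - pf lam p x) '' Set.Ici 0)

/-- The induced `p`-shrinkage penalty component `g_p`. -/
def gp (lam p w : ℝ) : ℝ := (pfstar lam p |w| - w ^ 2 / 2) / lam

/-- The induced `p`-shrinkage penalty `G_p`. -/
def Gp (lam p : ℝ) {n : ℕ} (w : Fin n → ℝ) : ℝ := ∑ i, gp lam p (w i)

/-- The `p`-shrinkage mapping `S_p`. -/
def Sp (lam p : ℝ) {n : ℕ} (x : Fin n → ℝ) : Fin n → ℝ :=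
  fun i => pshrinkFun lam p |x i| * Real.sign (x i)

/-- The objective `F_p(x) = λ G_p(x) + ½‖Ax − b‖₂²`. -/
def Fp (lam p : ℝ) {m n : ℕ} (A : Matrix (Fin m) (Fin n) ℝ) (b : Fin m → ℝ)
    (x : Fin n → ℝ) : ℝ :=
  lam * Gp lam p x + (1 / 2) * (l2 (A.mulVec x - b)) ^ 2

/-- Firm-thresholding penalty component. -/
def gfirm (μ w : ℝ) : ℝ := if |w| ≤ μ then |w| - w ^ 2 / (2 * μ) else μ / 2

/-- Firm-thresholding penalty. -/
def Gfirm (μ : ℝ) {n : ℕ} (w : Fin n → ℝ) : ℝ := ∑ i, gfirm μ (w i)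

/-- The `m × m` submatrix `A_S` of the columns of `A` indexed by `S`. -/
def colsub {m n : ℕ} (A : Matrix (Fin m) (Fin n) ℝ)
    (S : {S : Finset (Fin n) // S.card = m}) : Matrix (Fin m) (Fin m) ℝ :=
  Matrix.of fun i j => A i ((S.1.orderIsoOfFin S.2 j : Fin n))

/-- `α_S = ‖A_S⁻¹ b‖_{-∞}`. -/
def alphaS {m n : ℕ} (A : Matrix (Fin m) (Fin n) ℝ) (b : Fin m → ℝ)
    (S : {S : Finset (Fin n) // S.card = m}) : ℝ :=
  ⨅ i, |((colsub A S)⁻¹).mulVec b i|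

/-- `β_S = ‖A_S⁻¹ b‖_∞`. -/
def betaS {m n : ℕ} (A : Matrix (Fin m) (Fin n) ℝ) (b : Fin m → ℝ)
    (S : {S : Finset (Fin n) // S.card = m}) : ℝ :=
  ⨆ i, |((colsub A S)⁻¹).mulVec b i|

/-- `‖A_S⁻¹‖` (spectral norm). -/
def nrmInv {m n : ℕ} (A : Matrix (Fin m) (Fin n) ℝ)
    (S : {S : Finset (Fin n) // S.card = m}) : ℝ :=
  specNorm ((colsub A S)⁻¹)

/-!
The penalty `g_p` is even, increasing and strictly concave on `[0, ∞)`. By strict concavity, a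
global minimizer `z` cannot be perturbed in both directions along a kernel vector supported in the
support of `z`, so `z` is a basic solution, and there are only finitely many of these. Hence there
are `0 < a ≤ B`, independent of `p` and `λ`, such that the nonzero entries of every basic solution
have modulus in `[a, B]`. By the URP any solution other than `x` has at least `k + 1` nonzero
entries, so `x` wins as soon as `k g_p(B) < (k + 1) g_p(a)`.

With `φ(t) = t - s_{λ,p}(t) = λ^{2-p} t^{p-1}` on `[λ, ∞)`, the Legendre transform gives
`λ g_p(s(t)) = ∫_λ^t φ + (λ² - φ(t)²) / 2`. Therefore `λ g_p(a) ≥ ∫_λ^a φ`, while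
`λ (g_p(B) - g_p(a)) ≤ φ(a) (B - a)`; the quotient `∫_λ^a φ / (a φ(a))` exceeds any prescribed
constant, uniformly over `p ≤ q` and `λ ≤ L`, once `q` and `L` are small enough.
-/

open Set
open scoped Topology

section Integral

variable {f : ℝ → ℝ} {x y : ℝ}

lemma mul_sub_le_integral_of_monotoneOn (hf : MonotoneOn f (uIcc x y)) :
    f x * (y - x) ≤ ∫ t in x..y, f t := by
  have hint : IntervalIntegrable f volume x y := hf.intervalIntegrable
  rcases le_total x y with hxy | hyx
  · rw [uIcc_of_le hxy] at hf
    simpa [mul_comm] using intervalIntegral.integral_mono_on hxy intervalIntegrable_const hint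
      fun t ht => hf (left_mem_Icc.2 hxy) ht ht.1
  · rw [uIcc_of_ge hyx] at hf
    have h := intervalIntegral.integral_mono_on hyx hint.symm intervalIntegrable_const
      fun t ht => hf ht (right_mem_Icc.2 hyx) ht.2
    rw [intervalIntegral.integral_const, smul_eq_mul] at h
    rw [intervalIntegral.integral_symm]
    linarith

lemma integral_le_mul_sub_of_antitoneOn (hf : AntitoneOn f (uIcc x y)) :
    ∫ t in x..y, f t ≤ f x * (y - x) := by
  have h := mul_sub_le_integral_of_monotoneOn hf.neg
  simp only [intervalIntegral.integral_neg] at h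
  linarith

end Integral

section Concave

lemma strictConcaveOn_of_exists_lt_add_mul_sub {𝕜 : Type*} [Field 𝕜] [LinearOrder 𝕜]
    [IsStrictOrderedRing 𝕜] {s : Set 𝕜} {g : 𝕜 → 𝕜} (hs : Convex 𝕜 s)
    (h : ∀ w ∈ s, ∃ d, ∀ v ∈ s, v ≠ w → g v < g w + d * (v - w)) : StrictConcaveOn 𝕜 s g := by
  refine ⟨hs, fun x hx y hy hxy α β hα hβ hαβ => ?_⟩
  obtain ⟨d, hd⟩ := h _ (hs hx hy hα.le hβ.le hαβ)
  obtain rfl : α = 1 - β := eq_sub_of_add_eq hαβ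
  simp only [smul_eq_mul] at hd ⊢
  set w := (1 - β) * x + β * y with hw
  have hxw : x ≠ w := fun h => hxy (mul_left_cancel₀ hβ.ne' (by linear_combination h + hw))
  have hyw : y ≠ w := fun h => hxy (mul_left_cancel₀ hα.ne' (by linear_combination - h - hw))
  calc (1 - β) * g x + β * g y
      < (1 - β) * (g w + d * (x - w)) + β * (g w + d * (y - w)) :=
        add_lt_add (mul_lt_mul_of_pos_left (hd x hx hxw) hα)
          (mul_lt_mul_of_pos_left (hd y hy hyw) hβ)
    _ = g w := by rw [hw]; ring

lemma add_add_sub_lt_two_mul_of_even {g : ℝ → ℝ} (heven : g.Even)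
    (hg : StrictConcaveOn ℝ (Ici 0) g) {w e : ℝ} (he : e ≠ 0) (hew : |e| ≤ |w|) :
    g (w + e) + g (w - e) < 2 * g w := by
  wlog hw : 0 ≤ w generalizing w e
  · have h := this (w := -w) (e := -e) (by simpa) (by simpa) (by linarith)
    rwa [← neg_add, ← neg_sub', heven, heven, heven] at h
  obtain ⟨h_neg, h_pos⟩ := abs_le.1 (hew.trans_eq (abs_of_nonneg hw))
  have hne : w + e ≠ w - e := fun h => he (by linarith)
  have h := hg.2 (mem_Ici.2 (by linarith)) (mem_Ici.2 (by linarith)) hne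
    (one_half_pos (α := ℝ)) one_half_pos (add_halves 1)
  simp only [smul_eq_mul] at h
  rw [show 1 / 2 * (w + e) + 1 / 2 * (w - e) = w by ring] at h
  linarith

end Concave

section BasicSolution

/-- `z` is a basic solution of `A w = b`: the columns of `A` indexed by the support of `z` are
linearly independent, encoded as the absence of nonzero kernel vectors vanishing wherever `z`
does. -/
def IsBasicSolution {ι κ R : Type*} [Fintype κ] [NonUnitalNonAssocSemiring R]
    (A : Matrix ι κ R) (b : ι → R) (z : κ → R) : Prop :=
  A.mulVec z = b ∧ ∀ h, A.mulVec h = 0 → (∀ i, z i = 0 → h i = 0) → h = 0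

lemma finite_setOf_isBasicSolution {ι κ R : Type*} [Fintype κ] [NonUnitalNonAssocRing R]
    (A : Matrix ι κ R) (b : ι → R) : {z | IsBasicSolution A b z}.Finite := by
  refine Set.Finite.of_injOn (f := fun z => {i | z i = 0}) (mapsTo_univ _ _)
    (fun z hz y hy hzy => sub_eq_zero.1 ?_) finite_univ
  refine hz.2 (z - y) (by rw [Matrix.mulVec_sub, hz.1, hy.1, sub_self]) fun i hzi => ?_
  have hyi : y i = 0 := (Set.ext_iff.1 hzy i).1 hzi
  rw [Pi.sub_apply, hzi, hyi, sub_zero]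

lemma isBasicSolution_of_isMinOn {ι κ : Type*} [Fintype κ] {A : Matrix ι κ ℝ} {b : ι → ℝ}
    {g : ℝ → ℝ} (heven : g.Even) (hg : StrictConcaveOn ℝ (Ici 0) g) {z : κ → ℝ}
    (hz : A.mulVec z = b)
    (hmin : IsMinOn (fun w : κ → ℝ => ∑ i, g (w i)) {w | A.mulVec w = b} z) :
    IsBasicSolution A b z := by
  refine ⟨hz, fun h hh hsupp => ?_⟩
  by_contra hne
  obtain ⟨j, hj⟩ := Function.ne_iff.1 hne
  have hsmall : ∀ᶠ ε in 𝓝[>] (0 : ℝ), ∀ i, |ε * h i| ≤ |z i| := eventually_all.2 fun i => by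
    by_cases hi : z i = 0
    · simp [hi, hsupp i hi]
    · have hlim : Tendsto (fun ε : ℝ => |ε * h i|) (𝓝 0) (𝓝 0) :=
        Continuous.tendsto' (by fun_prop) _ _ (by simp)
      exact nhdsWithin_le_nhds (hlim.eventually_le_const (abs_pos.2 hi))
  obtain ⟨ε, hle, hε⟩ := (hsmall.and self_mem_nhdsWithin).exists
  have hε : ε ≠ 0 := (mem_Ioi.1 hε).ne'
  have h_add := isMinOn_iff.1 hmin (z + ε • h)
    (by simp [Matrix.mulVec_add, Matrix.mulVec_smul, hz, hh])
  have h_sub := isMinOn_iff.1 hmin (z - ε • h)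
    (by simp [Matrix.mulVec_sub, Matrix.mulVec_smul, hz, hh])
  have hlt : ∑ i, (g (z i + ε * h i) + g (z i - ε * h i)) < ∑ i, 2 * g (z i) := by
    refine Finset.sum_lt_sum (fun i _ => ?_) ⟨j, Finset.mem_univ j,
      add_add_sub_lt_two_mul_of_even heven hg (mul_ne_zero hε hj) (hle j)⟩
    by_cases hi : h i = 0
    · simp [hi, two_mul]
    · exact (add_add_sub_lt_two_mul_of_even heven hg (mul_ne_zero hε hi) (hle i)).le
  rw [Finset.sum_add_distrib, ← Finset.mul_sum] at hlt
  simp only [Pi.add_apply, Pi.sub_apply, Pi.smul_apply, smul_eq_mul] at h_add h_sub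
  linarith

lemma exists_pos_bounds_abs_of_finite {κ : Type*} [Finite κ] {F : Set (κ → ℝ)}
    (hF : F.Finite) :
    ∃ a B : ℝ, 0 < a ∧ a ≤ B ∧ ∀ z ∈ F, ∀ i, (z i ≠ 0 → a ≤ |z i|) ∧ |z i| ≤ B := by
  have hlower : ∀ᶠ a in 𝓝[>] (0 : ℝ), ∀ z ∈ F, ∀ i, z i ≠ 0 → a ≤ |z i| :=
    (eventually_all_finite hF).2 fun z _ => eventually_all.2 fun i =>
      eventually_imp_distrib_left.2 fun hi =>
        nhdsWithin_le_nhds (eventually_le_nhds (abs_pos.2 hi))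
  have hupper : ∀ᶠ B in atTop, ∀ z ∈ F, ∀ i, |z i| ≤ B :=
    (eventually_all_finite hF).2 fun z _ => eventually_all.2 fun i => eventually_ge_atTop _
  obtain ⟨a, ha, ha0⟩ := (hlower.and self_mem_nhdsWithin).exists
  obtain ⟨B, hB, haB⟩ := (hupper.and (eventually_ge_atTop a)).exists
  exact ⟨a, B, ha0, haB, fun z hz i => ⟨ha z hz i, hB z hz i⟩⟩

end BasicSolution

section Sparse

variable {m n : ℕ} {A : Matrix (Fin m) (Fin n) ℝ} {b : Fin m → ℝ}

lemma l0_mono {v w : Fin n → ℝ} (h : ∀ i, w i = 0 → v i = 0) : l0 v ≤ l0 w :=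
  Finset.card_le_card (Finset.monotone_filter_right _ fun i _ => mt (h i))

lemma l0_sub_le (v w : Fin n → ℝ) : l0 (v - w) ≤ l0 v + l0 w := by
  refine (Finset.card_le_card fun i hi => ?_).trans (Finset.card_union_le _ _)
  simp only [Finset.mem_filter, Finset.mem_univ, true_and, Finset.mem_union, Pi.sub_apply]
    at hi ⊢
  by_contra! h
  exact hi (by rw [h.1, h.2, sub_zero])

lemma URP.eq_zero_of_l0_le (hA : URP A) (hmn : m ≤ n) {h : Fin n → ℝ} (hh : A.mulVec h = 0)
    (hc : l0 h ≤ m) : h = 0 := by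
  obtain ⟨S, hS, hSm⟩ := Finset.exists_superset_card_eq hc (by simpa using hmn)
  have hout : ∀ j ∉ S, h j = 0 := fun j hj => by_contra fun hne => hj (hS (by simpa using hne))
  have hsum : ∑ j ∈ S, h j • A.col j = 0 := by
    rw [Finset.sum_subset (Finset.subset_univ S) fun j _ hj => by rw [hout j hj, zero_smul], ← hh,
      Matrix.mulVec_eq_sum]
    simp only [op_smul_eq_smul, Matrix.col]
  have hindep : LinearIndepOn ℝ A.col (S : Set (Fin n)) := hA S hSm
  have hin : ∀ j ∈ S, h j = 0 := linearIndepOn_finset_iff.1 hindep h hsum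
  exact funext fun j => (em (j ∈ S)).elim (hin j) (hout j)

lemma URP.eq_of_l0_add_l0_le (hA : URP A) (hmn : m ≤ n) {v w : Fin n → ℝ}
    (h : A.mulVec v = A.mulVec w) (hc : l0 v + l0 w ≤ m) : v = w :=
  sub_eq_zero.1 <| hA.eq_zero_of_l0_le hmn (by rw [Matrix.mulVec_sub, h, sub_self])
    ((l0_sub_le v w).trans hc)

lemma URP.isBasicSolution (hA : URP A) (hmn : m ≤ n) {x : Fin n → ℝ} (hx : A.mulVec x = b)
    (hc : l0 x ≤ m) : IsBasicSolution A b x :=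
  ⟨hx, fun _ hh hsupp => hA.eq_zero_of_l0_le hmn hh ((l0_mono hsupp).trans hc)⟩

lemma sum_le_l0_mul {g : ℝ → ℝ} (hg0 : g 0 = 0) {z : Fin n → ℝ} {c : ℝ}
    (h : ∀ i, z i ≠ 0 → g (z i) ≤ c) : ∑ i, g (z i) ≤ l0 z * c := by
  rw [← Finset.sum_filter_of_ne (p := fun i => z i ≠ 0) fun i _ => mt fun hi => by rw [hi, hg0],
    l0, ← nsmul_eq_mul]
  exact Finset.sum_le_card_nsmul _ _ _ fun i hi => h i (Finset.mem_filter.1 hi).2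

lemma l0_mul_le_sum {g : ℝ → ℝ} (hg0 : g 0 = 0) {z : Fin n → ℝ} {c : ℝ}
    (h : ∀ i, z i ≠ 0 → c ≤ g (z i)) : l0 z * c ≤ ∑ i, g (z i) := by
  have hneg := sum_le_l0_mul (g := -g) (z := z) (c := -c) (by simp [hg0])
    fun i hi => neg_le_neg (h i hi)
  simp only [Pi.neg_apply, Finset.sum_neg_distrib] at hneg
  linarith

lemma URP.eq_of_isMinOn_sum (hA : URP A) (hmn : m ≤ n) {g : ℝ → ℝ} (hg0 : g 0 = 0)
    (heven : g.Even) (hmono : MonotoneOn g (Ici 0)) (hconc : StrictConcaveOn ℝ (Ici 0) g)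
    {a B : ℝ} (ha : 0 ≤ a)
    (hbd : ∀ z, IsBasicSolution A b z → ∀ i, (z i ≠ 0 → a ≤ |z i|) ∧ |z i| ≤ B)
    {x z : Fin n → ℝ} (hx : A.mulVec x = b) (hk : 2 * l0 x ≤ m)
    (hlt : l0 x * g B < (l0 x + 1) * g a) (hz : A.mulVec z = b)
    (hmin : IsMinOn (fun w : Fin n → ℝ => ∑ i, g (w i)) {w | A.mulVec w = b} z) : z = x := by
  by_contra hne
  have g_abs : ∀ t, g |t| = g t := fun t => by
    rcases abs_choice t with h | h <;> simp only [h, heven t]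
  have hcard : l0 x + 1 ≤ l0 z := by
    by_contra! hc
    exact hne (hA.eq_of_l0_add_l0_le hmn (hz.trans hx.symm) (by omega))
  have hxb : IsBasicSolution A b x := hA.isBasicSolution hmn hx (by omega)
  have hzb : IsBasicSolution A b z := isBasicSolution_of_isMinOn heven hconc hz hmin
  have hga : 0 ≤ g a := hg0.symm.trans_le (hmono self_mem_Ici ha ha)
  refine lt_irrefl (∑ i, g (x i)) ?_
  calc ∑ i, g (x i) ≤ l0 x * g B := sum_le_l0_mul hg0 fun i _ => by
        have hi := (hbd x hxb i).2
        exact (g_abs (x i)).symm.trans_le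
          (hmono (mem_Ici.2 (abs_nonneg _)) (mem_Ici.2 ((abs_nonneg _).trans hi)) hi)
    _ < (l0 x + 1) * g a := hlt
    _ ≤ l0 z * g a := mul_le_mul_of_nonneg_right (by exact_mod_cast hcard) hga
    _ ≤ ∑ i, g (z i) := l0_mul_le_sum hg0 fun i hi =>
        (hmono ha (mem_Ici.2 (abs_nonneg _)) ((hbd z hzb i).1 hi)).trans_eq (g_abs (z i))
    _ ≤ ∑ i, g (x i) := hmin hx

end Sparse

section PShrinkage

variable {lam p t : ℝ}

/-- The amount `φ(t) = λ^{2-p} t^{p-1}` by which `p`-shrinkage lowers an argument `t ≥ λ`. It is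
also the slope of `λ g_p` at `s_{λ,p}(t)`. For `t < λ`, where `s_{λ,p}` vanishes, it is no longer
equal to `t - s_{λ,p}(t)`. -/
def pshrinkGap (lam p t : ℝ) : ℝ := lam ^ (2 - p) * t ^ (p - 1)

lemma pshrinkGap_pos (hl : 0 < lam) (ht : 0 < t) : 0 < pshrinkGap lam p t :=
  mul_pos (Real.rpow_pos_of_pos hl _) (Real.rpow_pos_of_pos ht _)

lemma pshrinkGap_self (hl : 0 < lam) : pshrinkGap lam p lam = lam := by
  rw [pshrinkGap, ← Real.rpow_add hl, show 2 - p + (p - 1) = 1 by ring, Real.rpow_one]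

lemma strictAntiOn_pshrinkGap (hl : 0 < lam) (hp : p < 1) :
    StrictAntiOn (pshrinkGap lam p) (Ioi 0) := fun _ hs _ _ hst =>
  mul_lt_mul_of_pos_left (Real.rpow_lt_rpow_of_neg hs hst (sub_neg.2 hp))
    (Real.rpow_pos_of_pos hl _)

lemma antitoneOn_pshrinkGap (hl : 0 < lam) (hp : p < 1) {x y : ℝ} (hx : 0 < x) (hy : 0 < y) :
    AntitoneOn (pshrinkGap lam p) (uIcc x y) :=
  (strictAntiOn_pshrinkGap hl hp).antitoneOn.mono fun _ ht => (lt_min hx hy).trans_le ht.1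

lemma intervalIntegrable_pshrinkGap (hl : 0 < lam) (hp : p < 1) {x y : ℝ} (hx : 0 < x)
    (hy : 0 < y) : IntervalIntegrable (pshrinkGap lam p) volume x y :=
  (antitoneOn_pshrinkGap hl hp hx hy).intervalIntegrable

lemma pshrinkFun_of_le (hl : 0 < lam) (hp : p < 1) (ht : t ≤ lam) : pshrinkFun lam p t = 0 := by
  rcases le_or_gt t 0 with ht0 | ht0
  · rw [pshrinkFun, if_pos ht0]
  · have hgap : lam ≤ pshrinkGap lam p t := (pshrinkGap_self hl).symm.trans_le
      ((strictAntiOn_pshrinkGap hl hp).antitoneOn ht0 hl ht)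
    rw [pshrinkFun, if_neg ht0.not_ge]
    exact max_eq_right (sub_nonpos.2 (ht.trans hgap))

lemma pshrinkFun_of_ge (hl : 0 < lam) (hp : p < 1) (ht : lam ≤ t) :
    pshrinkFun lam p t = t - pshrinkGap lam p t := by
  have ht0 : 0 < t := hl.trans_le ht
  have hgap : pshrinkGap lam p t ≤ lam :=
    ((strictAntiOn_pshrinkGap hl hp).antitoneOn hl ht0 ht).trans_eq (pshrinkGap_self hl)
  rw [pshrinkFun, if_neg ht0.not_ge]
  exact max_eq_left (sub_nonneg.2 (hgap.trans ht))

lemma monotone_pshrinkFun (hl : 0 < lam) (hp : p < 1) : Monotone (pshrinkFun lam p) := by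
  refine MonotoneOn.Iic_union_Ici (a := lam) (fun s hs t ht _ => ?_) fun s hs t ht hst => ?_
  · rw [pshrinkFun_of_le hl hp hs, pshrinkFun_of_le hl hp ht]
  · rw [pshrinkFun_of_ge hl hp hs, pshrinkFun_of_ge hl hp ht]
    exact sub_le_sub hst ((strictAntiOn_pshrinkGap hl hp).antitoneOn
      (hl.trans_le hs) (hl.trans_le ht) hst)

lemma exists_pshrinkFun_eq (hl : 0 < lam) (hp : p < 1) {w : ℝ} (hw : 0 ≤ w) :
    ∃ t, lam ≤ t ∧ pshrinkFun lam p t = w := by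
  have hle : lam ≤ w + lam := le_add_of_nonneg_left hw
  have hcont : ContinuousOn (fun t => t - pshrinkGap lam p t) (Icc lam (w + lam)) :=
    continuousOn_id.sub (continuousOn_const.mul (continuousOn_id.rpow_const
      fun t ht => Or.inl (hl.trans_le ht.1).ne'))
  have hgap : pshrinkGap lam p (w + lam) ≤ lam :=
    ((strictAntiOn_pshrinkGap hl hp).antitoneOn hl (hl.trans_le hle) hle).trans_eq
      (pshrinkGap_self hl)
  obtain ⟨t, ht, htw⟩ : w ∈ (fun t => t - pshrinkGap lam p t) '' Icc lam (w + lam) :=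
    intermediate_value_Icc hle hcont ⟨by rwa [pshrinkGap_self hl, sub_self], by linarith⟩
  exact ⟨t, ht.1, (pshrinkFun_of_ge hl hp ht.1).trans htw⟩

lemma pf_of_ge (hl : 0 < lam) (hp : p < 1) (ht : lam ≤ t) :
    pf lam p t = (t ^ 2 - lam ^ 2) / 2 - ∫ u in lam..t, pshrinkGap lam p u := by
  have hint : ∀ x y, IntervalIntegrable (pshrinkFun lam p) volume x y :=
    fun _ _ => (monotone_pshrinkFun hl hp).intervalIntegrable
  have hleft : ∫ u in (0 : ℝ)..lam, pshrinkFun lam p u = 0 := by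
    rw [intervalIntegral.integral_congr (g := fun _ => 0) fun u hu => pshrinkFun_of_le hl hp
      (uIcc_of_le hl.le ▸ hu).2, intervalIntegral.integral_zero]
  rw [pf, ← intervalIntegral.integral_add_adjacent_intervals (hint 0 lam) (hint lam t), hleft,
    zero_add, intervalIntegral.integral_congr (g := fun u => u - pshrinkGap lam p u)
      fun u hu => pshrinkFun_of_ge hl hp (uIcc_of_le ht ▸ hu).1,
    intervalIntegral.integral_sub (continuous_id'.intervalIntegrable _ _)
      (intervalIntegrable_pshrinkGap hl hp hl (hl.trans_le ht)), integral_id]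

lemma pf_add_mul_sub_le (hl : 0 < lam) (hp : p < 1) (x y : ℝ) :
    pf lam p x + pshrinkFun lam p x * (y - x) ≤ pf lam p y := by
  have hint : ∀ z, IntervalIntegrable (pshrinkFun lam p) volume 0 z :=
    fun _ => (monotone_pshrinkFun hl hp).intervalIntegrable
  have h := mul_sub_le_integral_of_monotoneOn ((monotone_pshrinkFun hl hp).monotoneOn (uIcc x y))
  rw [← intervalIntegral.integral_interval_sub_left (hint y) (hint x)] at h
  exact le_sub_iff_add_le'.1 h

lemma pfstar_pshrinkFun (hl : 0 < lam) (hp : p < 1) (ht : 0 ≤ t) :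
    pfstar lam p (pshrinkFun lam p t) = t * pshrinkFun lam p t - pf lam p t := by
  refine IsGreatest.csSup_eq ⟨⟨t, ht, rfl⟩, ?_⟩
  rintro _ ⟨x, -, rfl⟩
  linarith [pf_add_mul_sub_le hl hp t x]

end PShrinkage

section Penalty

variable {lam p : ℝ}

lemma even_gp : (gp lam p).Even := fun w => by simp only [gp, abs_neg, neg_sq]

lemma mul_gp_pshrinkFun (hl : 0 < lam) (hp : p < 1) {t : ℝ} (ht : lam ≤ t) :
    lam * gp lam p (pshrinkFun lam p t) =
      (∫ u in lam..t, pshrinkGap lam p u) + (lam ^ 2 - pshrinkGap lam p t ^ 2) / 2 := by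
  have hnonneg : 0 ≤ pshrinkFun lam p t :=
    (pshrinkFun_of_le hl hp le_rfl).symm.trans_le (monotone_pshrinkFun hl hp ht)
  rw [gp, mul_div_cancel₀ _ hl.ne', abs_of_nonneg hnonneg, pfstar_pshrinkFun hl hp
    (hl.le.trans ht), pf_of_ge hl hp ht, pshrinkFun_of_ge hl hp ht]
  ring

lemma gp_zero (hl : 0 < lam) (hp : p < 1) : gp lam p 0 = 0 := by
  have h := mul_gp_pshrinkFun hl hp le_rfl
  rw [pshrinkFun_of_le hl hp le_rfl, intervalIntegral.integral_same, pshrinkGap_self hl, sub_self,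
    zero_div, add_zero] at h
  exact (mul_eq_zero.1 h).resolve_left hl.ne'

lemma gp_lt_add_mul_sub (hl : 0 < lam) (hp : p < 1) {t v : ℝ} (ht : lam ≤ t) (hv : 0 ≤ v)
    (hne : v ≠ pshrinkFun lam p t) :
    gp lam p v < gp lam p (pshrinkFun lam p t) +
      pshrinkGap lam p t / lam * (v - pshrinkFun lam p t) := by
  obtain ⟨r, hr, rfl⟩ := exists_pshrinkFun_eq hl hp hv
  have ht0 : 0 < t := hl.trans_le ht
  have hr0 : 0 < r := hl.trans_le hr
  have hgap : pshrinkGap lam p r ≠ pshrinkGap lam p t := fun h =>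
    hne (congrArg _ ((strictAntiOn_pshrinkGap hl hp).injOn hr0 ht0 h))
  have hsq : 0 < (pshrinkGap lam p r - pshrinkGap lam p t) ^ 2 := by
    positivity [sub_ne_zero.2 hgap]
  have hint : (∫ u in lam..r, pshrinkGap lam p u) - (∫ u in lam..t, pshrinkGap lam p u) ≤
      pshrinkGap lam p t * (r - t) := by
    rw [intervalIntegral.integral_interval_sub_left
      (intervalIntegrable_pshrinkGap hl hp hl hr0) (intervalIntegrable_pshrinkGap hl hp hl ht0)]
    exact integral_le_mul_sub_of_antitoneOn (antitoneOn_pshrinkGap hl hp ht0 hr0)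
  refine lt_of_mul_lt_mul_left ?_ hl.le
  rw [mul_add, ← mul_assoc, mul_div_cancel₀ _ hl.ne', mul_gp_pshrinkFun hl hp hr,
    mul_gp_pshrinkFun hl hp ht, pshrinkFun_of_ge hl hp hr, pshrinkFun_of_ge hl hp ht]
  linarith

lemma strictConcaveOn_gp (hl : 0 < lam) (hp : p < 1) :
    StrictConcaveOn ℝ (Ici 0) (gp lam p) := by
  refine strictConcaveOn_of_exists_lt_add_mul_sub (convex_Ici 0) fun w hw => ?_
  obtain ⟨t, ht, rfl⟩ := exists_pshrinkFun_eq hl hp hw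
  exact ⟨_, fun v hv hne => gp_lt_add_mul_sub hl hp ht hv hne⟩

lemma strictMonoOn_gp (hl : 0 < lam) (hp : p < 1) : StrictMonoOn (gp lam p) (Ici 0) := by
  intro v hv w hw hvw
  obtain ⟨t, ht, rfl⟩ := exists_pshrinkFun_eq hl hp hw
  have hslope : 0 < pshrinkGap lam p t / lam := div_pos (pshrinkGap_pos hl (hl.trans_le ht)) hl
  exact (gp_lt_add_mul_sub hl hp ht hv hvw.ne).trans
    (add_lt_of_neg_right _ (mul_neg_of_pos_of_neg hslope (sub_neg.2 hvw)))

lemma mul_gp_sub_gp_le (hl : 0 < lam) (hp : p < 1) {a B : ℝ} (ha : 0 < a) (haB : a ≤ B) :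
    lam * (gp lam p B - gp lam p a) ≤ pshrinkGap lam p a * (B - a) := by
  rcases haB.eq_or_lt with rfl | hlt
  · simp only [sub_self, mul_zero, le_refl]
  obtain ⟨t, ht, hta⟩ := exists_pshrinkFun_eq hl hp ha.le
  have ht0 : 0 < t := hl.trans_le ht
  have hat : a ≤ t := by
    rw [← hta, pshrinkFun_of_ge hl hp ht]
    exact sub_le_self _ (pshrinkGap_pos hl ht0).le
  have hslope := gp_lt_add_mul_sub hl hp ht (ha.le.trans haB) (hta ▸ hlt.ne')
  rw [hta] at hslope
  calc lam * (gp lam p B - gp lam p a) ≤ lam * (pshrinkGap lam p t / lam * (B - a)) :=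
        mul_le_mul_of_nonneg_left (by linarith) hl.le
    _ = pshrinkGap lam p t * (B - a) := by rw [← mul_assoc, mul_div_cancel₀ _ hl.ne']
    _ ≤ pshrinkGap lam p a * (B - a) := mul_le_mul_of_nonneg_right
        ((strictAntiOn_pshrinkGap hl hp).antitoneOn ha ht0 hat) (sub_nonneg.2 haB)

lemma integral_pshrinkGap_le_mul_gp (hl : 0 < lam) (hp : p < 1) {a : ℝ} (ha : 0 < a) :
    ∫ u in lam..a, pshrinkGap lam p u ≤ lam * gp lam p a := by
  obtain ⟨t, ht, hta⟩ := exists_pshrinkFun_eq hl hp ha.le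
  have ht0 : 0 < t := hl.trans_le ht
  have htail : ∫ u in t..a, pshrinkGap lam p u ≤ pshrinkGap lam p t * (a - t) :=
    integral_le_mul_sub_of_antitoneOn (antitoneOn_pshrinkGap hl hp ht0 ha)
  rw [← intervalIntegral.integral_add_adjacent_intervals
    (intervalIntegrable_pshrinkGap hl hp hl ht0) (intervalIntegrable_pshrinkGap hl hp ht0 ha)]
  have hgp := mul_gp_pshrinkFun hl hp ht
  rw [hta] at hgp
  have hat : a - t = -pshrinkGap lam p t := by rw [← hta, pshrinkFun_of_ge hl hp ht]; ring
  rw [hat] at htail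
  nlinarith [sq_nonneg lam, sq_nonneg (pshrinkGap lam p t)]

lemma mul_gp_lt_of_mul_pshrinkGap_lt (hl : 0 < lam) (hp : p < 1) {a B c : ℝ} (ha : 0 < a)
    (haB : a ≤ B) (hc : 0 ≤ c)
    (h : c * (B - a) * pshrinkGap lam p a < ∫ u in lam..a, pshrinkGap lam p u) :
    c * gp lam p B < (c + 1) * gp lam p a := by
  have hincr : c * (lam * (gp lam p B - gp lam p a)) ≤ c * (pshrinkGap lam p a * (B - a)) :=
    mul_le_mul_of_nonneg_left (mul_gp_sub_gp_le hl hp ha haB) hc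
  have hlower := integral_pshrinkGap_le_mul_gp hl hp ha
  refine lt_of_mul_lt_mul_left ?_ hl.le
  linarith

lemma pshrinkGap_mul_rpow_le (hl : 0 < lam) {a q u : ℝ} (hpq : p ≤ q) (hu : 0 < u)
    (hua : u ≤ a) : pshrinkGap lam p a * (u / a) ^ (q - 1) ≤ pshrinkGap lam p u := by
  have ha : 0 < a := hu.trans_le hua
  calc pshrinkGap lam p a * (u / a) ^ (q - 1) ≤ pshrinkGap lam p a * (u / a) ^ (p - 1) :=
        mul_le_mul_of_nonneg_left (Real.rpow_le_rpow_of_exponent_ge (div_pos hu ha)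
          ((div_le_one ha).2 hua) (sub_le_sub_right hpq 1)) (pshrinkGap_pos hl ha).le
    _ = pshrinkGap lam p u := by
        rw [pshrinkGap, mul_assoc, ← Real.mul_rpow ha.le (div_pos hu ha).le,
          mul_div_cancel₀ _ ha.ne', pshrinkGap]

lemma pshrinkGap_mul_le_integral (hl : 0 < lam) (hp : p < 1) {a q : ℝ} (ha : lam ≤ a)
    (hq : 0 < q) (hpq : p ≤ q) :
    pshrinkGap lam p a * (a * ((1 - (lam / a) ^ q) / q)) ≤
      ∫ u in lam..a, pshrinkGap lam p u := by
  have ha0 : 0 < a := hl.trans_le ha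
  have hrpow : ∫ u in lam..a, (u / a) ^ (q - 1) = a * ((1 - (lam / a) ^ q) / q) := by
    rw [intervalIntegral.integral_comp_div (fun u => u ^ (q - 1)) ha0.ne', smul_eq_mul,
      div_self ha0.ne', integral_rpow (Or.inl (by linarith)), sub_add_cancel, Real.one_rpow]
  have hint : IntervalIntegrable (fun u => (u / a) ^ (q - 1)) volume lam a :=
    ((continuousOn_id.div_const a).rpow_const fun u hu => Or.inl
      (div_pos (hl.trans_le (uIcc_of_le ha ▸ hu).1) ha0).ne').intervalIntegrable
  rw [← hrpow, ← intervalIntegral.integral_const_mul]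
  exact intervalIntegral.integral_mono_on ha (hint.const_mul _)
    (intervalIntegrable_pshrinkGap hl hp hl ha0)
    fun u hu => pshrinkGap_mul_rpow_le hl hpq (hl.trans_le hu.1) hu.2

lemma exists_forall_mul_gp_lt {a B c : ℝ} (ha : 0 < a) (haB : a ≤ B) (hc : 0 ≤ c) :
    ∃ q ∈ Ioo (0 : ℝ) 1, ∃ L > 0, ∀ p ≤ q, ∀ lam ∈ Ioc 0 L,
      c * gp lam p B < (c + 1) * gp lam p a := by
  set K : ℝ := c * (B - a) / a with hK
  have hK0 : 0 ≤ K := div_nonneg (mul_nonneg hc (sub_nonneg.2 haB)) ha.le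
  set q : ℝ := 1 / (K + 2) with hq
  have hq0 : 0 < q := by positivity
  have hq1 : q < 1 := by rw [hq, div_lt_one (by positivity)]; linarith
  have hL : a * q ^ (1 / q) ≤ a :=
    mul_le_of_le_one_right ha.le (Real.rpow_le_one hq0.le hq1.le (by positivity))
  refine ⟨q, ⟨hq0, hq1⟩, a * q ^ (1 / q), by positivity, fun p hpq lam ⟨hl, hlL⟩ => ?_⟩
  have hp : p < 1 := hpq.trans_lt hq1
  have hratio : (lam / a) ^ q ≤ q := calc
    (lam / a) ^ q ≤ (q ^ (1 / q)) ^ q :=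
      Real.rpow_le_rpow (by positivity) ((div_le_iff₀' ha).2 hlL) hq0.le
    _ = q := by rw [← Real.rpow_mul hq0.le, one_div_mul_cancel hq0.ne', Real.rpow_one]
  have hKlt : K < (1 - (lam / a) ^ q) / q := calc
    K < (1 - q) / q := by rw [sub_div, div_self hq0.ne', hq, one_div_one_div]; linarith
    _ ≤ (1 - (lam / a) ^ q) / q := by gcongr
  refine mul_gp_lt_of_mul_pshrinkGap_lt hl hp ha haB hc ?_
  calc c * (B - a) * pshrinkGap lam p a = pshrinkGap lam p a * (a * K) := by
        rw [hK, mul_div_cancel₀ _ ha.ne', mul_comm]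
    _ < pshrinkGap lam p a * (a * ((1 - (lam / a) ^ q) / q)) :=
        mul_lt_mul_of_pos_left (mul_lt_mul_of_pos_left hKlt ha) (pshrinkGap_pos hl ha)
    _ ≤ ∫ u in lam..a, pshrinkGap lam p u :=
        pshrinkGap_mul_le_integral hl hp (hlL.trans hL) hq0 hpq

end Penalty

theorem stmt7_general {m n : ℕ} (hmn : m ≤ n) {A : Matrix (Fin m) (Fin n) ℝ} (hA : URP A)
    {b : Fin m → ℝ} {x : Fin n → ℝ} (hx : A.mulVec x = b) (hk : 2 * l0 x ≤ m) :
    ∃ q ∈ Ioo (0 : ℝ) 1, ∃ L > 0, ∀ p ≤ q, ∀ lam ∈ Ioc 0 L, ∀ z, A.mulVec z = b →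
      IsMinOn (Gp lam p) {w | A.mulVec w = b} z → z = x := by
  obtain ⟨a, B, ha, haB, hbd⟩ :=
    exists_pos_bounds_abs_of_finite (finite_setOf_isBasicSolution A b)
  obtain ⟨q, hq, L, hL, hlt⟩ := exists_forall_mul_gp_lt ha haB (l0 x).cast_nonneg
  refine ⟨q, hq, L, hL, fun p hpq lam hlam z hz hmin => ?_⟩
  have hl : 0 < lam := hlam.1
  have hp : p < 1 := hpq.trans_lt hq.2
  exact hA.eq_of_isMinOn_sum hmn (gp_zero hl hp) even_gp (strictMonoOn_gp hl hp).monotoneOn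
    (strictConcaveOn_gp hl hp) ha.le hbd hx hk (hlt p hpq lam hlam) hz hmin

/-- `G_p` exact recovery. -/
theorem stmt7 {m n : ℕ} (hmn : m < n) (A : Matrix (Fin m) (Fin n) ℝ) (hA : URP A)
    (b : Fin m → ℝ)
    (x : Fin n → ℝ) (hxf : A.mulVec x = b)
    (hxmin : ∀ w : Fin n → ℝ, A.mulVec w = b → l0 x ≤ l0 w)
    (hk : 2 * l0 x ≤ m) :
    (∃ p ∈ Set.Ioo (0 : ℝ) 1, ∃ lam : ℝ, 0 < lam ∧
      ∀ xstar : Fin n → ℝ, A.mulVec xstar = b →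
        (∀ w : Fin n → ℝ, A.mulVec w = b → Gp lam p xstar ≤ Gp lam p w) →
        xstar = x) ∧
    (∀ p : ℝ, p < 0 → ∃ lam : ℝ, 0 < lam ∧
      ∀ xstar : Fin n → ℝ, A.mulVec xstar = b →
        (∀ w : Fin n → ℝ, A.mulVec w = b → Gp lam p xstar ≤ Gp lam p w) →
        xstar = x) := by
  obtain ⟨q, hq, L, hL, h⟩ := stmt7_general hmn.le hA hxf hk
  exact ⟨⟨q, hq, L, hL, h q le_rfl L ⟨hL, le_rfl⟩⟩,
    fun p hp => ⟨L, hL, h p (hp.le.trans hq.1.le) L ⟨hL, le_rfl⟩⟩⟩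

end
end

section
/- Let λ > 0 and p < 1, let A ∈ ℝ^{m×n} have spectral norm ‖A‖ < 1, and let b ∈ ℝᵐ. Define the IPS sequence x^{k+1} = S_p(x^k − Aᵀ(A x^k − b)), where x⁰ is arbitrary if 0 ≤ p < 1, while if p < 0 assume in addition λ² > p·‖b‖₂²/(p − 2) and x⁰ = 0. Then the sequence {x^k} converges to a fixed point x̄ of the IPS iteration map, i.e., x̄ = S_p(x̄ − Aᵀ(A x̄ − b)) (equivalently, a first-order stationary point of F_p). -/
open MeasureTheory Filter
open scoped BigOperators

noncomputable section

/-!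
Follow the points `t = x - Aᵀ(A x - b)` to which shrinkage is applied. Shrinkage is the derivative
of a convex potential and `‖A‖ ≤ 1`, so each step decreases the energy `F_p (S_p t)` by at least
half the square of the length of the next step. The sublevel sets of the energy are bounded; for
`p < 0` this holds only below the level `λ² (p - 2) / (2 p)`, and the assumption on `b` puts the
start below it. Hence the points are bounded and the energies converge.

Along an ultrafilter, each coordinate stays on one smooth branch of shrinkage. There the energy
agrees with an analytic function whose gradient is bounded by the length of the step, and the
Łojasiewicz gradient inequality bounds a power of the energy gap by that length. Together with the
decrease of the energy this makes the trajectory have finite length, so it converges, and by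
continuity its limit is fixed.

The Łojasiewicz inequality is immediate for a monomial times a unit. It suffices to reach this case
along each ultrafilter separately: a Tschirnhausen transformation, followed by blow-ups of a
coordinate against the last variable, lowers the order in that variable, and the coefficients are
handled by induction on the dimension.
-/

open scoped Topology

section Division

variable {𝕜 E F : Type*} [NontriviallyNormedField 𝕜] [NormedAddCommGroup E] [NormedSpace 𝕜 E]
  [NormedAddCommGroup F] [NormedSpace 𝕜 F]

/-- The coefficients of the quotient `(h x - h (π x)) / c x`, where `h` has Taylor series `p` and
`π x = x - c x • e`: the `n`-th one is obtained from the telescoping expansion of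
`p (n + 1) (x, …, x) - p (n + 1) (π x, …, π x)` by extracting the factor `c x`. -/
def quotientSeries (p : FormalMultilinearSeries 𝕜 E F) (π : E →L[𝕜] E) (e : E) :
    FormalMultilinearSeries 𝕜 E F := fun n =>
  ∑ i : Fin (n + 1), ((p (n + 1)).curryMid i e).compContinuousLinearMap
    (fun j : Fin n => if j.castSucc < i then .id 𝕜 E else π)

lemma smul_quotientSeries_apply (p : FormalMultilinearSeries 𝕜 E F) {π : E →L[𝕜] E} {e x : E}
    {c : 𝕜} (hx : x - π x = c • e) (n : ℕ) :
    c • quotientSeries p π e n (fun _ => x) =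
      p (n + 1) (fun _ => x) - p (n + 1) (fun _ => π x) := by
  have htel := (p (n + 1)).toMultilinearMap.map_piecewise_sub_map_piecewise
    (fun _ => x) (fun _ => π x) 0 Finset.univ
  simp only [Finset.piecewise_univ, Finset.mem_univ, if_true,
    ContinuousMultilinearMap.coe_coe] at htel
  rw [htel, quotientSeries, _root_.sum_apply, Finset.smul_sum]
  refine Finset.sum_congr rfl fun i _ => ?_
  have hins : (fun j => if j < i then x else if j = i then x - π x else π x) =
      Function.update (i.insertNth e fun j : Fin n =>
        (if j.castSucc < i then ContinuousLinearMap.id 𝕜 E else π) x) i (c • e) := by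
    ext j
    refine Fin.succAboveCases i ?_ (fun j => ?_) j
    · simp [hx]
    · rw [Function.update_of_ne (Fin.succAbove_ne i j), Fin.insertNth_apply_succAbove]
      by_cases hj : j.castSucc < i
      · simp [hj, Fin.succAbove_of_castSucc_lt _ _ hj]
      · have hij : i < j.succ := (not_lt.1 hj).trans_lt j.castSucc_lt_succ
        simp [hj, Fin.succAbove_of_le_castSucc _ _ (not_lt.1 hj), hij.not_gt, hij.ne']
  rw [hins, ContinuousMultilinearMap.map_update_smul]
  simp [ContinuousMultilinearMap.curryMid_apply]

lemma norm_quotientSeries_le (p : FormalMultilinearSeries 𝕜 E F) (π : E →L[𝕜] E) (e : E)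
    (n : ℕ) : ‖quotientSeries p π e n‖ ≤ (n + 1) * (‖p (n + 1)‖ * ‖e‖ * (1 + ‖π‖) ^ n) := by
  have hterm : ∀ i ∈ (Finset.univ : Finset (Fin (n + 1))),
      ‖((p (n + 1)).curryMid i e).compContinuousLinearMap
        (fun j : Fin n => if j.castSucc < i then .id 𝕜 E else π)‖ ≤
        ‖p (n + 1)‖ * ‖e‖ * (1 + ‖π‖) ^ n := by
    intro i _
    refine (ContinuousMultilinearMap.norm_compContinuousLinearMap_le _ _).trans ?_
    have hcurry : ‖(p (n + 1)).curryMid i e‖ ≤ ‖p (n + 1)‖ * ‖e‖ := by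
      simpa using ((p (n + 1)).curryMid i).le_opNorm e
    have hprod : ∏ j : Fin n, ‖if j.castSucc < i then ContinuousLinearMap.id 𝕜 E else π‖ ≤
        (1 + ‖π‖) ^ n := by
      refine (Finset.prod_le_prod (g := fun _ => 1 + ‖π‖) (fun _ _ => norm_nonneg _)
        fun j _ => ?_).trans (by simp)
      split_ifs
      · exact ContinuousLinearMap.norm_id_le.trans (by simp)
      · simp
    gcongr
  refine (norm_sum_le _ _).trans ((Finset.sum_le_card_nsmul _ _ _ hterm).trans ?_)
  simp

lemma radius_quotientSeries_pos {p : FormalMultilinearSeries 𝕜 E F} (hp : 0 < p.radius)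
    (π : E →L[𝕜] E) (e : E) : 0 < (quotientSeries p π e).radius := by
  obtain ⟨s, hs0, hsr⟩ := ENNReal.lt_iff_exists_nnreal_btwn.1 hp
  have hs : (0 : ℝ) < s := by exact_mod_cast hs0
  obtain ⟨C, -, hpC⟩ := p.norm_mul_pow_le_of_lt_radius hsr
  set c : NNReal := 1 + ‖π‖₊
  have hc : (c : ℝ) = 1 + ‖π‖ := rfl
  have hρ : (0 : ENNReal) < ((s / (2 * c) : NNReal) : ENNReal) := by
    exact_mod_cast div_pos (by exact_mod_cast hs : 0 < s) (by positivity)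
  refine hρ.trans_le ((quotientSeries p π e).le_radius_of_bound (‖e‖ * C / s) fun n => ?_)
  have hn : (n + 1 : ℝ) ≤ 2 ^ n := by exact_mod_cast Nat.lt_two_pow_self (n := n)
  calc ‖quotientSeries p π e n‖ * ((s / (2 * c) : NNReal) : ℝ) ^ n
      ≤ ((n + 1) * (‖p (n + 1)‖ * ‖e‖ * (1 + ‖π‖) ^ n)) * (s / (2 * (1 + ‖π‖))) ^ n := by
        push_cast [hc]
        gcongr
        exact norm_quotientSeries_le p π e n
    _ = (n + 1) / 2 ^ n * (‖e‖ * (‖p (n + 1)‖ * s ^ (n + 1)) / s) := by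
        have : 1 + ‖π‖ ≠ 0 := by positivity
        rw [div_pow, mul_pow, pow_succ]
        field_simp
    _ ≤ 1 * (‖e‖ * C / s) := by
        gcongr
        · exact (div_le_one (by positivity)).2 hn
        · exact hpC (n + 1)
    _ = ‖e‖ * C / s := one_mul _

theorem exists_analyticAt_eq_add_smul [CompleteSpace F] {h : E → F} (hh : AnalyticAt 𝕜 h 0)
    (l : E →L[𝕜] 𝕜) (e : E) :
    ∃ q : E → F, AnalyticAt 𝕜 q 0 ∧ ∀ᶠ x in 𝓝 0, h x = h (x - l x • e) + l x • q x := by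
  obtain ⟨p, r, hp⟩ := hh
  set π : E →L[𝕜] E := .id 𝕜 E - l.smulRight e with hπ
  have hπx : ∀ x, π x = x - l x • e := fun x => by simp [hπ]
  have hq := (quotientSeries p π e).hasFPowerSeriesOnBall
    (radius_quotientSeries_pos (hp.r_pos.trans_le hp.r_le) π e)
  have hball : ∀ᶠ x : E in 𝓝 0, x ∈ Metric.eball (0 : E) r := Metric.eball_mem_nhds _ hp.r_pos
  refine ⟨(quotientSeries p π e).sum, hq.analyticAt, ?_⟩
  filter_upwards [hball, (π.continuous.tendsto' 0 0 (map_zero π)).eventually hball,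
    Metric.eball_mem_nhds _ hq.r_pos] with x hx hπr hxq
  have hdiff := (hp.hasSum hx).sub (hp.hasSum hπr)
  have hquot := (hq.hasSum hxq).const_smul (l x)
  simp only [zero_add] at hdiff hquot
  rw [← hasSum_nat_add_iff' 1] at hdiff
  have hconst : p 0 (fun _ => x) = p 0 (fun _ => π x) := congrArg _ (Subsingleton.elim _ _)
  simp only [← smul_quotientSeries_apply p (c := l x) (by simp [hπx] : x - π x = l x • e),
    Finset.range_one, Finset.sum_singleton, hconst, sub_self, sub_zero] at hdiff
  rw [← hdiff.unique hquot, hπx]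
  abel

end Division

section TaylorExpansion

variable {𝕜 : Type*} [NontriviallyNormedField 𝕜]

section Order

variable {F : Type*} [NormedAddCommGroup F] [NormedSpace 𝕜 F] [CharZero 𝕜] [CompleteSpace F]
  {f : 𝕜 → F} {z : 𝕜} {k : ℕ}

lemma analyticOrderAt_le_of_iteratedDeriv_ne_zero (hf : AnalyticAt 𝕜 f z)
    (h : iteratedDeriv k f z ≠ 0) : analyticOrderAt f z ≤ k := by
  by_contra! hlt
  have hsucc : ((k + 1 : ℕ) : ℕ∞) ≤ analyticOrderAt f z := by
    exact_mod_cast Order.add_one_le_of_lt hlt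
  exact h ((natCast_le_analyticOrderAt_iff_iteratedDeriv_eq_zero hf).1 hsucc k k.lt_succ_self)

end Order

lemma iteratedDeriv_pow_mul_zero {e : 𝕜 → 𝕜} {k : ℕ} (he : ContDiffAt 𝕜 k e 0) (m : ℕ) :
    iteratedDeriv k (fun t => t ^ m * e t) 0 = k.descFactorial m * iteratedDeriv (k - m) e 0 := by
  rw [iteratedDeriv_fun_mul (by fun_prop) he]
  simp only [iteratedDeriv_fun_pow_zero, Nat.cast_ite, Nat.cast_zero, mul_ite, mul_zero, ite_mul,
    zero_mul, Finset.sum_ite_eq', Finset.mem_range]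
  split_ifs with hm
  · rw [Nat.descFactorial_eq_factorial_mul_choose]
    push_cast
    ring
  · rw [Nat.descFactorial_of_lt (by omega), Nat.cast_zero, zero_mul]

variable {f e : 𝕜 → 𝕜} {a : ℕ → 𝕜} {d : ℕ}

lemma iteratedDeriv_zero_of_taylor [CompleteSpace 𝕜] (he : AnalyticAt 𝕜 e 0)
    (h : ∀ᶠ t in 𝓝 0, f t = ∑ j ∈ Finset.range d, a j * t ^ j + t ^ d * e t) (k : ℕ) :
    iteratedDeriv k f 0 = (if k < d then k.factorial * a k else 0) +
      k.descFactorial d * iteratedDeriv (k - d) e 0 := by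
  have hf : f =ᶠ[𝓝 0] fun t => (∑ j ∈ Finset.range d, t ^ j * a j) + t ^ d * e t := by
    filter_upwards [h] with t ht
    simp only [ht, mul_comm]
  have hcoeff (j : ℕ) :
      iteratedDeriv k (fun t => t ^ j * a j) 0 = if k = j then k.factorial * a k else 0 := by
    rw [iteratedDeriv_mul_const_field, iteratedDeriv_fun_pow_zero]
    split_ifs with hkj
    · rw [hkj]
    · rw [Nat.cast_zero, zero_mul]
  rw [hf.iteratedDeriv_eq, iteratedDeriv_fun_add (by fun_prop)
    (((contDiffAt_fun_id).pow d).mul he.contDiffAt), iteratedDeriv_fun_sum (by fun_prop),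
    iteratedDeriv_pow_mul_zero he.contDiffAt]
  simp only [hcoeff, Finset.sum_ite_eq, Finset.mem_range]

end TaylorExpansion

section LastVariable

variable {𝕜 E : Type*} [NontriviallyNormedField 𝕜] [NormedAddCommGroup E] [NormedSpace 𝕜 E]
  {g : E × 𝕜 → 𝕜}

theorem exists_taylor_snd [CompleteSpace 𝕜] (hg : AnalyticAt 𝕜 g 0) (d : ℕ) :
    ∃ (a : ℕ → E → 𝕜) (e : E × 𝕜 → 𝕜), (∀ j, AnalyticAt 𝕜 (a j) 0) ∧ AnalyticAt 𝕜 e 0 ∧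
      ∀ᶠ p in 𝓝 0, g p = ∑ j ∈ Finset.range d, a j p.1 * p.2 ^ j + p.2 ^ d * e p := by
  induction d with
  | zero => exact ⟨fun _ _ => 0, g, fun _ => analyticAt_const, hg, by simp⟩
  | succ d ih =>
    obtain ⟨a, e, ha, he, hge⟩ := ih
    obtain ⟨q, hq, heq⟩ := exists_analyticAt_eq_add_smul he (.snd 𝕜 E 𝕜) (0, 1)
    have he₀ : AnalyticAt 𝕜 (fun u => e (u, 0)) 0 :=
      AnalyticAt.comp_of_eq (f := fun u : E => (u, (0 : 𝕜))) he
        (analyticAt_id.prod analyticAt_const) rfl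
    refine ⟨Function.update a d fun u => e (u, 0), q, fun j => ?_, hq, ?_⟩
    · rcases eq_or_ne j d with rfl | hj
      · simpa using he₀
      · simpa [hj] using ha j
    · filter_upwards [hge, heq] with p hp hep
      have hproj : p - p.2 • ((0 : E), (1 : 𝕜)) = (p.1, 0) := by ext <;> simp
      simp only [ContinuousLinearMap.coe_snd', hproj, smul_eq_mul] at hep
      have hlow : ∑ j ∈ Finset.range d, Function.update a d (fun u => e (u, 0)) j p.1 * p.2 ^ j =
          ∑ j ∈ Finset.range d, a j p.1 * p.2 ^ j :=
        Finset.sum_congr rfl fun j hj => by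
          rw [Function.update_of_ne (Finset.mem_range.1 hj).ne]
      rw [hp, Finset.sum_range_succ, hlow, Function.update_self, hep]
      ring

lemma analyticAt_slice {u : E} {w : 𝕜} (hg : AnalyticAt 𝕜 g (u, w)) :
    AnalyticAt 𝕜 (fun t => g (u, t)) w :=
  AnalyticAt.comp_of_eq hg (analyticAt_const.prod analyticAt_id) rfl

lemma analyticAt_iteratedDeriv_snd [CompleteSpace 𝕜] {p : E × 𝕜} (hg : AnalyticAt 𝕜 g p)
    (k : ℕ) : AnalyticAt 𝕜 (fun q : E × 𝕜 => iteratedDeriv k (fun t => g (q.1, t)) q.2) p := by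
  induction k with
  | zero => simpa using hg
  | succ k ih =>
    refine (((ContinuousLinearMap.apply 𝕜 𝕜 ((0 : E), (1 : 𝕜))).analyticAt _).comp
      ih.fderiv).congr ?_
    filter_upwards [ih.eventually_analyticAt] with q hq
    have hslice : HasDerivAt (fun t => (q.1, t)) ((0 : E), (1 : 𝕜)) q.2 :=
      (hasDerivAt_const _ _).prodMk (hasDerivAt_id _)
    have hcomp := hq.differentiableAt.hasFDerivAt.comp_hasDerivAt_of_eq q.2 hslice rfl
    rw [iteratedDeriv_succ]
    exact hcomp.deriv.symm

end LastVariable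

section Tschirnhausen

variable {E : Type*} [NormedAddCommGroup E] [NormedSpace ℝ E] [CompleteSpace E] {g : E × ℝ → ℝ}
  {d : ℕ}

lemma exists_zero_iteratedDeriv_snd (hg : AnalyticAt ℝ g 0)
    (hd : analyticOrderAt (fun t => g (0, t)) 0 = (d + 1 : ℕ)) :
    ∃ ζ : E → ℝ, AnalyticAt ℝ ζ 0 ∧ ζ 0 = 0 ∧
      ∀ᶠ u in 𝓝 0, iteratedDeriv d (fun t => g (u, t)) (ζ u) = 0 := by
  set f := fun q : E × ℝ => iteratedDeriv d (fun t => g (q.1, t)) q.2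
  have hf : AnalyticAt ℝ f (0, 0) := analyticAt_iteratedDeriv_snd hg d
  have hslice : AnalyticAt ℝ (fun t => g (0, t)) 0 := analyticAt_slice hg
  have hf₀ : f (0, 0) = 0 :=
    ((analyticOrderAt_eq_nat_iff_iteratedDeriv_eq_zero hslice).1 hd).1 d d.lt_succ_self
  have hf' : fderiv ℝ f (0, 0) (0, 1) ≠ 0 := by
    have hline : HasDerivAt (fun t : ℝ => ((0 : E), t)) (0, 1) 0 :=
      (hasDerivAt_const _ _).prodMk (hasDerivAt_id _)
    rw [← (hf.differentiableAt.hasFDerivAt.comp_hasDerivAt_of_eq 0 hline rfl).deriv]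
    have := ((analyticOrderAt_eq_nat_iff_iteratedDeriv_eq_zero hslice).1 hd).2
    rwa [iteratedDeriv_succ] at this
  have hinv : (fderiv ℝ f (0, 0) ∘L .inr ℝ E ℝ).IsInvertible := by
    refine ⟨ContinuousLinearEquiv.unitsEquivAut ℝ (Units.mk0 _ hf'), ?_⟩
    ext
    simp
  have hc : ContDiffAt ℝ ⊤ f (0, 0) := hf.contDiffAt
  refine ⟨hc.implicitFunction (by simp) hinv,
    (hc.contDiffAt_implicitFunction (by simp) hinv).analyticAt,
    hc.implicitFunction_apply_self (by simp) hinv, ?_⟩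
  filter_upwards [hc.eventually_apply_implicitFunction (by simp) hinv] with u hu
  exact hu.trans hf₀

theorem exists_tschirnhausen (hg : AnalyticAt ℝ g 0)
    (hd : analyticOrderAt (fun t => g (0, t)) 0 = (d + 1 : ℕ)) :
    ∃ (ζ : E → ℝ) (a : ℕ → E → ℝ) (e : E × ℝ → ℝ), AnalyticAt ℝ ζ 0 ∧ ζ 0 = 0 ∧
      (∀ j, AnalyticAt ℝ (a j) 0) ∧ AnalyticAt ℝ e 0 ∧ e 0 ≠ 0 ∧
      ∀ᶠ q in 𝓝 0, g (q.1, q.2 + ζ q.1) =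
        ∑ j ∈ Finset.range d, a j q.1 * q.2 ^ j + q.2 ^ (d + 1) * e q := by
  obtain ⟨ζ, hζ, hζ₀, hζd⟩ := exists_zero_iteratedDeriv_snd hg hd
  have hshift : AnalyticAt ℝ (fun q : E × ℝ => g (q.1, q.2 + ζ q.1)) 0 :=
    AnalyticAt.comp_of_eq hg (analyticAt_fst.prod (analyticAt_snd.add
      (AnalyticAt.comp_of_eq hζ analyticAt_fst rfl))) (by simp [hζ₀])
  obtain ⟨a, e, ha, he, htaylor⟩ := exists_taylor_snd hshift (d + 1)
  have hderiv : ∀ᶠ u in 𝓝 (0 : E), ∀ k, iteratedDeriv k (fun t => g (u, t)) (ζ u) =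
      (if k < d + 1 then k.factorial * a k u else 0) +
        k.descFactorial (d + 1) * iteratedDeriv (k - (d + 1)) (fun t => e (u, t)) 0 := by
    have hsection : Tendsto (fun u : E => (u, (0 : ℝ))) (𝓝 0) (𝓝 0) :=
      Continuous.tendsto' (by fun_prop) _ _ rfl
    filter_upwards [hsection.eventually htaylor.eventually_nhds,
      hsection.eventually he.eventually_analyticAt] with u hu heu k
    have hline : Tendsto (fun t : ℝ => (u, t)) (𝓝 0) (𝓝 (u, 0)) :=
      Continuous.tendsto (by fun_prop) 0
    have := iteratedDeriv_zero_of_taylor (f := fun t => g (u, t + ζ u))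
      (a := fun j => a j u) (analyticAt_slice heu)
      (hline.eventually hu) k
    simpa only [iteratedDeriv_comp_add_const (f := fun t => g (u, t)), zero_add] using this
  refine ⟨ζ, a, e, hζ, hζ₀, ha, he, fun he₀ => ?_, ?_⟩
  · refine ((analyticOrderAt_eq_nat_iff_iteratedDeriv_eq_zero (analyticAt_slice hg)).1 hd).2 ?_
    have := hderiv.self_of_nhds (d + 1)
    simpa [hζ₀, Prod.mk_zero_zero, he₀] using this
  · have had : ∀ᶠ u in 𝓝 0, a d u = 0 := by
      filter_upwards [hderiv, hζd] with u hu hud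
      simpa [hud, Nat.descFactorial_of_lt, Nat.factorial_ne_zero] using (hu d).symm
    filter_upwards [htaylor, continuousAt_fst.eventually had] with q hq hqd
    rw [hq, Finset.sum_range_succ, hqd, zero_mul, add_zero]

end Tschirnhausen

section Domain

variable {E : Type*} [NormedAddCommGroup E] [NormedSpace ℝ E] {x : E}

theorem eventuallyEq_zero_or_eventuallyEq_zero_of_mul {g h : E → ℝ} (hg : AnalyticAt ℝ g x)
    (hh : AnalyticAt ℝ h x) (hgh : ∀ᶠ u in 𝓝 x, g u * h u = 0) :
    g =ᶠ[𝓝 x] 0 ∨ h =ᶠ[𝓝 x] 0 := by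
  obtain ⟨r, hr, hball⟩ := Metric.eventually_nhds_iff_ball.1
    (hgh.and (hg.eventually_analyticAt.and hh.eventually_analyticAt))
  have hmem := Metric.ball_mem_nhds x hr
  by_cases hzero : ∀ u ∈ Metric.ball x r, g u = 0
  · exact .inl (eventually_of_mem hmem hzero)
  push Not at hzero
  obtain ⟨u, hu, hgu⟩ := hzero
  have hloc : h =ᶠ[𝓝 u] 0 := by
    filter_upwards [(hball u hu).2.1.continuousAt.eventually_ne hgu,
      Metric.isOpen_ball.mem_nhds hu] with v hv hvball
    exact (mul_eq_zero.1 (hball v hvball).1).resolve_left hv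
  have hana : AnalyticOnNhd ℝ h (Metric.ball x r) := fun v hv => (hball v hv).2.2
  exact .inr (eventually_of_mem hmem (hana.eqOn_zero_of_preconnected_of_eventuallyEq_zero
    (convex_ball x r).isPreconnected hu hloc))

theorem eventuallyEq_of_mul_left_eq {l g h : E → ℝ} (hl : AnalyticAt ℝ l x)
    (hg : AnalyticAt ℝ g x) (hh : AnalyticAt ℝ h x) (hl₀ : ¬ l =ᶠ[𝓝 x] 0)
    (hgh : ∀ᶠ u in 𝓝 x, l u * g u = l u * h u) : g =ᶠ[𝓝 x] h := by
  have hsub : (fun u => g u - h u) =ᶠ[𝓝 x] 0 :=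
    (eventuallyEq_zero_or_eventuallyEq_zero_of_mul hl (hg.sub hh)
      (hgh.mono fun u hu => by rw [Pi.sub_apply, mul_sub, hu, sub_self])).resolve_left hl₀
  exact hsub.mono fun u hu => sub_eq_zero.1 hu

theorem prod_not_eventuallyEq_zero {κ : Type*} {s : Finset κ} {f : κ → E → ℝ}
    (hf : ∀ i ∈ s, AnalyticAt ℝ (f i) x) (hf₀ : ∀ i ∈ s, ¬ f i =ᶠ[𝓝 x] 0) :
    ¬ (fun u => ∏ i ∈ s, f i u) =ᶠ[𝓝 x] 0 := by
  classical
  induction s using Finset.induction_on with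
  | empty => exact fun h => one_ne_zero h.self_of_nhds
  | insert i s his ih =>
    simp only [Finset.forall_mem_insert] at hf hf₀
    simp only [Finset.prod_insert his]
    intro h
    rcases eventuallyEq_zero_or_eventuallyEq_zero_of_mul hf.1
      (Finset.analyticAt_fun_prod s hf.2) h with hi | hs
    exacts [hf₀.1 hi, ih hf.2 hf₀.2 hs]

end Domain

section Multiindex

variable {ι : Type*}

lemma multiindex_induction [Finite ι] [DecidableEq ι] {motive : (ι → ℕ) → Prop} (zero : motive 0)
    (add_single : ∀ α i, motive α → motive (α + Pi.single i 1)) (α : ι → ℕ) : motive α := by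
  induction α using WellFoundedLT.induction with
  | ind α ih =>
  by_cases hα : α = 0
  · exact hα ▸ zero
  obtain ⟨i, hi⟩ := Function.ne_iff.1 hα
  have hle : Pi.single i 1 ≤ α :=
    update_le_iff.2 ⟨Nat.one_le_iff_ne_zero.2 hi, fun _ _ => Nat.zero_le _⟩
  rw [← tsub_add_cancel_of_le hle]
  refine add_single _ i (ih _ (lt_of_le_of_ne tsub_le_self fun h => ?_))
  have := congrFun h i
  simp only [Pi.sub_apply, Pi.single_eq_same, Pi.zero_apply] at this hi
  omega

variable [Fintype ι]

lemma prod_pow_add {R : Type*} [CommMonoid R] (u : ι → R) (α β : ι → ℕ) :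
    ∏ j, u j ^ (α + β) j = (∏ j, u j ^ α j) * ∏ j, u j ^ β j := by
  simp only [Pi.add_apply, pow_add, Finset.prod_mul_distrib]

lemma prod_pow_single [DecidableEq ι] {R : Type*} [CommMonoid R] (u : ι → R) (i : ι) (m : ℕ) :
    ∏ j, u j ^ (Pi.single i m : ι → ℕ) j = u i ^ m := by
  simp [Pi.single_apply]

lemma eq_of_forall_dotProduct_eq_of_lt {α β δ : ι → ℕ} {k : ι} (hk : β k < α k)
    (h : ∀ m : ι → ℕ, (∀ j, 0 < m j) → m ⬝ᵥ β < m ⬝ᵥ α → m ⬝ᵥ δ = m ⬝ᵥ β) : δ = β := by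
  classical
  -- The strict inequality `m ⬝ᵥ β < m ⬝ᵥ α` survives adding any unit vector to this weight `m`.
  set m : ι → ℕ := 1 + Pi.single k (2 * ∑ j, β j + 1)
  have hlt (l : ι → ℕ) (hl : l ⬝ᵥ β ≤ ∑ j, β j) : (m + l) ⬝ᵥ β < (m + l) ⬝ᵥ α := by
    have hmul := Nat.mul_le_mul_left (2 * ∑ j, β j + 1) (Nat.succ_le_of_lt hk)
    simp only [m, add_dotProduct, one_dotProduct, single_dotProduct]
    nlinarith [Finset.sum_nonneg fun j (_ : j ∈ Finset.univ) => (α j).zero_le]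
  have hpos (l : ι → ℕ) (j : ι) : 0 < (m + l) j := by
    simp only [m, Pi.add_apply, Pi.one_apply]; omega
  ext i
  have h₀ := h (m + 0) (hpos 0) (hlt 0 (by simp))
  have h₁ := h (m + Pi.single i 1) (hpos _) (hlt _ (by
    simpa using Finset.single_le_sum (f := β) (fun _ _ => Nat.zero_le _) (Finset.mem_univ i)))
  simp only [add_dotProduct, single_dotProduct, zero_dotProduct, one_mul] at h₀ h₁
  omega

end Multiindex

section Monomial

variable {ι : Type*}

lemma coord_not_eventuallyEq_zero (i : ι) : ¬ (fun u : ι → ℝ => u i) =ᶠ[𝓝 0] 0 := fun h => by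
  have hdiag : Tendsto (fun t : ℝ => (fun _ : ι => t)) (𝓝 0) (𝓝 0) :=
    Continuous.tendsto' (by fun_prop) _ _ rfl
  have hzero : (fun t : ℝ => t) =ᶠ[𝓝 0] fun _ => 0 := hdiag.eventually h
  simpa using hzero.deriv_eq

variable [Fintype ι] {f g h : (ι → ℝ) → ℝ}

/-- Germs at the origin which are a monomial times a unit: the local model of a function with
normal crossings. -/
def IsMono (f : (ι → ℝ) → ℝ) : Prop :=
  ∃ (α : ι → ℕ) (e : (ι → ℝ) → ℝ), AnalyticAt ℝ e 0 ∧ e 0 ≠ 0 ∧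
    f =ᶠ[𝓝 0] fun u => (∏ j, u j ^ α j) * e u

lemma analyticAt_coord (i : ι) (x : ι → ℝ) : AnalyticAt ℝ (fun u : ι → ℝ => u i) x :=
  (ContinuousLinearMap.proj (R := ℝ) (φ := fun _ : ι => ℝ) i).analyticAt x

lemma analyticAt_monomial (α : ι → ℕ) (x : ι → ℝ) :
    AnalyticAt ℝ (fun u : ι → ℝ => ∏ j, u j ^ α j) x :=
  Finset.analyticAt_fun_prod _ fun j _ => (analyticAt_coord j x).pow _

namespace IsMono

lemma congr (hf : IsMono f) (h : f =ᶠ[𝓝 0] g) : IsMono g := by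
  obtain ⟨α, e, he, he₀, hfe⟩ := hf
  exact ⟨α, e, he, he₀, h.symm.trans hfe⟩

lemma mul (hf : IsMono f) (hg : IsMono g) : IsMono fun u => f u * g u := by
  obtain ⟨α, e, he, he₀, hfe⟩ := hf
  obtain ⟨β, e', he', he₀', hge⟩ := hg
  refine ⟨α + β, fun u => e u * e' u, he.mul he', mul_ne_zero he₀ he₀', ?_⟩
  filter_upwards [hfe, hge] with u hfu hgu
  rw [hfu, hgu, prod_pow_add]
  ring

lemma of_unit (hf : AnalyticAt ℝ f 0) (hf₀ : f 0 ≠ 0) : IsMono f :=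
  ⟨0, f, hf, hf₀, by simp⟩

lemma monomial (α : ι → ℕ) : IsMono fun u : ι → ℝ => ∏ j, u j ^ α j :=
  ⟨α, fun _ => 1, analyticAt_const, one_ne_zero, by simp⟩

lemma coord (i : ι) : IsMono fun u : ι → ℝ => u i := by
  classical
  simpa only [prod_pow_single, pow_one] using monomial (Pi.single i 1 : ι → ℕ)

end IsMono

lemma exists_eventuallyEq_coord_mul [DecidableEq ι] {i : ι} (hf : AnalyticAt ℝ f 0)
    (hf₀ : ∀ᶠ u in 𝓝 0, f (Function.update u i 0) = 0) :
    ∃ q, AnalyticAt ℝ q 0 ∧ f =ᶠ[𝓝 0] fun u => u i * q u := by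
  obtain ⟨q, hq, hfq⟩ := exists_analyticAt_eq_add_smul hf
    (ContinuousLinearMap.proj (R := ℝ) (φ := fun _ : ι => ℝ) i) (Pi.single i 1)
  refine ⟨q, hq, ?_⟩
  filter_upwards [hfq, hf₀] with u hu hu₀
  have hproj : u - u i • (Pi.single i 1 : ι → ℝ) = Function.update u i 0 := by
    ext j
    rcases eq_or_ne j i with rfl | hj <;> simp [*]
  rw [hu, ContinuousLinearMap.proj_apply, hproj, hu₀, zero_add, smul_eq_mul]

lemma coord_dvd_or_dvd_of_coord_dvd_mul {i : ι} (hg : AnalyticAt ℝ g 0) (hh : AnalyticAt ℝ h 0)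
    {k : (ι → ℝ) → ℝ} (hgh : ∀ᶠ u in 𝓝 0, g u * h u = u i * k u) :
    (∃ q, AnalyticAt ℝ q 0 ∧ g =ᶠ[𝓝 0] fun u => u i * q u) ∨
      ∃ q, AnalyticAt ℝ q 0 ∧ h =ᶠ[𝓝 0] fun u => u i * q u := by
  classical
  have hupd : AnalyticAt ℝ (fun u : ι → ℝ => Function.update u i 0) 0 := by
    refine analyticAt_pi_iff.2 fun j => ?_
    rcases eq_or_ne j i with rfl | hj
    · simpa using analyticAt_const
    · simpa [hj] using analyticAt_coord j 0
  have hupd₀ : Function.update (0 : ι → ℝ) i 0 = 0 := Function.update_eq_self i (0 : ι → ℝ)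
  have htendsto : Tendsto (fun u : ι → ℝ => Function.update u i 0) (𝓝 0) (𝓝 0) :=
    Tendsto.mono_right hupd.continuousAt (congrArg 𝓝 hupd₀).le
  have hzero : ∀ᶠ u in 𝓝 (0 : ι → ℝ),
      g (Function.update u i 0) * h (Function.update u i 0) = 0 := by
    filter_upwards [htendsto.eventually hgh] with u hu
    rw [hu, Function.update_self, zero_mul]
  exact (eventuallyEq_zero_or_eventuallyEq_zero_of_mul (hg.comp_of_eq hupd hupd₀)
    (hh.comp_of_eq hupd hupd₀) hzero).imp (exists_eventuallyEq_coord_mul hg)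
      (exists_eventuallyEq_coord_mul hh)

namespace IsMono

lemma of_mul_eventuallyEq (α : ι → ℕ) {e : (ι → ℝ) → ℝ} (he : AnalyticAt ℝ e 0) (he₀ : e 0 ≠ 0)
    (hg : AnalyticAt ℝ g 0) (hh : AnalyticAt ℝ h 0)
    (hgh : ∀ᶠ u in 𝓝 0, g u * h u = (∏ j, u j ^ α j) * e u) : IsMono g := by
  classical
  induction α using multiindex_induction generalizing g h with
  | zero =>
    refine of_unit hg fun hg₀ => he₀ ?_
    simpa [hg₀] using hgh.self_of_nhds.symm
  | add_single α i ih =>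
    have hcoord : ∀ᶠ u in 𝓝 0, g u * h u = u i * ((∏ j, u j ^ α j) * e u) := by
      filter_upwards [hgh] with u hu
      rw [hu, prod_pow_add, prod_pow_single]
      ring
    have hcancel {q r : (ι → ℝ) → ℝ} (hq : AnalyticAt ℝ q 0) (hr : AnalyticAt ℝ r 0)
        (hqr : ∀ᶠ u in 𝓝 0, g u * h u = u i * (q u * r u)) :
        ∀ᶠ u in 𝓝 0, q u * r u = (∏ j, u j ^ α j) * e u :=
      eventuallyEq_of_mul_left_eq (analyticAt_coord i 0) (hq.mul hr)
        ((analyticAt_monomial α 0).mul he) (coord_not_eventuallyEq_zero i)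
        (by filter_upwards [hqr, hcoord] with u hu hu' using hu.symm.trans hu')
    rcases coord_dvd_or_dvd_of_coord_dvd_mul hg hh hcoord with ⟨q, hq, hgq⟩ | ⟨q, hq, hhq⟩
    · refine ((coord i).mul (ih hq hh (hcancel hq hh ?_))).congr hgq.symm
      filter_upwards [hgq] with u hu
      rw [hu, mul_assoc]
    · refine ih hg hq (hcancel hg hq ?_)
      filter_upwards [hhq] with u hu
      rw [hu, mul_left_comm]

theorem of_mul (hg : AnalyticAt ℝ g 0) (hh : AnalyticAt ℝ h 0)
    (hgh : IsMono fun u => g u * h u) : IsMono g := by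
  obtain ⟨α, e, he, he₀, hmono⟩ := hgh
  exact of_mul_eventuallyEq α he he₀ hg hh hmono

theorem of_prod {κ : Type*} {s : Finset κ} {f : κ → (ι → ℝ) → ℝ}
    (hf : ∀ i ∈ s, AnalyticAt ℝ (f i) 0) (h : IsMono fun u => ∏ i ∈ s, f i u) {i : κ}
    (hi : i ∈ s) : IsMono (f i) := by
  classical
  refine of_mul (h := fun u => ∏ j ∈ s.erase i, f j u) (hf i hi)
    (Finset.analyticAt_fun_prod _ fun j hj => hf j (Finset.mem_of_mem_erase hj)) ?_
  exact h.congr (.of_forall fun u => (Finset.mul_prod_erase s (fun j => f j u) hi).symm)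

end IsMono

lemma analyticOrderAt_comp_monomialCurve {m α : ι → ℕ} (hm : ∀ j, 0 < m j) {e : (ι → ℝ) → ℝ}
    (he : AnalyticAt ℝ e 0) (he₀ : e 0 ≠ 0) (hf : f =ᶠ[𝓝 0] fun u => (∏ j, u j ^ α j) * e u) :
    analyticOrderAt (fun t : ℝ => f fun j => t ^ m j) 0 = (m ⬝ᵥ α : ℕ) := by
  have hcurve : AnalyticAt ℝ (fun (t : ℝ) j => t ^ m j) 0 :=
    analyticAt_pi_iff.2 fun j => analyticAt_id.pow (m j)
  have hcurve₀ : (fun j => (0 : ℝ) ^ m j) = 0 := funext fun j => zero_pow (hm j).ne'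
  have htendsto : Tendsto (fun (t : ℝ) j => t ^ m j) (𝓝 0) (𝓝 0) :=
    Tendsto.mono_right hcurve.continuousAt (congrArg 𝓝 hcurve₀).le
  have hfe : ∀ᶠ t in 𝓝 (0 : ℝ), (f fun j => t ^ m j) = t ^ (m ⬝ᵥ α) * e fun j => t ^ m j := by
    filter_upwards [htendsto.eventually hf] with t ht
    simp only [ht, ← pow_mul, Finset.prod_pow_eq_pow_sum, dotProduct]
  have hec : AnalyticAt ℝ (fun t : ℝ => e fun j => t ^ m j) 0 := he.comp_of_eq hcurve hcurve₀
  rw [analyticOrderAt_congr hfe]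
  refine ((analyticAt_id.pow _).mul hec).analyticOrderAt_eq_natCast.2
    ⟨_, hec, by rwa [hcurve₀], .of_forall fun t => ?_⟩
  simp only [Pi.mul_apply, Pi.pow_apply, id, sub_zero, smul_eq_mul]

section Divisibility

variable {α β : ι → ℕ} {e₁ e₂ : (ι → ℝ) → ℝ}

/-- Compare the orders of both monomials and of their difference along the curves
`t ↦ (t ^ m j)ⱼ`: the exponent of the difference would have to be both `α` and `β`. -/
theorem exponent_le_or_le_of_isMono_sub (he₁ : AnalyticAt ℝ e₁ 0) (he₂ : AnalyticAt ℝ e₂ 0)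
    (he₁₀ : e₁ 0 ≠ 0) (he₂₀ : e₂ 0 ≠ 0)
    (h : IsMono fun u => (∏ j, u j ^ α j) * e₁ u - (∏ j, u j ^ β j) * e₂ u) :
    α ≤ β ∨ β ≤ α := by
  obtain ⟨δ, e, he, he₀, hsub⟩ := h
  have hmin (m : ι → ℕ) (hm : ∀ j, 0 < m j) (hne : m ⬝ᵥ α ≠ m ⬝ᵥ β) :
      m ⬝ᵥ δ = min (m ⬝ᵥ α) (m ⬝ᵥ β) := by
    have h₁ := analyticOrderAt_comp_monomialCurve (α := α) hm he₁ he₁₀ .rfl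
    have h₂ := analyticOrderAt_comp_monomialCurve (α := β) hm he₂ he₂₀ .rfl
    have h₃ := analyticOrderAt_comp_monomialCurve hm he he₀ hsub
    rw [← analyticOrderAt_neg] at h₂
    have hord := analyticOrderAt_add_of_ne (h₁.trans_ne (by rw [h₂]; exact_mod_cast hne))
    rw [h₁, h₂, ← sub_eq_add_neg] at hord
    rw [← (Nat.mono_cast (α := ℕ∞)).map_min] at hord
    exact_mod_cast h₃.symm.trans hord
  by_contra! hcon
  obtain ⟨k, hk⟩ : ∃ k, β k < α k := by simpa [Pi.le_def] using hcon.1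
  obtain ⟨l, hl⟩ : ∃ l, α l < β l := by simpa [Pi.le_def] using hcon.2
  have hδβ : δ = β := eq_of_forall_dotProduct_eq_of_lt hk fun m hm hlt =>
    (hmin m hm hlt.ne').trans (min_eq_right hlt.le)
  have hδα : δ = α := eq_of_forall_dotProduct_eq_of_lt hl fun m hm hlt =>
    (hmin m hm hlt.ne).trans (min_eq_left hlt.le)
  exact hk.ne (congrFun (hδβ.symm.trans hδα) k)

theorem exponent_le_or_le (he₁ : AnalyticAt ℝ e₁ 0) (he₂ : AnalyticAt ℝ e₂ 0)
    (he₁₀ : e₁ 0 ≠ 0) (he₂₀ : e₂ 0 ≠ 0)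
    (h : (fun u => (∏ j, u j ^ α j) * e₁ u - (∏ j, u j ^ β j) * e₂ u) =ᶠ[𝓝 0] 0 ∨
      IsMono fun u => (∏ j, u j ^ α j) * e₁ u - (∏ j, u j ^ β j) * e₂ u) :
    α ≤ β ∨ β ≤ α := by
  rcases h with hzero | hmono
  · have hhalf : (2 : ℝ)⁻¹ ≠ 0 := by norm_num
    refine exponent_le_or_le_of_isMono_sub he₁ (analyticAt_const.mul he₂) he₁₀
      (mul_ne_zero hhalf he₂₀)
      ⟨α, _, analyticAt_const.mul he₁, mul_ne_zero hhalf he₁₀, ?_⟩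
    filter_upwards [hzero] with u hu
    simp only [Pi.zero_apply, Pi.mul_apply] at hu ⊢
    linear_combination (1 / 2 : ℝ) * hu
  · exact exponent_le_or_le_of_isMono_sub he₁ he₂ he₁₀ he₂₀ hmono

end Divisibility

end Monomial

namespace IsMono

variable {ι : Type*} [Fintype ι] {f : (ι → ℝ) → ℝ}

lemma pow (hf : IsMono f) (k : ℕ) : IsMono fun u => f u ^ k := by
  induction k with
  | zero => simpa only [pow_zero] using of_unit analyticAt_const one_ne_zero
  | succ k ih => simpa only [pow_succ] using ih.mul hf

lemma prod {κ : Type*} {s : Finset κ} {f : κ → (ι → ℝ) → ℝ} (hf : ∀ i ∈ s, IsMono (f i)) :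
    IsMono fun u => ∏ i ∈ s, f i u := by
  classical
  induction s using Finset.induction_on with
  | empty => simpa only [Finset.prod_empty] using of_unit analyticAt_const one_ne_zero
  | insert i s his ih =>
    simp only [Finset.forall_mem_insert] at hf
    simpa only [Finset.prod_insert his] using hf.1.mul (ih hf.2)

lemma comp {κ : Type*} [Fintype κ] {φ : (κ → ℝ) → ι → ℝ} (hf : IsMono f)
    (hφ : AnalyticAt ℝ φ 0) (hφ₀ : φ 0 = 0) (hcoord : ∀ i, IsMono fun u => φ u i) :
    IsMono (f ∘ φ) := by
  obtain ⟨α, e, he, he₀, hfe⟩ := hf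
  have htendsto : Tendsto φ (𝓝 0) (𝓝 0) :=
    Tendsto.mono_right hφ.continuousAt (congrArg 𝓝 hφ₀).le
  exact ((prod fun i _ => (hcoord i).pow (α i)).mul
    (of_unit (he.comp_of_eq hφ hφ₀) (by rwa [Function.comp_apply, hφ₀]))).congr
      (hfe.comp_tendsto htendsto).symm

end IsMono

section Chart

variable {X Y Z : Type*} [NormedAddCommGroup X] [NormedSpace ℝ X] [NormedAddCommGroup Y]
  [NormedSpace ℝ Y] [NormedAddCommGroup Z] [NormedSpace ℝ Z] {𝒰 : Filter X}

/-- An analytic map germ `φ` at the origin through which the filter `𝒰` on its target lifts to a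
filter that still converges to the origin. The lift is `map s 𝒰`, for the (in general
discontinuous) section `s` of `φ`. -/
structure IsChart (𝒰 : Filter X) (φ : Y → X) (s : X → Y) : Prop where
  analyticAt : AnalyticAt ℝ φ 0
  map_zero : φ 0 = 0
  tendsto : Tendsto s 𝒰 (𝓝 0)
  eventually_eq : ∀ᶠ x in 𝒰, φ (s x) = x

/-- Pulled back along some chart with source `ℝᵈ`, the germ `f` has normal crossings. -/
def Resolves (𝒰 : Filter X) (d : ℕ) (f : X → ℝ) : Prop :=
  ∃ (φ : (Fin d → ℝ) → X) (s : X → Fin d → ℝ), IsChart 𝒰 φ s ∧ IsMono (f ∘ φ)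

namespace IsChart

variable {φ : Y → X} {s : X → Y}

lemma tendsto_nhds_zero (h : IsChart 𝒰 φ s) : Tendsto φ (𝓝 0) (𝓝 0) :=
  Tendsto.mono_right h.analyticAt.continuousAt (congrArg 𝓝 h.map_zero).le

lemma analyticAt_comp (h : IsChart 𝒰 φ s) {f : X → ℝ} (hf : AnalyticAt ℝ f 0) :
    AnalyticAt ℝ (f ∘ φ) 0 :=
  hf.comp_of_eq h.analyticAt h.map_zero

lemma comp {ψ : Z → Y} {r : Y → Z} (h : IsChart 𝒰 φ s) (h' : IsChart (map s 𝒰) ψ r) :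
    IsChart 𝒰 (φ ∘ ψ) (r ∘ s) where
  analyticAt := h.analyticAt.comp_of_eq h'.analyticAt h'.map_zero
  map_zero := by rw [Function.comp_apply, h'.map_zero, h.map_zero]
  tendsto := h'.tendsto.comp tendsto_map
  eventually_eq := by
    filter_upwards [h.eventually_eq, eventually_map.1 h'.eventually_eq] with x hφ hψ
    rw [Function.comp_apply, Function.comp_apply, hψ, hφ]

lemma of_equiv (B : Y ≃L[ℝ] X) (h𝒰 : 𝒰 ≤ 𝓝 0) : IsChart 𝒰 B B.symm where
  analyticAt := B.toContinuousLinearMap.analyticAt 0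
  map_zero := _root_.map_zero B
  tendsto := (B.symm.continuous.tendsto' 0 0 (_root_.map_zero B.symm)).mono_left h𝒰
  eventually_eq := .of_forall B.apply_symm_apply

lemma prodMap_id {𝒰 : Filter (X × Z)} (h : IsChart (map Prod.fst 𝒰) φ s) (h𝒰 : 𝒰 ≤ 𝓝 0) :
    IsChart 𝒰 (Prod.map φ (id : Z → Z)) (Prod.map s id) where
  analyticAt := (AnalyticAt.comp_of_eq h.analyticAt analyticAt_fst rfl).prod analyticAt_snd
  map_zero := Prod.ext h.map_zero rfl
  tendsto := (h.tendsto.comp tendsto_map).prodMk_nhds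
    ((continuous_snd.tendsto' (0 : X × Z) 0 rfl).mono_left h𝒰)
  eventually_eq := (eventually_map.1 h.eventually_eq).mono fun _ hp => Prod.ext hp rfl

end IsChart

lemma Resolves.of_isChart {φ : Y → X} {s : X → Y} {d : ℕ} {f : X → ℝ} {g : Y → ℝ}
    (h : IsChart 𝒰 φ s) (hg : Resolves (map s 𝒰) d g) (hfg : f ∘ φ =ᶠ[𝓝 0] g) :
    Resolves 𝒰 d f := by
  obtain ⟨ψ, r, h', hmono⟩ := hg
  exact ⟨φ ∘ ψ, r ∘ s, h.comp h', hmono.congr (h'.tendsto_nhds_zero.eventually hfg.symm)⟩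

end Chart

section Content

variable {n : ℕ}

theorem resolves_prod_monomial {𝒰 : Filter ((Fin n → ℝ) × ℝ)} (h𝒰 : 𝒰 ≤ 𝓝 0)
    (γ : Fin n → ℕ) (k : ℕ) {e : (Fin n → ℝ) × ℝ → ℝ} (he : AnalyticAt ℝ e 0) (he₀ : e 0 ≠ 0) :
    Resolves 𝒰 (n + 1) fun q => (∏ j, q.1 j ^ γ j) * (q.2 ^ k * e q) := by
  set B : (Fin (n + 1) → ℝ) ≃L[ℝ] (Fin n → ℝ) × ℝ :=
    (Fin.consEquivL ℝ fun _ : Fin (n + 1) => ℝ).symm.trans (ContinuousLinearEquiv.prodComm ℝ ℝ _)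
  have hB : IsChart 𝒰 B B.symm := .of_equiv B h𝒰
  refine ⟨B, B.symm, hB, Fin.cons k γ, e ∘ B, hB.analyticAt_comp he, ?_, .of_forall fun u => ?_⟩
  · rwa [Function.comp_apply, hB.map_zero]
  · simp only [Function.comp_apply, Fin.prod_univ_succ, Fin.cons_zero, Fin.cons_succ]
    rw [mul_assoc, mul_left_comm]
    rfl

/-- Every nonzero analytic germ in `n` variables acquires normal crossings along every ultrafilter
converging to the origin. -/
def LocalUniformization (n : ℕ) : Prop :=
  ∀ 𝒰 : Ultrafilter (Fin n → ℝ), ↑𝒰 ≤ 𝓝 (0 : Fin n → ℝ) → ∀ f : (Fin n → ℝ) → ℝ,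
    AnalyticAt ℝ f 0 → ¬ f =ᶠ[𝓝 0] 0 → Resolves 𝒰 n f

theorem exists_root_chart {ι : Type*} [Fintype ι] (𝒰 : Ultrafilter (ι → ℝ))
    (h𝒰 : ↑𝒰 ≤ 𝓝 (0 : ι → ℝ)) {N : ℕ} (hN : N ≠ 0) :
    ∃ (ε : ι → ℝ) (s : (ι → ℝ) → ι → ℝ), (∀ i, ε i ≠ 0) ∧
      IsChart 𝒰 (fun u i => ε i * u i ^ N) s := by
  have hsign (i : ι) : ∃ ε : ℝ, ε ≠ 0 ∧ ∀ᶠ x in (𝒰 : Filter (ι → ℝ)), ε * |x i| = x i := by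
    rcases Ultrafilter.eventually_or.1 (.of_forall (f := (𝒰 : Filter (ι → ℝ)))
      fun x => le_total 0 (x i)) with h | h
    · exact ⟨1, one_ne_zero, h.mono fun x hx => by rw [abs_of_nonneg hx, one_mul]⟩
    · exact ⟨-1, by norm_num, h.mono fun x hx => by rw [abs_of_nonpos hx, neg_one_mul, neg_neg]⟩
  choose ε hε₀ hε using hsign
  refine ⟨ε, fun x i => |x i| ^ (N : ℝ)⁻¹, hε₀, ?_, ?_, ?_, ?_⟩
  · exact AnalyticAt.pi fun i => analyticAt_const.mul ((analyticAt_coord i 0).pow N)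
  · ext i
    simp [hN]
  · have hcont : Continuous fun (x : ι → ℝ) i => |x i| ^ (N : ℝ)⁻¹ :=
      continuous_pi fun i => (continuous_apply i).abs.rpow_const fun _ => .inr (by positivity)
    exact (hcont.tendsto' 0 0 (by ext i; simp [hN])).mono_left h𝒰
  · filter_upwards [eventually_all.2 hε] with x hx
    ext i
    rw [Real.rpow_inv_natCast_pow (abs_nonneg _) hN, hx i]

namespace LocalUniformization

variable {κ : Type*} [Finite κ] {a : κ → (Fin n → ℝ) → ℝ} {𝒰 : Ultrafilter (Fin n → ℝ)}

theorem exists_forall_isMono (h : LocalUniformization n) (h𝒰 : ↑𝒰 ≤ 𝓝 (0 : Fin n → ℝ))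
    (ha : ∀ j, AnalyticAt ℝ (a j) 0) :
    ∃ (φ : (Fin n → ℝ) → Fin n → ℝ) (s : (Fin n → ℝ) → Fin n → ℝ), IsChart 𝒰 φ s ∧
      ∀ j, ¬ a j =ᶠ[𝓝 0] 0 → IsMono (a j ∘ φ) := by
  classical
  cases nonempty_fintype κ
  set J := Finset.univ.filter fun j => ¬ a j =ᶠ[𝓝 0] 0
  obtain ⟨φ, s, hφ, hmono⟩ := h 𝒰 h𝒰 (fun u => ∏ j ∈ J, a j u)
    (Finset.analyticAt_fun_prod J fun j _ => ha j)
    (prod_not_eventuallyEq_zero (fun j _ => ha j) fun j hj => (Finset.mem_filter.1 hj).2)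
  exact ⟨φ, s, hφ, fun j hj => IsMono.of_prod (f := fun j => a j ∘ φ) (s := J)
    (fun j _ => hφ.analyticAt_comp (ha j)) hmono (Finset.mem_filter.2 ⟨Finset.mem_univ j, hj⟩)⟩

theorem exists_comparable_exponents (h : LocalUniformization n)
    (h𝒰 : ↑𝒰 ≤ 𝓝 (0 : Fin n → ℝ)) (ha : ∀ j, AnalyticAt ℝ (a j) 0)
    (ha₀ : ∀ j, ¬ a j =ᶠ[𝓝 0] 0) (r : κ → ℕ) :
    ∃ (φ : (Fin n → ℝ) → Fin n → ℝ) (s : (Fin n → ℝ) → Fin n → ℝ) (α : κ → Fin n → ℕ)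
      (e : κ → (Fin n → ℝ) → ℝ), IsChart 𝒰 φ s ∧ (∀ i, IsMono fun u => φ u i) ∧
      (∀ j, AnalyticAt ℝ (e j) 0) ∧ (∀ j, e j 0 ≠ 0) ∧
      (∀ j, a j ∘ φ =ᶠ[𝓝 0] fun u => (∏ i, u i ^ α j i) * e j u) ∧
      ∀ j k, r j • α j ≤ r k • α k ∨ r k • α k ≤ r j • α j := by
  set f : Fin n ⊕ κ ⊕ κ × κ → (Fin n → ℝ) → ℝ := Sum.elim (fun i u => u i)
    (Sum.elim a fun q u => a q.1 u ^ r q.1 - a q.2 u ^ r q.2)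
  have hf : ∀ i, AnalyticAt ℝ (f i) 0 := by
    rintro (i | j | q)
    exacts [analyticAt_coord i 0, ha j, ((ha q.1).pow _).sub ((ha q.2).pow _)]
  obtain ⟨φ, s, hφ, hmono⟩ := h.exists_forall_isMono h𝒰 hf
  have haφ (j : κ) : IsMono (a j ∘ φ) := hmono (.inr (.inl j)) (ha₀ j)
  choose α e he he₀ hae using haφ
  refine ⟨φ, s, α, e, hφ, fun i => hmono (.inl i) (coord_not_eventuallyEq_zero i), he, he₀, hae,
    fun j k => ?_⟩
  have hpow : (fun u => a j (φ u) ^ r j - a k (φ u) ^ r k) =ᶠ[𝓝 0] fun u =>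
      (∏ i, u i ^ (r j • α j) i) * e j u ^ r j - (∏ i, u i ^ (r k • α k) i) * e k u ^ r k := by
    filter_upwards [hae j, hae k] with u hj hk
    simp only [Function.comp_apply] at hj hk
    simp only [hj, hk, mul_pow, ← Finset.prod_pow, ← pow_mul', Pi.smul_apply, smul_eq_mul]
  refine exponent_le_or_le ((he j).fun_pow (r j)) ((he k).fun_pow (r k))
    (pow_ne_zero _ (he₀ j)) (pow_ne_zero _ (he₀ k)) ?_
  by_cases hzero : f (.inr (.inr (j, k))) =ᶠ[𝓝 0] 0
  · exact .inl (hpow.symm.trans (hφ.tendsto_nhds_zero.eventually hzero))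
  · exact .inr ((hmono _ hzero).congr hpow)

/-- Taking roots of the coordinates makes the common content of the germs `a j ^ r j`, where
`w j * r j` does not depend on `j`, a perfect power. -/
theorem exists_content_of_ne_zero [Nonempty κ] (h : LocalUniformization n)
    (h𝒰 : ↑𝒰 ≤ 𝓝 (0 : Fin n → ℝ)) (ha : ∀ j, AnalyticAt ℝ (a j) 0)
    (ha₀ : ∀ j, ¬ a j =ᶠ[𝓝 0] 0) {w : κ → ℕ} (hw : ∀ j, w j ≠ 0) :
    ∃ (φ : (Fin n → ℝ) → Fin n → ℝ) (s : (Fin n → ℝ) → Fin n → ℝ) (δ : Fin n → ℕ)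
      (b : κ → (Fin n → ℝ) → ℝ), IsChart 𝒰 φ s ∧ (∀ i, IsMono fun u => φ u i) ∧
      (∀ j, AnalyticAt ℝ (b j) 0) ∧ (∃ j, b j 0 ≠ 0) ∧
      ∀ j, a j ∘ φ =ᶠ[𝓝 0] fun u => (∏ i, u i ^ δ i) ^ w j * b j u := by
  classical
  cases nonempty_fintype κ
  set N := ∏ j, w j
  set r : κ → ℕ := fun j => ∏ k ∈ Finset.univ.erase j, w k
  have hwr (j : κ) : w j * r j = N := Finset.mul_prod_erase _ _ (Finset.mem_univ j)
  obtain ⟨φ, s, α, e, hφ, hcoord, he, he₀, hae, hcomp⟩ :=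
    h.exists_comparable_exponents h𝒰 ha ha₀ r
  have hdir : Directed (· ≥ ·) fun j => r j • α j := fun j k =>
    (hcomp j k).elim (fun h => ⟨j, le_rfl, h⟩) fun h => ⟨k, h, le_rfl⟩
  obtain ⟨j₀, hj₀ : ∀ j, r j₀ • α j₀ ≤ r j • α j⟩ := hdir.finite_le id
  obtain ⟨ε, t, hε, hψ⟩ := exists_root_chart (𝒰.map s) hφ.tendsto
    (Finset.prod_ne_zero_iff.2 fun j _ => hw j : N ≠ 0)
  set ψ : (Fin n → ℝ) → Fin n → ℝ := fun u i => ε i * u i ^ N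
  have hψcoord (i : Fin n) : IsMono fun u => ψ u i :=
    (IsMono.of_unit analyticAt_const (hε i)).mul ((IsMono.coord i).pow N)
  refine ⟨φ ∘ ψ, t ∘ s, r j₀ • α j₀, fun j u => (∏ i, ε i ^ α j i) *
    (∏ i, u i ^ (r j • α j - r j₀ • α j₀) i) ^ w j * e j (ψ u), hφ.comp hψ,
    fun i => (hcoord i).comp hψ.analyticAt hψ.map_zero hψcoord, fun j => ?_, ⟨j₀, ?_⟩, fun j => ?_⟩
  · exact (analyticAt_const.mul ((analyticAt_monomial _ 0).pow _)).mul (hψ.analyticAt_comp (he j))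
  · simpa [hψ.map_zero, Finset.prod_eq_zero_iff, hε] using he₀ j₀
  · filter_upwards [hψ.tendsto_nhds_zero.eventually (hae j)] with u hu
    have hmono : ∏ i, ψ u i ^ α j i = (∏ i, ε i ^ α j i) * (∏ i, u i ^ (r j • α j) i) ^ w j := by
      simp only [ψ, mul_pow, Finset.prod_mul_distrib, ← Finset.prod_pow, ← pow_mul, ← hwr j,
        Pi.smul_apply, smul_eq_mul, mul_right_comm, mul_comm (w j)]
    rw [Function.comp_apply] at hu
    rw [Function.comp_apply, Function.comp_apply, hu, hmono,
      ← add_tsub_cancel_of_le (hj₀ j), prod_pow_add,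
      add_tsub_cancel_left]
    ring

theorem exists_content (h : LocalUniformization n) (h𝒰 : ↑𝒰 ≤ 𝓝 (0 : Fin n → ℝ))
    (ha : ∀ j, AnalyticAt ℝ (a j) 0) (ha₀ : ∃ j, ¬ a j =ᶠ[𝓝 0] 0) {w : κ → ℕ}
    (hw : ∀ j, w j ≠ 0) :
    ∃ (φ : (Fin n → ℝ) → Fin n → ℝ) (s : (Fin n → ℝ) → Fin n → ℝ) (δ : Fin n → ℕ)
      (b : κ → (Fin n → ℝ) → ℝ), IsChart 𝒰 φ s ∧ (∀ i, IsMono fun u => φ u i) ∧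
      (∀ j, AnalyticAt ℝ (b j) 0) ∧ (∃ j, b j 0 ≠ 0) ∧
      ∀ j, a j ∘ φ =ᶠ[𝓝 0] fun u => (∏ i, u i ^ δ i) ^ w j * b j u := by
  classical
  obtain ⟨j₁, hj₁⟩ := ha₀
  let J := {j // ¬ a j =ᶠ[𝓝 0] 0}
  have : Nonempty J := ⟨⟨j₁, hj₁⟩⟩
  obtain ⟨φ, s, δ, b, hφ, hcoord, hb, ⟨j₀, hj₀⟩, hab⟩ :=
    h.exists_content_of_ne_zero h𝒰 (a := fun j : J => a j) (fun j => ha j) (fun j => j.2)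
      (w := fun j : J => w j) fun j => hw j
  refine ⟨φ, s, δ, fun j => if hj : a j =ᶠ[𝓝 0] 0 then 0 else b ⟨j, hj⟩, hφ, hcoord,
    fun j => ?_, ⟨j₀, ?_⟩, fun j => ?_⟩
  · beta_reduce
    split_ifs
    exacts [analyticAt_const, hb _]
  · beta_reduce
    rwa [dif_neg j₀.2]
  · beta_reduce
    split_ifs with hj
    · filter_upwards [hφ.tendsto_nhds_zero.eventually hj] with u hu
      simpa using hu
    · exact hab ⟨j, hj⟩

end LocalUniformization

end Content

section DepressedForm

variable {d : ℕ}

/-- The homogeneous form `∑ j < d, b j m ^ (d + 1 - j) t ^ j + e t ^ (d + 1)` of degree `d + 1` in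
`(m, t)`, with vanishing subleading coefficient: the shape to which the Tschirnhausen
transformation and the extraction of contents reduce an analytic germ. -/
def depressedForm (m : ℝ) (b : Fin d → ℝ) (t e : ℝ) : ℝ :=
  ∑ j : Fin d, m ^ (d + 1 - (j : ℕ)) * b j * t ^ (j : ℕ) + t ^ (d + 1) * e

lemma depressedForm_mul (x m : ℝ) (b : Fin d → ℝ) (t e : ℝ) :
    depressedForm (x * m) b (x * t) e = x ^ (d + 1) * depressedForm m b t e := by
  have hsum (j : Fin d) : (x * m) ^ (d + 1 - (j : ℕ)) * b j * (x * t) ^ (j : ℕ) =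
      x ^ (d + 1) * (m ^ (d + 1 - (j : ℕ)) * b j * t ^ (j : ℕ)) := by
    rw [← Nat.sub_add_cancel (show (j : ℕ) ≤ d + 1 by omega), pow_add x, Nat.add_sub_cancel,
      mul_pow, mul_pow]
    ring
  rw [depressedForm, Finset.sum_congr rfl fun j _ => hsum j, ← Finset.mul_sum, mul_pow, mul_assoc,
    ← mul_add, depressedForm]

lemma mul_depressedForm (x m : ℝ) (b : Fin d → ℝ) (t e : ℝ) :
    x * depressedForm m b t e = depressedForm m (fun j => x * b j) t (x * e) := by
  simp only [depressedForm, mul_add, Finset.mul_sum]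
  congr 1
  · exact Finset.sum_congr rfl fun j _ => by ring
  · ring

lemma depressedForm_zero_left (b : Fin d → ℝ) (t e : ℝ) :
    depressedForm 0 b t e = t ^ (d + 1) * e := by
  have hsum (j : Fin d) : (0 : ℝ) ^ (d + 1 - (j : ℕ)) = 0 := zero_pow (by omega)
  simp only [depressedForm, hsum, zero_mul, Finset.sum_const_zero, zero_add]

lemma analyticAt_depressedForm {E : Type*} [NormedAddCommGroup E] [NormedSpace ℝ E] {x : E}
    {m t e : E → ℝ} {b : Fin d → E → ℝ} (hm : AnalyticAt ℝ m x) (hb : ∀ j, AnalyticAt ℝ (b j) x)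
    (ht : AnalyticAt ℝ t x) (he : AnalyticAt ℝ e x) :
    AnalyticAt ℝ (fun q => depressedForm (m q) (fun j => b j q) (t q) (e q)) x :=
  (Finset.analyticAt_fun_sum _ fun j _ => ((hm.pow _).mul (hb j)).mul (ht.pow _)).add
    ((ht.pow _).mul he)

lemma iteratedDeriv_depressedForm_const_add (m : ℝ) (b : Fin d → ℝ) (y e : ℝ) :
    iteratedDeriv d (fun t => depressedForm m b (y + t) e) 0 = (d + 1).factorial * y * e := by
  have hshift := congrFun (iteratedDeriv_comp_const_add d (fun t => depressedForm m b t e) y) 0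
  have hlow (j : Fin d) :
      iteratedDeriv d (fun t : ℝ => m ^ (d + 1 - (j : ℕ)) * b j * t ^ (j : ℕ)) y = 0 := by
    rw [iteratedDeriv_const_mul_field, iteratedDeriv_eq_iterate, iter_deriv_pow',
      Finset.prod_eq_zero (Finset.mem_range.2 j.2) (sub_self _)]
    simp only [zero_mul, mul_zero]
  have htop : iteratedDeriv d (fun t : ℝ => t ^ (d + 1) * e) y = (d + 1).factorial * y * e := by
    have hfact : (d + 1).descFactorial d = (d + 1).factorial := by
      rw [← Nat.descFactorial_self, Nat.descFactorial_succ (d + 1) d, Nat.add_sub_cancel_left,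
        one_mul]
    simp [iteratedDeriv_mul_const_field, hfact]
  rw [hshift, add_zero]
  simp only [depressedForm]
  rw [iteratedDeriv_fun_add (by fun_prop) (by fun_prop),
    iteratedDeriv_fun_sum fun j _ => by fun_prop, Finset.sum_eq_zero fun j _ => hlow j, zero_add,
    htop]

lemma iteratedDeriv_depressedForm_one {e : ℝ → ℝ} (he : AnalyticAt ℝ e 0) (b : Fin d → ℝ)
    (j : Fin d) :
    iteratedDeriv j (fun t => depressedForm 1 b t (e t)) 0 = (j : ℕ).factorial * b j := by
  rw [iteratedDeriv_zero_of_taylor (d := d) (a := fun k => if h : k < d then b ⟨k, h⟩ else 0)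
    (e := fun t => t * e t) (analyticAt_id.mul he) (.of_forall fun t => ?_) j]
  · simp [Nat.descFactorial_of_lt j.2]
  · simp only [depressedForm, Finset.sum_range, one_pow, one_mul, Fin.is_lt, dif_pos, Fin.eta,
      pow_succ, mul_assoc]

end DepressedForm

section BlowUp

lemma exists_tendsto_of_abs_le {X : Type*} {𝒰 : Ultrafilter X} {a w : X → ℝ}
    (h : ∀ᶠ x in 𝒰, |w x| ≤ |a x|) :
    ∃ (s : X → ℝ) (y : ℝ), Tendsto s 𝒰 (𝓝 y) ∧ ∀ᶠ x in 𝒰, a x * s x = w x := by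
  have hbound : ∀ᶠ x in (𝒰 : Filter X), w x / a x ∈ Set.Icc (-1 : ℝ) 1 := by
    filter_upwards [h] with x hx
    rw [Set.mem_Icc, ← abs_le, abs_div]
    exact div_le_one_of_le₀ hx (abs_nonneg _)
  obtain ⟨y, -, hy⟩ := isCompact_Icc.ultrafilter_le_nhds (𝒰.map fun x => w x / a x)
    (le_principal_iff.2 hbound)
  refine ⟨fun x => w x / a x, y, hy, h.mono fun x hx => mul_div_cancel_of_imp' fun ha => ?_⟩
  simpa [ha] using hx

theorem exists_tendsto_quotient {X : Type*} (𝒰 : Ultrafilter X) (a w : X → ℝ) :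
    (∃ (s : X → ℝ) (y : ℝ), Tendsto s 𝒰 (𝓝 y) ∧ ∀ᶠ x in 𝒰, a x * s x = w x) ∨
      ∃ s : X → ℝ, Tendsto s 𝒰 (𝓝 0) ∧ ∀ᶠ x in 𝒰, w x * s x = a x := by
  rcases Ultrafilter.eventually_or.1
    (.of_forall (f := (𝒰 : Filter X)) fun x => le_total |w x| |a x|) with h | h
  · exact .inl (exists_tendsto_of_abs_le h)
  obtain ⟨s, y, hs, hmul⟩ := exists_tendsto_of_abs_le h
  rcases eq_or_ne y 0 with rfl | hy
  · exact .inr ⟨s, hs, hmul⟩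
  refine .inl ⟨s⁻¹, y⁻¹, hs.inv₀ hy, ?_⟩
  filter_upwards [hmul, hs.eventually_ne hy] with x hx hsx
  rw [← hx, Pi.inv_apply, mul_inv_cancel_right₀ hsx]

variable {ι : Type*} [Fintype ι] {𝒰 : Filter ((ι → ℝ) × ℝ)} {s : (ι → ℝ) × ℝ → ℝ} {i : ι}

lemma isChart_mul_const_add (h𝒰 : 𝒰 ≤ 𝓝 0) {y : ℝ} (hs : Tendsto s 𝒰 (𝓝 y))
    (h : ∀ᶠ q in 𝒰, q.1 i * s q = q.2) :
    IsChart 𝒰 (fun q => (q.1, q.1 i * (y + q.2))) fun q => (q.1, s q - y) where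
  analyticAt := analyticAt_fst.prod (((analyticAt_coord i 0).comp_of_eq analyticAt_fst rfl).mul
    (analyticAt_const.add analyticAt_snd))
  map_zero := by simp
  tendsto := ((continuous_fst.tendsto' 0 0 rfl).mono_left h𝒰).prodMk_nhds
    (sub_self y ▸ hs.sub_const y)
  eventually_eq := h.mono fun q hq => by rw [add_sub_cancel, hq]

lemma isChart_update_mul [DecidableEq ι] (h𝒰 : 𝒰 ≤ 𝓝 0) (hs : Tendsto s 𝒰 (𝓝 0))
    (h : ∀ᶠ q in 𝒰, q.2 * s q = q.1 i) :
    IsChart 𝒰 (fun q => (Function.update q.1 i (q.2 * q.1 i), q.2))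
      fun q => (Function.update q.1 i (s q), q.2) where
  analyticAt := by
    have hcoord (j : ι) : AnalyticAt ℝ (fun q : (ι → ℝ) × ℝ => q.1 j) 0 :=
      (analyticAt_coord j 0).comp_of_eq analyticAt_fst rfl
    refine .prod (.pi fun j => ?_) analyticAt_snd
    rcases eq_or_ne j i with rfl | hj
    · simpa only [Function.update_self] using analyticAt_snd.fun_mul (hcoord j)
    · simpa only [Function.update_of_ne hj] using hcoord j
  map_zero := by simp
  tendsto := by
    have hfst : Tendsto Prod.fst 𝒰 (𝓝 0) := (continuous_fst.tendsto' 0 0 rfl).mono_left h𝒰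
    have hupd : Tendsto (fun q => Function.update q.1 i (s q)) 𝒰
        (𝓝 (0 : ι → ℝ)) := by
      have hzero : Function.update (0 : ι → ℝ) i 0 = 0 := Function.update_eq_self i (0 : ι → ℝ)
      simpa only [hzero] using hfst.update i hs
    exact hupd.prodMk_nhds ((continuous_snd.tendsto' 0 0 rfl).mono_left h𝒰)
  eventually_eq := h.mono fun q hq => by
    simp only [Function.update_self, Function.update_idem, hq, Function.update_eq_self]

lemma prod_update_mul_pow [DecidableEq ι] {R : Type*} [CommMonoid R] (α : ι → ℕ) (u : ι → R)
    (i : ι) (c : R) :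
    ∏ j, Function.update u i (c * u i) j ^ α j = c ^ α i * ∏ j, u j ^ α j := by
  rw [← Finset.mul_prod_erase _ _ (Finset.mem_univ i),
    ← Finset.mul_prod_erase Finset.univ (fun j => u j ^ α j) (Finset.mem_univ i),
    Function.update_self, mul_pow, mul_assoc]
  congr 2
  exact Finset.prod_congr rfl fun j hj => by
    rw [Function.update_of_ne (Finset.ne_of_mem_erase hj)]

end BlowUp

section Resolution

variable {n d : ℕ}

/-- Along every ultrafilter converging to the origin, each germ of order at most `d` in the last
variable, times any monomial in the other variables, acquires normal crossings. -/
def ResolvesOrder (n d : ℕ) : Prop :=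
  ∀ 𝒰 : Ultrafilter ((Fin n → ℝ) × ℝ), ↑𝒰 ≤ 𝓝 (0 : (Fin n → ℝ) × ℝ) →
    ∀ (γ : Fin n → ℕ) (g : (Fin n → ℝ) × ℝ → ℝ), AnalyticAt ℝ g 0 →
      analyticOrderAt (fun t => g (0, t)) 0 ≤ d →
        Resolves 𝒰 (n + 1) fun q => (∏ j, q.1 j ^ γ j) * g q

variable {b : Fin d → (Fin n → ℝ) → ℝ} {e : (Fin n → ℝ) × ℝ → ℝ}

namespace ResolvesOrder

variable {𝒰 : Ultrafilter ((Fin n → ℝ) × ℝ)}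

theorem depressedForm_one (hd : ResolvesOrder n d) (h𝒰 : ↑𝒰 ≤ 𝓝 (0 : (Fin n → ℝ) × ℝ))
    (γ : Fin n → ℕ) (hb : ∀ j, AnalyticAt ℝ (b j) 0) (he : AnalyticAt ℝ e 0)
    (hb₀ : ∃ j, b j 0 ≠ 0) :
    Resolves 𝒰 (n + 1) fun q =>
      (∏ i, q.1 i ^ γ i) * depressedForm 1 (fun j => b j q.1) q.2 (e q) := by
  obtain ⟨j, hj⟩ := hb₀
  have hg : AnalyticAt ℝ (fun q : (Fin n → ℝ) × ℝ =>
      depressedForm 1 (fun j => b j q.1) q.2 (e q)) 0 :=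
    analyticAt_depressedForm analyticAt_const
      (fun j => (hb j).comp_of_eq analyticAt_fst rfl) analyticAt_snd he
  refine hd 𝒰 h𝒰 γ _ hg ((analyticOrderAt_le_of_iteratedDeriv_ne_zero (k := j)
    (analyticAt_slice hg) ?_).trans (by exact_mod_cast j.2.le))
  rw [iteratedDeriv_depressedForm_one (b := fun j => b j 0) (analyticAt_slice he)]
  exact mul_ne_zero (Nat.cast_ne_zero.2 (Nat.factorial_ne_zero _)) hj

theorem depressedForm_const_add (hd : ResolvesOrder n d)
    (h𝒰 : ↑𝒰 ≤ 𝓝 (0 : (Fin n → ℝ) × ℝ)) (γ δ : Fin n → ℕ) (hb : ∀ j, AnalyticAt ℝ (b j) 0)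
    (he : AnalyticAt ℝ e 0) (he₀ : ∀ t, e (0, t) = e 0) (he₁ : e 0 ≠ 0) {y : ℝ} (hy : y ≠ 0) :
    Resolves 𝒰 (n + 1) fun q => (∏ i, q.1 i ^ γ i) *
      depressedForm (∏ i, q.1 i ^ δ i) (fun j => b j q.1) (y + q.2) (e q) := by
  have hg : AnalyticAt ℝ (fun q : (Fin n → ℝ) × ℝ =>
      depressedForm (∏ i, q.1 i ^ δ i) (fun j => b j q.1) (y + q.2) (e q)) 0 :=
    analyticAt_depressedForm ((analyticAt_monomial δ 0).comp_of_eq analyticAt_fst rfl)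
      (fun j => (hb j).comp_of_eq analyticAt_fst rfl) (analyticAt_const.add analyticAt_snd) he
  refine hd 𝒰 h𝒰 γ _ hg (analyticOrderAt_le_of_iteratedDeriv_ne_zero (analyticAt_slice hg) ?_)
  simp only [he₀]
  rw [iteratedDeriv_depressedForm_const_add]
  exact mul_ne_zero (mul_ne_zero (Nat.cast_ne_zero.2 (Nat.factorial_ne_zero _)) hy) he₁

end ResolvesOrder

theorem resolves_depressedForm_of_tendsto_zero {𝒰 : Filter ((Fin n → ℝ) × ℝ)} (h𝒰 : 𝒰 ≤ 𝓝 0)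
    (γ δ : Fin n → ℕ) (hb : ∀ j, AnalyticAt ℝ (b j) 0) (he : AnalyticAt ℝ e 0) (he₀ : e 0 ≠ 0)
    {i : Fin n} {s : (Fin n → ℝ) × ℝ → ℝ} (hs : Tendsto s 𝒰 (𝓝 0))
    (h : ∀ᶠ q in 𝒰, q.2 * s q = q.1 i) :
    Resolves 𝒰 (n + 1) fun q => (∏ j, q.1 j ^ γ j) *
      depressedForm ((∏ j, q.1 j ^ δ j) * q.1 i) (fun j => b j q.1) q.2 (e q) := by
  have hψ := isChart_update_mul h𝒰 hs h
  set ψ : (Fin n → ℝ) × ℝ → (Fin n → ℝ) × ℝ :=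
    fun q => (Function.update q.1 i (q.2 * q.1 i), q.2)
  set m : (Fin n → ℝ) × ℝ → ℝ := fun q => q.2 ^ δ i * (∏ j, q.1 j ^ δ j) * q.1 i
  have hm₀ : m 0 = 0 := by simp [m]
  have hm : AnalyticAt ℝ m 0 :=
    ((analyticAt_snd.pow _).mul ((analyticAt_monomial δ 0).comp_of_eq analyticAt_fst rfl)).mul
      ((analyticAt_coord i 0).comp_of_eq analyticAt_fst rfl)
  refine Resolves.of_isChart hψ (resolves_prod_monomial hψ.tendsto γ (γ i + (d + 1))
    (e := fun q => depressedForm (m q) (fun j => b j (ψ q).1) 1 (e (ψ q)))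
    (analyticAt_depressedForm hm (fun j => hψ.analyticAt_comp (f := fun q => b j q.1)
      ((hb j).comp_of_eq analyticAt_fst rfl)) analyticAt_const (hψ.analyticAt_comp he)) ?_)
    (.of_forall fun q => ?_)
  · rwa [hm₀, depressedForm_zero_left, one_pow, one_mul, hψ.map_zero]
  · have hmul : (∏ j, (ψ q).1 j ^ δ j) * (ψ q).1 i = q.2 * m q := by
      simp only [ψ, m, prod_update_mul_pow, Function.update_self]
      ring
    have hform := depressedForm_mul q.2 (m q) (fun j => b j (ψ q).1) 1 (e (ψ q))
    rw [mul_one, ← hmul] at hform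
    change (∏ j, (ψ q).1 j ^ γ j) * depressedForm _ _ q.2 (e (ψ q)) = _
    rw [hform]
    simp only [ψ, prod_update_mul_pow]
    ring

/-- Blow up a coordinate of the content against the last variable: the homogeneity of
`depressedForm` splits off a monomial and the content drops, until some coefficient is a unit. -/
theorem ResolvesOrder.depressedForm (hd : ResolvesOrder n d)
    {𝒰 : Ultrafilter ((Fin n → ℝ) × ℝ)} (h𝒰 : ↑𝒰 ≤ 𝓝 (0 : (Fin n → ℝ) × ℝ)) (γ δ : Fin n → ℕ)
    (hb : ∀ j, AnalyticAt ℝ (b j) 0) (hb₀ : ∃ j, b j 0 ≠ 0) (he : AnalyticAt ℝ e 0)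
    (he₀ : e 0 ≠ 0) :
    Resolves 𝒰 (n + 1) fun q => (∏ i, q.1 i ^ γ i) *
      depressedForm (∏ i, q.1 i ^ δ i) (fun j => b j q.1) q.2 (e q) := by
  induction δ using multiindex_induction generalizing 𝒰 γ e with
  | zero =>
    simpa only [Pi.zero_apply, pow_zero, Finset.prod_const_one] using
      hd.depressedForm_one h𝒰 γ hb he hb₀
  | add_single δ i ih =>
    simp only [prod_pow_add (β := Pi.single i 1), prod_pow_single, pow_one]
    rcases exists_tendsto_quotient 𝒰 (fun q => q.1 i) (fun q => q.2) with
      ⟨s, y, hs, hmul⟩ | ⟨s, hs, hmul⟩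
    · have hψ := isChart_mul_const_add h𝒰 hs hmul
      set ψ : (Fin n → ℝ) × ℝ → (Fin n → ℝ) × ℝ := fun q => (q.1, q.1 i * (y + q.2))
      set γ' : Fin n → ℕ := γ + Pi.single i (d + 1)
      have he' : AnalyticAt ℝ (e ∘ ψ) 0 := hψ.analyticAt_comp he
      have he₀' : (e ∘ ψ) 0 ≠ 0 := by rwa [Function.comp_apply, hψ.map_zero]
      have h𝒱 : ↑(𝒰.map fun q => (q.1, s q - y)) ≤ 𝓝 (0 : (Fin n → ℝ) × ℝ) := hψ.tendsto
      have hg : Resolves (𝒰.map fun q => (q.1, s q - y)) (n + 1) fun q => (∏ j, q.1 j ^ γ' j) *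
          _root_.depressedForm (∏ j, q.1 j ^ δ j) (fun j => b j q.1) (y + q.2) (e (ψ q)) := by
        rcases eq_or_ne y 0 with rfl | hy
        · simp only [zero_add]
          exact ih h𝒱 γ' he' he₀'
        · exact hd.depressedForm_const_add h𝒱 γ' δ hb he' (by simp [ψ]) he₀' hy
      refine Resolves.of_isChart hψ hg (.of_forall fun q => ?_)
      simp only [Function.comp_apply, ψ, γ', prod_pow_add, prod_pow_single]
      rw [mul_comm _ (q.1 i), depressedForm_mul, mul_assoc]
    · exact resolves_depressedForm_of_tendsto_zero h𝒰 γ δ hb he he₀ hs hmul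

end Resolution

section LocalUniformization

variable {n d : ℕ}

lemma isChart_shear {E : Type*} [NormedAddCommGroup E] [NormedSpace ℝ E] {𝒰 : Filter (E × ℝ)}
    (h𝒰 : 𝒰 ≤ 𝓝 0) {ζ : E → ℝ} (hζ : AnalyticAt ℝ ζ 0) (hζ₀ : ζ 0 = 0) :
    IsChart 𝒰 (fun q => (q.1, q.2 + ζ q.1)) fun q => (q.1, q.2 - ζ q.1) where
  analyticAt := analyticAt_fst.prod (analyticAt_snd.add (hζ.comp_of_eq analyticAt_fst rfl))
  map_zero := by simp [hζ₀]
  tendsto := by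
    have hcont : ContinuousAt (fun q : E × ℝ => (q.1, q.2 - ζ q.1)) 0 :=
      continuousAt_fst.prodMk (continuousAt_snd.sub
        (ContinuousAt.comp_of_eq hζ.continuousAt continuousAt_fst rfl))
    simpa [ContinuousAt, hζ₀, Prod.mk_zero_zero] using hcont.tendsto.mono_left h𝒰
  eventually_eq := .of_forall fun q => by simp

theorem LocalUniformization.resolves_sum_add_pow (h : LocalUniformization n)
    (hd : ResolvesOrder n d) {𝒰 : Ultrafilter ((Fin n → ℝ) × ℝ)}
    (h𝒰 : ↑𝒰 ≤ 𝓝 (0 : (Fin n → ℝ) × ℝ)) (γ : Fin n → ℕ) {a : Fin d → (Fin n → ℝ) → ℝ}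
    {e : (Fin n → ℝ) × ℝ → ℝ} (ha : ∀ j, AnalyticAt ℝ (a j) 0) (he : AnalyticAt ℝ e 0)
    (he₀ : e 0 ≠ 0) :
    Resolves 𝒰 (n + 1) fun q => (∏ i, q.1 i ^ γ i) *
      (∑ j : Fin d, a j q.1 * q.2 ^ (j : ℕ) + q.2 ^ (d + 1) * e q) := by
  have hfst : Tendsto Prod.fst (𝓝 (0 : (Fin n → ℝ) × ℝ)) (𝓝 0) :=
    continuous_fst.tendsto' _ _ rfl
  by_cases ha₀ : ∀ j, a j =ᶠ[𝓝 0] 0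
  · obtain ⟨φ, s, hφ, hmono⟩ := resolves_prod_monomial h𝒰 γ (d + 1) he he₀
    refine ⟨φ, s, hφ, hmono.congr (EventuallyEq.comp_tendsto ?_ hφ.tendsto_nhds_zero)⟩
    filter_upwards [hfst.eventually (eventually_all.2 ha₀)] with q hq
    simp [hq]
  obtain ⟨φ, s, δ, b, hφ, hcoord, hb, ⟨j₀, hj₀⟩, hab⟩ :=
    h.exists_content (𝒰 := 𝒰.map Prod.fst) (hfst.mono_left h𝒰) ha (not_forall.1 ha₀)
      (w := fun j => d + 1 - (j : ℕ)) fun j => by omega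
  obtain ⟨γ', v, hv, hv₀, hγ⟩ := IsMono.prod (s := Finset.univ) fun i _ => (hcoord i).pow (γ i)
  have hψ := hφ.prodMap_id h𝒰
  set ψ : (Fin n → ℝ) × ℝ → (Fin n → ℝ) × ℝ := Prod.map φ id
  have hform := hd.depressedForm (𝒰 := 𝒰.map _) hψ.tendsto γ' δ
    (b := fun j u => v u * b j u) (e := fun q => v q.1 * e (ψ q)) (fun j => hv.mul (hb j))
    ⟨j₀, mul_ne_zero hv₀ hj₀⟩ ((hv.comp_of_eq analyticAt_fst rfl).mul (hψ.analyticAt_comp he))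
    (mul_ne_zero hv₀ (by rwa [hψ.map_zero]))
  refine Resolves.of_isChart hψ hform ?_
  filter_upwards [hfst.eventually hγ, hfst.eventually (eventually_all.2 hab)] with q hγq hq
  simp only [Function.comp_apply] at hγq hq
  simp only [Function.comp_apply, ψ, Prod.map_fst, Prod.map_snd, id, hγq, hq,
    ← mul_depressedForm]
  simp only [depressedForm, mul_assoc]

theorem LocalUniformization.resolvesOrder (h : LocalUniformization n) (d : ℕ) :
    ResolvesOrder n d := by
  induction d with
  | zero =>
    intro 𝒰 h𝒰 γ g hg hord
    have hg₀ : g 0 ≠ 0 :=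
      (analyticAt_slice hg).analyticOrderAt_eq_zero.1 (le_antisymm hord zero_le)
    simpa only [pow_zero, one_mul] using resolves_prod_monomial h𝒰 γ 0 hg hg₀
  | succ d ih =>
    intro 𝒰 h𝒰 γ g hg hord
    rcases hord.lt_or_eq with hlt | heq
    · exact ih 𝒰 h𝒰 γ g hg (ENat.lt_natCast_add_one_iff.1 hlt)
    obtain ⟨ζ, a, e, hζ, hζ₀, ha, he, he₀, hge⟩ := exists_tschirnhausen hg heq
    have hψ := isChart_shear h𝒰 hζ hζ₀
    refine Resolves.of_isChart hψ (h.resolves_sum_add_pow ih (𝒰 := 𝒰.map _) hψ.tendsto γ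
      (a := fun j => a j) (fun j => ha j) he he₀) (hge.mono fun q hq => ?_)
    simp only [Function.comp_apply, hq, Finset.sum_range]

theorem exists_line_not_eventuallyEq_zero {E : Type*} [NormedAddCommGroup E] [NormedSpace ℝ E]
    {f : E → ℝ} (hf : AnalyticAt ℝ f 0) (h : ¬ f =ᶠ[𝓝 0] 0) :
    ∃ v : E, ¬ (fun t : ℝ => f (t • v)) =ᶠ[𝓝 0] 0 := by
  obtain ⟨r, hr, hball⟩ := Metric.eventually_nhds_iff_ball.1 hf.eventually_analyticAt
  by_contra! hline
  refine h ?_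
  filter_upwards [Metric.ball_mem_nhds (0 : E) hr] with v hv
  set s : Set ℝ := (fun t : ℝ => t • v) ⁻¹' Metric.ball (0 : E) r
  have hs : Convex ℝ s := (convex_ball (0 : E) r).is_linear_preimage
    (LinearMap.toSpanSingleton ℝ E v).isLinear
  have hf' : AnalyticOnNhd ℝ (fun t : ℝ => f (t • v)) s := fun t ht =>
    AnalyticAt.comp (f := fun t : ℝ => t • v) (hball _ ht) (analyticAt_id.smul analyticAt_const)
  have hzero := hf'.eqOn_zero_of_preconnected_of_eventuallyEq_zero hs.isPreconnected (z₀ := 0)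
    (by simp [s, hr]) (hline v)
  simpa using hzero (x := 1) (by simpa [s] using hv)

lemma exists_equiv_apply_zero_eq_smul {v : Fin (n + 1) → ℝ} (hv : v ≠ 0) :
    ∃ B : ((Fin n → ℝ) × ℝ) ≃L[ℝ] (Fin (n + 1) → ℝ), ∀ t : ℝ, B (0, t) = t • v := by
  set C : ((Fin n → ℝ) × ℝ) ≃L[ℝ] (Fin (n + 1) → ℝ) :=
    (ContinuousLinearEquiv.prodComm ℝ (Fin n → ℝ) ℝ).trans
      (Fin.consEquivL ℝ fun _ : Fin (n + 1) => ℝ)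
  have hC : C (0, 1) ≠ 0 := (map_ne_zero_iff C C.injective).2 (by simp)
  obtain ⟨T, hT⟩ := SeparatingDual.exists_continuousLinearEquiv_apply_eq (R := ℝ) hC hv
  refine ⟨C.trans T, fun t => ?_⟩
  rw [ContinuousLinearEquiv.trans_apply, ← hT, ← map_smul, ← map_smul, Prod.smul_mk, smul_zero,
    smul_eq_mul, mul_one]

lemma resolves_of_ne_zero {𝒰 : Filter (Fin n → ℝ)} (h𝒰 : 𝒰 ≤ 𝓝 0) {f : (Fin n → ℝ) → ℝ}
    (hf : AnalyticAt ℝ f 0) (hf₀ : f 0 ≠ 0) : Resolves 𝒰 n f :=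
  ⟨_, _, .of_equiv (.refl ℝ _) h𝒰, .of_unit hf hf₀⟩

theorem localUniformization (n : ℕ) : LocalUniformization n := by
  induction n with
  | zero =>
    refine fun 𝒰 h𝒰 f hf hf₀ => resolves_of_ne_zero h𝒰 hf fun h => hf₀ (.of_forall fun u => ?_)
    rwa [Subsingleton.elim u 0]
  | succ n ih =>
    intro 𝒰 h𝒰 f hf hf₀
    obtain ⟨v, hv⟩ := exists_line_not_eventuallyEq_zero hf hf₀
    rcases eq_or_ne v 0 with rfl | hv₀
    · refine resolves_of_ne_zero h𝒰 hf fun h => hv (.of_forall fun t => ?_)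
      simpa only [smul_zero, Pi.zero_apply] using h
    obtain ⟨B, hB⟩ := exists_equiv_apply_zero_eq_smul hv₀
    have hchart : IsChart 𝒰 B B.symm := .of_equiv B h𝒰
    have hg : AnalyticAt ℝ (f ∘ B) 0 := hchart.analyticAt_comp hf
    obtain ⟨k, hk⟩ := ENat.ne_top_iff_exists.1 (mt analyticOrderAt_eq_top.1 hv)
    refine Resolves.of_isChart hchart (ih.resolvesOrder k (𝒰.map B.symm) hchart.tendsto 0 (f ∘ B)
      hg ?_) (.of_forall fun q => ?_)
    · simp only [Function.comp_apply, hB, hk, le_refl]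
    · simp

end LocalUniformization

section MonomialGradient

variable {ι : Type*} [Fintype ι] {α : ι → ℕ} {e : (ι → ℝ) → ℝ}

lemma coord_mul_fderiv_monomial [DecidableEq ι] (α : ι → ℕ) (y : ι → ℝ) (j : ι) :
    y j * fderiv ℝ (fun u : ι → ℝ => ∏ i, u i ^ α i) y (Pi.single j 1) =
      α j * ∏ i, y i ^ α i := by
  induction α using multiindex_induction with
  | zero => simp
  | add_single α i ih =>
    have hcoord : HasFDerivAt (fun u : ι → ℝ => u i)
        (ContinuousLinearMap.proj (R := ℝ) (φ := fun _ : ι => ℝ) i) y :=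
      (ContinuousLinearMap.proj (R := ℝ) (φ := fun _ : ι => ℝ) i).hasFDerivAt
    simp only [prod_pow_add, prod_pow_single, pow_one]
    rw [((analyticAt_monomial α y).differentiableAt.hasFDerivAt.fun_mul hcoord).fderiv]
    simp only [add_apply, smul_apply, smul_eq_mul,
      ContinuousLinearMap.proj_apply, Pi.add_apply, Nat.cast_add, mul_add, add_mul]
    rw [mul_left_comm (y j) (y i), ih]
    obtain rfl | hij := eq_or_ne i j
    · simp
      ring
    · simp [hij, hij.symm]
      ring

lemma coord_mul_fderiv_monomial_mul [DecidableEq ι] {y : ι → ℝ} (he : DifferentiableAt ℝ e y)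
    (j : ι) :
    y j * fderiv ℝ (fun u => (∏ i, u i ^ α i) * e u) y (Pi.single j 1) =
      (∏ i, y i ^ α i) * (α j * e y + y j * fderiv ℝ e y (Pi.single j 1)) := by
  rw [((analyticAt_monomial α y).differentiableAt.hasFDerivAt.fun_mul he.hasFDerivAt).fderiv]
  simp only [add_apply, smul_apply, smul_eq_mul]
  linear_combination e y * coord_mul_fderiv_monomial α y j

-- In the Euler derivative `y j * ∂ⱼ` of a monomial times a unit `e`, the term coming from `e` is
-- negligible near the origin.
lemma eventually_abs_monomial_mul_le [DecidableEq ι] (he : AnalyticAt ℝ e 0) (he₀ : e 0 ≠ 0)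
    {j : ι} (hj : α j ≠ 0) :
    ∀ᶠ y in 𝓝 (0 : ι → ℝ), |(∏ i, y i ^ α i) * e y| ≤
      2 * |y j| * |fderiv ℝ (fun u => (∏ i, u i ^ α i) * e u) y (Pi.single j 1)| := by
  have hcont : ContinuousAt (fun y => |e y| / 2 - |y j * fderiv ℝ e y (Pi.single j 1)|) 0 :=
    (he.continuousAt.abs.div_const 2).sub ((continuous_apply j).continuousAt.mul
      (he.fderiv.continuousAt.clm_apply continuousAt_const)).abs
  have hsmall : ∀ᶠ y in 𝓝 (0 : ι → ℝ), 0 < |e y| / 2 - |y j * fderiv ℝ e y (Pi.single j 1)| :=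
    hcont.eventually (lt_mem_nhds (by simpa using he₀))
  filter_upwards [hsmall, he.eventually_analyticAt] with y hy hey
  rw [mul_assoc, ← abs_mul, coord_mul_fderiv_monomial_mul hey.differentiableAt, abs_mul, abs_mul,
    mul_left_comm]
  refine mul_le_mul_of_nonneg_left ?_ (abs_nonneg _)
  have hαj : |e y| ≤ |α j * e y| := by
    rw [abs_mul, Nat.abs_cast]
    exact le_mul_of_one_le_left (abs_nonneg _) (mod_cast Nat.one_le_iff_ne_zero.2 hj)
  have := abs_sub_abs_le_abs_add (α j * e y) (y j * fderiv ℝ e y (Pi.single j 1))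
  linarith

lemma exists_min_coord_pow_le_prod (hα : α ≠ 0) (y : ι → ℝ) :
    ∃ j, α j ≠ 0 ∧ |y j| ^ (∑ i, α i) ≤ ∏ i, |y i| ^ α i := by
  classical
  obtain ⟨j₀, hj₀⟩ := Function.ne_iff.1 hα
  obtain ⟨j, hj, hmin⟩ := Finset.exists_min_image (Finset.univ.filter fun i => α i ≠ 0)
    (fun i => |y i|) ⟨j₀, by simpa using hj₀⟩
  refine ⟨j, by simpa using hj, ?_⟩
  rw [← Finset.prod_pow_eq_pow_sum]
  refine Finset.prod_le_prod (fun i _ => by positivity) fun i _ => ?_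
  by_cases hi : α i = 0
  · simp [hi]
  · exact pow_le_pow_left₀ (abs_nonneg _) (hmin i (by simpa using hi)) _

theorem exists_eventually_abs_pow_le (he : AnalyticAt ℝ e 0) (he₀ : e 0 ≠ 0) (hα : α ≠ 0) :
    ∃ C, ∀ᶠ u in 𝓝 (0 : ι → ℝ), |(∏ i, u i ^ α i) * e u| ^ (∑ i, α i) ≤
      C * |(∏ i, u i ^ α i) * e u| *
        ‖fderiv ℝ (fun u => (∏ i, u i ^ α i) * e u) u‖ ^ (∑ i, α i) := by
  classical
  set h : (ι → ℝ) → ℝ := fun u => (∏ i, u i ^ α i) * e u with hh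
  set N := ∑ i, α i
  set c := |e 0| / 2
  have hc : 0 < c := by positivity
  have hce : ∀ᶠ u in 𝓝 0, c ≤ |e u| :=
    he.continuousAt.abs.eventually (le_mem_nhds (half_lt_self (abs_pos.2 he₀)))
  have hpartial : ∀ᶠ u in 𝓝 (0 : ι → ℝ), ∀ j, α j ≠ 0 →
      |h u| ≤ 2 * |u j| * |fderiv ℝ h u (Pi.single j 1)| := by
    simp only [eventually_all]
    exact fun j hj => eventually_abs_monomial_mul_le he he₀ hj
  refine ⟨2 ^ N / c, ?_⟩
  filter_upwards [hpartial, hce] with u hpart hcu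
  change |h u| ^ N ≤ 2 ^ N / c * |h u| * ‖fderiv ℝ h u‖ ^ N
  obtain ⟨j, hj, hmin⟩ := exists_min_coord_pow_le_prod hα u
  have hgrad : |h u| ≤ |u j| * (2 * ‖fderiv ℝ h u‖) := by
    have hnorm := (fderiv ℝ h u).le_opNorm (Pi.single j (1 : ℝ))
    rw [Pi.norm_single, norm_one, mul_one, Real.norm_eq_abs] at hnorm
    calc |h u| ≤ 2 * |u j| * |fderiv ℝ h u (Pi.single j 1)| := hpart j hj
      _ ≤ 2 * |u j| * ‖fderiv ℝ h u‖ := by gcongr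
      _ = |u j| * (2 * ‖fderiv ℝ h u‖) := by ring
  have hcoord : |u j| ^ N ≤ |h u| / c := by
    simp only [le_div_iff₀ hc, hh, abs_mul, Finset.abs_prod, abs_pow]
    gcongr
  calc |h u| ^ N ≤ (|u j| * (2 * ‖fderiv ℝ h u‖)) ^ N := by gcongr
    _ = |u j| ^ N * (2 * ‖fderiv ℝ h u‖) ^ N := mul_pow _ _ _
    _ ≤ |h u| / c * (2 * ‖fderiv ℝ h u‖) ^ N := by gcongr
    _ = 2 ^ N / c * |h u| * ‖fderiv ℝ h u‖ ^ N := by rw [mul_pow]; ring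

end MonomialGradient

/-- The Łojasiewicz inequality between a value `v` and a gradient norm `δ`. A single integer `m`
controls both the exponent and the constant, so that the inequalities weaken as `m` grows. -/
def LojasiewiczBound (m : ℕ) (v δ : ℝ) : Prop :=
  v ^ (1 - 1 / ((m : ℝ) + 2)) ≤ (m + 2) * δ

namespace LojasiewiczBound

variable {m m' : ℕ} {v δ δ' : ℝ}

lemma exponent_pos (m : ℕ) : (0 : ℝ) < 1 - 1 / ((m : ℝ) + 2) := by
  rw [sub_pos, div_lt_one (by positivity)]
  linarith [(Nat.cast_nonneg m : (0 : ℝ) ≤ m)]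

lemma mono (h : LojasiewiczBound m v δ) (hm : m ≤ m') (hv₀ : 0 ≤ v) (hv₁ : v ≤ 1)
    (hδ : (m + 2) * δ ≤ (m' + 2) * δ') : LojasiewiczBound m' v δ' := by
  refine le_trans ?_ (h.trans hδ)
  have hexp : 1 - 1 / ((m : ℝ) + 2) ≤ 1 - 1 / ((m' : ℝ) + 2) := by gcongr
  obtain rfl | hv := hv₀.eq_or_lt
  · rw [Real.zero_rpow (exponent_pos m).ne', Real.zero_rpow (exponent_pos m').ne']
  · exact Real.rpow_le_rpow_of_exponent_ge hv hv₁ hexp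

lemma exists_of_le_mul (m : ℕ) (c : ℝ) :
    ∃ m', ∀ v δ δ', LojasiewiczBound m v δ → 0 ≤ v → v ≤ 1 → 0 ≤ δ' → δ ≤ c * δ' →
      LojasiewiczBound m' v δ' := by
  refine ⟨max m ⌈(m + 2) * c⌉₊, fun v δ δ' h hv₀ hv₁ hδ' hδ =>
    h.mono (le_max_left _ _) hv₀ hv₁ ?_⟩
  have hc : (m + 2) * c ≤ (max m ⌈(m + 2) * c⌉₊ : ℕ) :=
    (Nat.le_ceil _).trans (mod_cast le_max_right _ _)
  calc (m + 2) * δ ≤ (m + 2) * (c * δ') := by gcongr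
    _ = (m + 2) * c * δ' := by ring
    _ ≤ ((max m ⌈(m + 2) * c⌉₊ : ℕ) + 2) * δ' := by gcongr; linarith

lemma of_pow_le {C : ℝ} {N : ℕ} (hv₀ : 0 ≤ v) (hv₁ : v ≤ 1) (hδ : 0 ≤ δ) (hN : N ≠ 0)
    (h : v ^ N ≤ C * v * δ ^ N) (hNm : N ≤ m + 2) (hCm : C ≤ m + 2) :
    LojasiewiczBound m v δ := by
  have : (0 : ℝ) ≤ m := Nat.cast_nonneg m
  unfold LojasiewiczBound
  obtain rfl | hv := hv₀.eq_or_lt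
  · rw [Real.zero_rpow (exponent_pos m).ne']
    positivity
  refine le_of_pow_le_pow_left₀ hN (by positivity) ?_
  have hexp : (N : ℝ) - 1 ≤ (1 - 1 / ((m : ℝ) + 2)) * N := by
    have : (N : ℝ) / (m + 2) ≤ 1 := (div_le_one (by positivity)).2 (mod_cast hNm)
    linear_combination this
  calc (v ^ (1 - 1 / ((m : ℝ) + 2))) ^ N = v ^ ((1 - 1 / ((m : ℝ) + 2)) * N) := by
        rw [← Real.rpow_natCast, ← Real.rpow_mul hv₀]
    _ ≤ v ^ ((N : ℝ) - 1) := Real.rpow_le_rpow_of_exponent_ge hv hv₁ hexp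
    _ = v ^ N / v := by rw [Real.rpow_sub_one hv.ne', Real.rpow_natCast]
    _ ≤ C * δ ^ N := by rw [div_le_iff₀ hv]; linarith
    _ ≤ (m + 2) ^ N * δ ^ N := by
        gcongr
        exact hCm.trans (le_self_pow₀ (by linarith) hN)
    _ = ((m + 2) * δ) ^ N := (mul_pow _ _ _).symm

end LojasiewiczBound

section Gradient

variable {n : ℕ} {f : (Fin n → ℝ) → ℝ}

theorem IsMono.exists_lojasiewiczBound {ι : Type*} [Fintype ι] {f : (ι → ℝ) → ℝ} (hf : IsMono f)
    (hf₀ : f 0 = 0) :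
    ∃ m, ∀ᶠ u in 𝓝 (0 : ι → ℝ), LojasiewiczBound m |f u| ‖fderiv ℝ f u‖ := by
  obtain ⟨α, e, he, he₀, hfe⟩ := hf
  have hα : α ≠ 0 := by
    rintro rfl
    exact he₀ (by simpa [hf₀] using hfe.self_of_nhds.symm)
  have hN : ∑ i, α i ≠ 0 := fun h =>
    hα (funext fun i => Finset.sum_eq_zero_iff.1 h i (Finset.mem_univ i))
  obtain ⟨C, hC⟩ := exists_eventually_abs_pow_le he he₀ hα
  have hsmall : ∀ᶠ u in 𝓝 0, |f u| ≤ 1 := by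
    have hf : ContinuousAt f 0 :=
      (((analyticAt_monomial α 0).mul he).congr hfe.symm).continuousAt
    exact hf.abs.eventually (ge_mem_nhds (by simp [hf₀]))
  refine ⟨max (∑ i, α i) ⌈C⌉₊, ?_⟩
  filter_upwards [hC, hsmall, hfe, hfe.fderiv (𝕜 := ℝ)] with u hCu hu hfu hdu
  rw [← hfu, ← hdu] at hCu
  refine .of_pow_le (abs_nonneg _) hu (norm_nonneg _) hN hCu
    ((le_max_left _ _).trans (Nat.le_add_right _ 2)) ?_
  have : C ≤ (max (∑ i, α i) ⌈C⌉₊ : ℕ) := (Nat.le_ceil _).trans (mod_cast le_max_right _ _)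
  linarith

lemma IsChart.exists_norm_fderiv_comp_le {X Y : Type*} [NormedAddCommGroup X] [NormedSpace ℝ X]
    [CompleteSpace X] [NormedAddCommGroup Y] [NormedSpace ℝ Y] {𝒰 : Filter X} {φ : Y → X}
    {s : X → Y} (hφ : IsChart 𝒰 φ s) {f : X → ℝ} (hf : AnalyticAt ℝ f 0) :
    ∃ B, ∀ᶠ u in 𝓝 0, ‖fderiv ℝ (f ∘ φ) u‖ ≤ B * ‖fderiv ℝ f (φ u)‖ := by
  refine ⟨‖fderiv ℝ φ 0‖ + 1, ?_⟩
  filter_upwards [hφ.analyticAt.fderiv.continuousAt.norm.eventually (ge_mem_nhds (lt_add_one _)),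
    hφ.analyticAt.eventually_analyticAt,
    hφ.tendsto_nhds_zero.eventually hf.eventually_analyticAt] with u hu hφu hfu
  rw [fderiv_comp u hfu.differentiableAt hφu.differentiableAt, mul_comm]
  exact (ContinuousLinearMap.opNorm_comp_le _ _).trans (by gcongr)

lemma exists_lojasiewiczBound_of_ultrafilter (hf : AnalyticAt ℝ f 0) (hf₀ : f 0 = 0)
    {𝒰 : Ultrafilter (Fin n → ℝ)} (h𝒰 : ↑𝒰 ≤ 𝓝 (0 : Fin n → ℝ)) :
    ∃ m, ∀ᶠ u in 𝒰, LojasiewiczBound m |f u| ‖fderiv ℝ f u‖ := by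
  by_cases hzero : f =ᶠ[𝓝 0] 0
  · refine ⟨0, h𝒰 (hzero.mono fun u hu => ?_)⟩
    rw [hu, Pi.zero_apply, abs_zero, LojasiewiczBound,
      Real.zero_rpow (LojasiewiczBound.exponent_pos 0).ne']
    positivity
  obtain ⟨φ, s, hφ, hmono⟩ := localUniformization n 𝒰 h𝒰 f hf hzero
  obtain ⟨m, hm⟩ := hmono.exists_lojasiewiczBound (by simp [hφ.map_zero, hf₀])
  obtain ⟨B, hB⟩ := hφ.exists_norm_fderiv_comp_le hf
  obtain ⟨m', hm'⟩ := LojasiewiczBound.exists_of_le_mul m B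
  have hsmall : ∀ᶠ u in 𝓝 0, |f u| ≤ 1 :=
    hf.continuousAt.abs.eventually (ge_mem_nhds (by simp [hf₀]))
  refine ⟨m', ?_⟩
  filter_upwards [hφ.tendsto.eventually hm, hφ.tendsto.eventually hB, hφ.eventually_eq,
    h𝒰 hsmall] with u hu hBu hsu hfu
  simp only [Function.comp_apply, hsu] at hu hBu
  exact hm' _ _ _ hu (abs_nonneg _) hfu (norm_nonneg _) hBu

theorem exists_eventually_of_forall_ultrafilter {ι : Type*} {F : Filter ι} {Q : ℕ → ι → Prop}
    (h : ∀ 𝒰 : Ultrafilter ι, ↑𝒰 ≤ F → ∃ m, ∀ᶠ k in (𝒰 : Filter ι), Q m k) :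
    ∃ m, ∀ᶠ k in F, ∃ m' ≤ m, Q m' k := by
  by_contra! hcon
  let s : ℕ → Set ι := fun m => {k | ∀ m' ≤ m, ¬ Q m' k}
  have hs : Antitone s := fun m m' hm k hk i hi => hk i (hi.trans hm)
  have hne : (⨅ m, F ⊓ 𝓟 (s m)).NeBot :=
    (iInf_neBot_of_directed' (Antitone.directed_ge fun m m' hm =>
      inf_le_inf_left _ (principal_mono.2 (hs hm)))) fun m =>
        frequently_mem_iff_neBot.1 (hcon m)
  obtain ⟨𝒰, h𝒰⟩ := @Ultrafilter.exists_le _ _ hne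
  obtain ⟨m, hm⟩ := h 𝒰 (h𝒰.trans ((iInf_le _ 0).trans inf_le_left))
  have hsm : ∀ᶠ k in (𝒰 : Filter ι), k ∈ s m :=
    (h𝒰.trans ((iInf_le _ m).trans inf_le_right)) (mem_principal_self _)
  obtain ⟨k, hQ, hk⟩ := (hm.and hsm).exists
  exact hk m le_rfl hQ

theorem lojasiewicz_gradient_inequality {a : Fin n → ℝ} (hf : AnalyticAt ℝ f a) :
    ∃ m, ∀ᶠ x in 𝓝 a, LojasiewiczBound m |f x - f a| ‖fderiv ℝ f x‖ := by
  set g : (Fin n → ℝ) → ℝ := fun u => f (a + u) - f a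
  have hg : AnalyticAt ℝ g 0 :=
    (hf.comp_of_eq (analyticAt_const.add analyticAt_id) (add_zero a)).sub analyticAt_const
  have hg₀ : g 0 = 0 := by simp [g]
  obtain ⟨m, hm⟩ := exists_eventually_of_forall_ultrafilter fun 𝒰 h𝒰 =>
    exists_lojasiewiczBound_of_ultrafilter hg hg₀ h𝒰
  have hsmall : ∀ᶠ u in 𝓝 0, |g u| ≤ 1 :=
    hg.continuousAt.abs.eventually (ge_mem_nhds (by simp [hg₀]))
  have hshift : Tendsto (fun x => x - a) (𝓝 a) (𝓝 0) :=
    (continuous_sub_right a).tendsto' _ _ (sub_self a)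
  refine ⟨m, (hshift.eventually (hm.and hsmall)).mono ?_⟩
  rintro x ⟨⟨m', hm', hx⟩, hgx⟩
  have hgrad : fderiv ℝ g (x - a) = fderiv ℝ f x := by
    simp only [g, fderiv_sub_const, fderiv_comp_add_left, add_sub_cancel]
  have hval : g (x - a) = f x - f a := by simp only [g, add_sub_cancel]
  rw [← hval, ← hgrad]
  exact hx.mono hm' (abs_nonneg _) hgx (by gcongr)

end Gradient

section FiniteLength

theorem summable_of_le_half_add {δ a : ℕ → ℝ} {M : ℝ} (hM : 0 ≤ M) (hδ : ∀ k, 0 ≤ δ k)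
    (ha : ∀ k, 0 ≤ a k) (h : ∀ k, δ (k + 1) ≤ δ k / 2 + M * (a k - a (k + 1))) :
    Summable δ := by
  have hbound (N : ℕ) : ∑ k ∈ Finset.range N, δ k + 2 * δ N + 2 * M * a N ≤
      2 * δ 0 + 2 * M * a 0 := by
    induction N with
    | zero => simp
    | succ N ih =>
      rw [Finset.sum_range_succ]
      linarith [h N]
  refine summable_of_sum_range_le (c := 2 * δ 0 + 2 * M * a 0) hδ fun N => ?_
  linarith [hbound N, hδ N, mul_nonneg hM (ha N)]

-- The function `v ↦ v ^ (1 / (m + 2))` desingularises the decrease of `v`; AM-GM then splits the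
-- product of the old step length and this desingularised decrease.
theorem LojasiewiczBound.le_half_add {m : ℕ} {v v' d d' K : ℝ} (h : LojasiewiczBound m v d)
    (hK : 0 ≤ K) (hd : 0 ≤ d) (hv' : 0 ≤ v') (hv : v' ≤ v) (hd' : d' ^ 2 ≤ K * (v - v')) :
    d' ≤ d / 2 + K * (m + 2) ^ 2 / 2 *
      (v ^ (1 / ((m : ℝ) + 2)) - v' ^ (1 / ((m : ℝ) + 2))) := by
  have hm : (m : ℝ) + 2 ≠ 0 := by positivity
  set a := v ^ (1 / ((m : ℝ) + 2))
  set b := v' ^ (1 / ((m : ℝ) + 2))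
  have hb : 0 ≤ b := Real.rpow_nonneg hv' _
  have hba : b ≤ a := Real.rpow_le_rpow hv' hv (by positivity)
  have hpow {w : ℝ} (hw : 0 ≤ w) : (w ^ (1 / ((m : ℝ) + 2))) ^ (m + 2) = w := by
    rw [one_div]
    exact_mod_cast Real.rpow_inv_natCast_pow hw (Nat.succ_ne_zero (m + 1))
  have hpow_succ : a ^ (m + 1) = v ^ (1 - 1 / ((m : ℝ) + 2)) := by
    rw [← Real.rpow_natCast, ← Real.rpow_mul (hv'.trans hv)]
    congr 1
    push_cast
    field_simp
    ring
  have hsub : v - v' ≤ (m + 2) * a ^ (m + 1) * (a - b) := by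
    have := (le_abs_self _).trans (abs_pow_sub_pow_le a b (m + 2))
    rw [hpow (hv'.trans hv), hpow hv', abs_of_nonneg (sub_nonneg.2 hba),
      abs_of_nonneg (hb.trans hba), abs_of_nonneg hb, max_eq_left hba] at this
    calc v - v' ≤ (a - b) * (m + 2 : ℕ) * a ^ (m + 1) := this
      _ = (m + 2) * a ^ (m + 1) * (a - b) := by push_cast; ring
  have hsq : d' ^ 2 ≤ d * (K * (m + 2) ^ 2 * (a - b)) := by
    have := sub_nonneg.2 hba
    calc d' ^ 2 ≤ K * ((m + 2) * a ^ (m + 1) * (a - b)) := hd'.trans (by gcongr)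
      _ ≤ K * ((m + 2) * ((m + 2) * d) * (a - b)) := by rw [hpow_succ]; gcongr; exact h
      _ = d * (K * (m + 2) ^ 2 * (a - b)) := by ring
  set y := K * (m + 2) ^ 2 * (a - b)
  have hy₀ : 0 ≤ y := mul_nonneg (by positivity) (sub_nonneg.2 hba)
  have hAMGM : d' ≤ (d + y) / 2 :=
    le_of_sq_le_sq (by nlinarith [sq_nonneg (d - y)])
      (div_nonneg (add_nonneg hd hy₀) zero_le_two)
  linarith

theorem cauchySeq_of_lojasiewiczBound {X : Type*} [PseudoMetricSpace X] {t : ℕ → X} {V : ℕ → ℝ}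
    {l K : ℝ} {m : ℕ} (hK : 0 < K) (hl : ∀ k, l ≤ V k)
    (hdesc : ∀ k, dist (t (k + 1)) (t (k + 2)) ^ 2 ≤ K * (V k - V (k + 1)))
    (hloj : ∀ᶠ k in atTop, LojasiewiczBound m (V k - l) (dist (t k) (t (k + 1)))) :
    CauchySeq t := by
  have hanti (k : ℕ) : V (k + 1) ≤ V k :=
    sub_nonneg.1 (nonneg_of_mul_nonneg_right ((sq_nonneg _).trans (hdesc k)) hK)
  obtain ⟨k₀, hk₀⟩ := eventually_atTop.1 hloj
  have hsum : Summable fun k => dist (t (k + k₀)) (t (k + k₀ + 1)) := by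
    refine summable_of_le_half_add (M := K * (m + 2) ^ 2 / 2)
      (a := fun k => (V (k + k₀) - l) ^ (1 / ((m : ℝ) + 2))) (by positivity)
      (fun k => dist_nonneg) (fun k => Real.rpow_nonneg (sub_nonneg.2 (hl _)) _) fun k => ?_
    rw [add_right_comm k 1 k₀]
    exact (hk₀ (k + k₀) (Nat.le_add_left _ _)).le_half_add hK.le dist_nonneg
      (sub_nonneg.2 (hl _)) (sub_le_sub_right (hanti _) l) (by simpa using hdesc (k + k₀))
  exact cauchySeq_of_summable_dist ((summable_nat_add_iff k₀).1 hsum)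

end FiniteLength

/-- A primitive of `t ↦ t ^ (p - 1)` on the positive half-line. -/
def powPrimitive (p t : ℝ) : ℝ := if p = 0 then Real.log t else t ^ p / p

/-- The positive branch of `p`-shrinkage, without truncation. -/
def shrinkPos (lam p t : ℝ) : ℝ := t - lam ^ (2 - p) * t ^ (p - 1)

/-- The primitive of `shrinkPos lam p` vanishing at `lam`. -/
def shrinkPot (lam p t : ℝ) : ℝ :=
  (t ^ 2 - lam ^ 2) / 2 - lam ^ (2 - p) * (powPrimitive p t - powPrimitive p lam)

/-- The one-dimensional shrinkage map, written as a difference of two branches truncated at `lam`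
(where `shrinkPos lam p` vanishes) so that `shrinkPos` is only evaluated at positive arguments. -/
def scalarShrink (lam p t : ℝ) : ℝ := shrinkPos lam p (max t lam) - shrinkPos lam p (max (-t) lam)

/-- The convex potential whose derivative is `scalarShrink lam p`; it is `f_p(|t|)`. -/
def scalarPot (lam p t : ℝ) : ℝ := shrinkPot lam p (max t lam) + shrinkPot lam p (max (-t) lam)

/-- The Legendre conjugate `f_p*` of the potential, parametrised by the preimage `t` of its
argument under shrinkage. -/
def scalarConj (lam p t : ℝ) : ℝ := t * scalarShrink lam p t - scalarPot lam p t

/-- The penalty `λ g_p`, parametrised by the preimage `t` of its argument under shrinkage. -/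
def scalarPenalty (lam p t : ℝ) : ℝ := scalarConj lam p t - scalarShrink lam p t ^ 2 / 2

section ScalarShrinkage

variable {lam p t : ℝ}

lemma hasDerivAt_powPrimitive (ht : 0 < t) : HasDerivAt (powPrimitive p) (t ^ (p - 1)) t := by
  unfold powPrimitive
  obtain rfl | hp := eq_or_ne p 0
  · simpa [Real.rpow_neg_one] using Real.hasDerivAt_log ht.ne'
  · simpa [hp] using (Real.hasDerivAt_rpow_const (p := p) (Or.inl ht.ne')).div_const p

lemma analyticAt_rpow_const {q : ℝ} (ht : t ≠ 0) : AnalyticAt ℝ (fun s => s ^ q) t :=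
  (Real.contDiffAt_rpow_const_of_ne ht).analyticAt

lemma analyticAt_powPrimitive (ht : 0 < t) : AnalyticAt ℝ (powPrimitive p) t := by
  unfold powPrimitive
  split_ifs
  · exact analyticAt_id.log ht
  · exact (analyticAt_rpow_const ht.ne').div_const

lemma powPrimitive_monotoneOn : MonotoneOn (powPrimitive p) (Set.Ioi 0) :=
  monotoneOn_of_hasDerivWithinAt_nonneg (convex_Ioi 0)
    (fun _ hs => (hasDerivAt_powPrimitive hs).continuousAt.continuousWithinAt)
    (fun s hs => (hasDerivAt_powPrimitive (by simpa using hs)).hasDerivWithinAt)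
    fun s hs => Real.rpow_nonneg (interior_subset hs).le _

lemma analyticAt_shrinkPos (ht : 0 < t) : AnalyticAt ℝ (shrinkPos lam p) t :=
  analyticAt_id.sub (analyticAt_const.mul (analyticAt_rpow_const ht.ne'))

lemma analyticAt_shrinkPot (ht : 0 < t) : AnalyticAt ℝ (shrinkPot lam p) t :=
  (((analyticAt_id.pow 2).sub analyticAt_const).div_const).sub
    (analyticAt_const.mul ((analyticAt_powPrimitive ht).sub analyticAt_const))

lemma hasDerivAt_shrinkPos (ht : 0 < t) :
    HasDerivAt (shrinkPos lam p) (1 + lam ^ (2 - p) * ((1 - p) * t ^ (p - 2))) t := by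
  refine ((hasDerivAt_id t).sub ((Real.hasDerivAt_rpow_const (p := p - 1)
    (Or.inl ht.ne')).const_mul (lam ^ (2 - p)))).congr_deriv ?_
  rw [sub_sub, one_add_one_eq_two]
  ring

lemma hasDerivAt_shrinkPot (ht : 0 < t) : HasDerivAt (shrinkPot lam p) (shrinkPos lam p t) t := by
  refine (((((hasDerivAt_id t).pow 2).sub_const (lam ^ 2)).div_const 2).sub
    (((hasDerivAt_powPrimitive ht).sub_const (powPrimitive p lam)).const_mul
      (lam ^ (2 - p)))).congr_deriv ?_
  simp [shrinkPos]

lemma rpow_two_sub_mul_rpow_sub_one (hlam : 0 < lam) : lam ^ (2 - p) * lam ^ (p - 1) = lam := by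
  rw [← Real.rpow_add hlam]
  ring_nf
  exact Real.rpow_one lam

lemma shrinkPos_self (hlam : 0 < lam) : shrinkPos lam p lam = 0 := by
  rw [shrinkPos, rpow_two_sub_mul_rpow_sub_one hlam, sub_self]

lemma shrinkPot_self : shrinkPot lam p lam = 0 := by simp [shrinkPot]

lemma shrinkPos_monotoneOn (hlam : 0 ≤ lam) (hp : p ≤ 1) :
    MonotoneOn (shrinkPos lam p) (Set.Ioi 0) := fun a ha b _ hab => by
  have := mul_le_mul_of_nonneg_left (Real.rpow_le_rpow_of_nonpos ha hab (sub_nonpos.2 hp))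
    (Real.rpow_nonneg hlam (2 - p))
  unfold shrinkPos
  linarith

lemma shrinkPos_nonneg (hlam : 0 < lam) (hp : p ≤ 1) (ht : lam ≤ t) : 0 ≤ shrinkPos lam p t := by
  rw [← shrinkPos_self (p := p) hlam]
  exact shrinkPos_monotoneOn hlam.le hp hlam (hlam.trans_le ht) ht

lemma convexOn_shrinkPot (hlam : 0 ≤ lam) (hp : p ≤ 1) :
    ConvexOn ℝ (Set.Ioi 0) (shrinkPot lam p) := by
  refine MonotoneOn.convexOn_of_deriv (convex_Ioi 0)
    (fun s hs => (hasDerivAt_shrinkPot hs).continuousAt.continuousWithinAt) ?_ ?_ <;>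
    rw [interior_Ioi]
  · exact fun s hs => (hasDerivAt_shrinkPot hs).differentiableAt.differentiableWithinAt
  · exact (shrinkPos_monotoneOn hlam hp).congr fun s hs => (hasDerivAt_shrinkPot hs).deriv.symm

theorem mul_sub_le_sub_of_convexOn {s : Set ℝ} {f : ℝ → ℝ} {f' a b : ℝ} (hf : ConvexOn ℝ s f)
    (ha : a ∈ s) (hb : b ∈ s) (hfa : HasDerivAt f f' a) : f' * (b - a) ≤ f b - f a := by
  obtain hab | rfl | hab := lt_trichotomy a b
  · have := hf.le_slope_of_hasDerivAt ha hb hab hfa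
    rwa [slope_def_field, le_div_iff₀ (sub_pos.2 hab)] at this
  · simp
  · have := hf.slope_le_of_hasDerivAt hb ha hab hfa
    rw [slope_def_field, div_le_iff₀ (sub_pos.2 hab)] at this
    linarith

theorem scalarShrink_mul_sub_le (hlam : 0 < lam) (hp : p ≤ 1) (a b : ℝ) :
    scalarShrink lam p a * (b - a) ≤ scalarPot lam p b - scalarPot lam p a := by
  have hbranch (a b : ℝ) : shrinkPos lam p (max a lam) * (b - a) ≤
      shrinkPot lam p (max b lam) - shrinkPot lam p (max a lam) := by
    have hpos (s : ℝ) : 0 < max s lam := lt_max_of_lt_right hlam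
    refine le_trans ?_ (mul_sub_le_sub_of_convexOn (convexOn_shrinkPot hlam.le hp) (hpos a)
      (hpos b) (hasDerivAt_shrinkPot (hpos a)))
    obtain h | h := le_total a lam
    · rw [max_eq_right h, shrinkPos_self hlam, zero_mul, zero_mul]
    · rw [max_eq_left h]
      exact mul_le_mul_of_nonneg_left (sub_le_sub_right (le_max_left _ _) _)
        (shrinkPos_nonneg hlam hp h)
  have hleft := hbranch a b
  have hright := hbranch (-a) (-b)
  unfold scalarShrink scalarPot
  linarith

lemma scalarShrink_neg (t : ℝ) : scalarShrink lam p (-t) = -scalarShrink lam p t := by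
  simp [scalarShrink]

lemma scalarConj_neg (t : ℝ) : scalarConj lam p (-t) = scalarConj lam p t := by
  simp [scalarConj, scalarShrink_neg, scalarPot, add_comm]

lemma scalarShrink_of_le (hlam : 0 < lam) (ht : lam ≤ t) :
    scalarShrink lam p t = shrinkPos lam p t := by
  rw [scalarShrink, max_eq_left ht, max_eq_right (by linarith), shrinkPos_self hlam, sub_zero]

lemma scalarConj_of_le (hlam : 0 < lam) (ht : lam ≤ t) :
    scalarConj lam p t = t * shrinkPos lam p t - shrinkPot lam p t := by
  rw [scalarConj, scalarShrink_of_le hlam ht, scalarPot, max_eq_left ht,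
    max_eq_right (by linarith), shrinkPot_self, add_zero]

lemma scalarShrink_of_abs_le (ht : |t| ≤ lam) : scalarShrink lam p t = 0 := by
  rw [scalarShrink, max_eq_right (abs_le.1 ht).2, max_eq_right (by linarith [(abs_le.1 ht).1]),
    sub_self]

lemma scalarConj_of_abs_le (ht : |t| ≤ lam) : scalarConj lam p t = 0 := by
  rw [scalarConj, scalarShrink_of_abs_le ht, scalarPot, max_eq_right (abs_le.1 ht).2,
    max_eq_right (by linarith [(abs_le.1 ht).1]), shrinkPot_self, mul_zero, add_zero, sub_self]

lemma continuous_scalarShrink (hlam : 0 < lam) : Continuous (scalarShrink lam p) := by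
  have hbranch : Continuous fun t => shrinkPos lam p (max t lam) :=
    continuous_iff_continuousAt.2 fun t =>
      ContinuousAt.comp (analyticAt_shrinkPos (lt_max_of_lt_right hlam)).continuousAt
        (f := fun t => max t lam) (by fun_prop)
  exact hbranch.sub (hbranch.comp continuous_neg)

theorem pshrinkFun_abs_mul_sign (hlam : 0 < lam) (hp : p ≤ 1) (t : ℝ) :
    pshrinkFun lam p |t| * Real.sign t = scalarShrink lam p t := by
  have hpos {t : ℝ} (ht : 0 < t) : pshrinkFun lam p t = scalarShrink lam p t := by
    rw [pshrinkFun, if_neg ht.not_ge]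
    obtain h | h := le_total lam t
    · rw [scalarShrink_of_le hlam h]
      exact max_eq_left (shrinkPos_nonneg hlam hp h)
    · rw [scalarShrink_of_abs_le (by rwa [abs_of_pos ht])]
      refine max_eq_right ?_
      rw [← shrinkPos_self (p := p) hlam]
      exact shrinkPos_monotoneOn hlam.le hp ht hlam h
  obtain h | rfl | h := lt_trichotomy t 0
  · rw [Real.sign_of_neg h, abs_of_neg h, hpos (neg_pos.2 h), scalarShrink_neg]
    ring
  · rw [scalarShrink_of_abs_le (by simpa using hlam.le), Real.sign_zero, mul_zero]
  · rw [Real.sign_of_pos h, abs_of_pos h, hpos h, mul_one]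

end ScalarShrinkage

section ScalarPenalty

variable {lam p t : ℝ}

lemma scalarPenalty_abs (t : ℝ) : scalarPenalty lam p |t| = scalarPenalty lam p t := by
  obtain h | h := abs_choice t <;> rw [h]
  simp only [scalarPenalty, scalarConj_neg, scalarShrink_neg, neg_sq]

lemma scalarPenalty_of_abs_le (ht : |t| ≤ lam) : scalarPenalty lam p t = 0 := by
  simp [scalarPenalty, scalarShrink_of_abs_le ht, scalarConj_of_abs_le ht]

lemma scalarPenalty_of_le (hlam : 0 < lam) (ht : lam ≤ t) :
    scalarPenalty lam p t = lam ^ (2 - p) * (powPrimitive p t - powPrimitive p lam) +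
      (lam ^ 2 - (lam ^ (2 - p) * t ^ (p - 1)) ^ 2) / 2 := by
  rw [scalarPenalty, scalarShrink_of_le hlam ht, scalarConj_of_le hlam ht, shrinkPos, shrinkPot]
  ring

lemma le_scalarPenalty (hlam : 0 < lam) (hp : p ≤ 1) (ht : lam ≤ t) :
    lam ^ (2 - p) * (powPrimitive p t - powPrimitive p lam) ≤ scalarPenalty lam p t := by
  have hle : lam ^ (2 - p) * t ^ (p - 1) ≤ lam := by
    have := mul_le_mul_of_nonneg_left (Real.rpow_le_rpow_of_nonpos hlam ht (sub_nonpos.2 hp))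
      (Real.rpow_nonneg hlam.le (2 - p))
    rwa [rpow_two_sub_mul_rpow_sub_one hlam] at this
  have hnonneg : 0 ≤ lam ^ (2 - p) * t ^ (p - 1) :=
    mul_nonneg (Real.rpow_nonneg hlam.le _) (Real.rpow_nonneg (hlam.le.trans ht) _)
  rw [scalarPenalty_of_le hlam ht]
  linarith [pow_le_pow_left₀ hnonneg hle 2]

lemma scalarPenalty_nonneg (hlam : 0 < lam) (hp : p ≤ 1) (t : ℝ) : 0 ≤ scalarPenalty lam p t := by
  rw [← scalarPenalty_abs]
  obtain h | h := le_total lam |t|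
  · exact (mul_nonneg (Real.rpow_nonneg hlam.le _)
      (sub_nonneg.2 (powPrimitive_monotoneOn hlam (hlam.trans_le h) h))).trans
        (le_scalarPenalty hlam hp h)
  · rw [scalarPenalty_of_abs_le (by simpa using h)]

lemma tendsto_scalarPenalty_atTop (hlam : 0 < lam) (hp₀ : 0 ≤ p) (hp₁ : p ≤ 1) :
    Tendsto (scalarPenalty lam p) atTop atTop := by
  have hprim : Tendsto (powPrimitive p) atTop atTop := by
    unfold powPrimitive
    obtain rfl | hp := hp₀.eq_or_lt
    · simpa using Real.tendsto_log_atTop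
    · simpa only [hp.ne', if_false] using (tendsto_rpow_atTop hp).atTop_div_const hp
  refine tendsto_atTop_mono' _ ((eventually_ge_atTop lam).mono fun t ht =>
    le_scalarPenalty hlam hp₁ ht) ?_
  exact (tendsto_atTop_add_const_right _ (-powPrimitive p lam) hprim).const_mul_atTop
    (Real.rpow_pos_of_pos hlam _)

lemma tendsto_scalarPenalty_of_neg (hlam : 0 < lam) (hp : p < 0) :
    Tendsto (scalarPenalty lam p) atTop (𝓝 (lam ^ 2 * (p - 2) / (2 * p))) := by
  have hprim : Tendsto (powPrimitive p) atTop (𝓝 0) := by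
    unfold powPrimitive
    simpa [hp.ne] using (tendsto_rpow_neg_atTop (neg_pos.2 hp)).div_const p
  have hpow : Tendsto (fun t : ℝ => t ^ (p - 1)) atTop (𝓝 0) := by
    simpa using tendsto_rpow_neg_atTop (y := -(p - 1)) (by linarith)
  have hlim := ((hprim.sub_const (powPrimitive p lam)).const_mul (lam ^ (2 - p))).add
    ((((hpow.const_mul (lam ^ (2 - p))).pow 2).const_sub (lam ^ 2)).div_const 2)
  have hval : lam ^ (2 - p) * (0 - powPrimitive p lam) +
      (lam ^ 2 - (lam ^ (2 - p) * 0) ^ 2) / 2 = lam ^ 2 * (p - 2) / (2 * p) := by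
    have hlam₂ : lam ^ (2 - p) * lam ^ p = lam ^ 2 := by
      rw [← Real.rpow_add hlam, sub_add_cancel, Real.rpow_two]
    have := hp.ne
    simp only [powPrimitive, hp.ne, if_false]
    field_simp
    linear_combination -2 * hlam₂
  rw [hval] at hlim
  exact hlim.congr' ((eventually_ge_atTop lam).mono fun t ht => (scalarPenalty_of_le hlam ht).symm)

theorem exists_abs_le_of_scalarPenalty_le (hlam : 0 < lam) (hp : p ≤ 1) {B : ℝ}
    (hB : p < 0 → B < lam ^ 2 * (p - 2) / (2 * p)) :
    ∃ R, ∀ t, scalarPenalty lam p t ≤ B → |t| ≤ R := by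
  have hlt : ∀ᶠ t in atTop, B < scalarPenalty lam p t := by
    obtain hp₀ | hp₀ := lt_or_ge p 0
    · exact (tendsto_scalarPenalty_of_neg hlam hp₀).eventually (lt_mem_nhds (hB hp₀))
    · exact (tendsto_scalarPenalty_atTop hlam hp₀ hp).eventually_gt_atTop B
  obtain ⟨R, hR⟩ := eventually_atTop.1 hlt
  refine ⟨R, fun t ht => ?_⟩
  by_contra! h
  exact ht.not_gt ((hR |t| h.le).trans_eq (scalarPenalty_abs t))

end ScalarPenalty

/-- Near `t` the shrinkage map and the conjugate potential may have a corner; `ξ` and `η` are smooth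
functions with the same values at `t`, with the derivative identity `η' = t ξ'` of a Legendre
conjugate. -/
structure IsShrinkBranch (lam p : ℝ) (ξ η : ℝ → ℝ) (t : ℝ) : Prop where
  shrink_eq : ξ t = scalarShrink lam p t
  conj_eq : η t = scalarConj lam p t
  exists_hasDerivAt : ∃ d, HasDerivAt ξ d t ∧ HasDerivAt η (t * d) t ∧ |d| ≤ 2 - p

section Branches

variable {lam p t : ℝ}

lemma isShrinkBranch_of_le (hlam : 0 < lam) (hp : p ≤ 1) (ht : lam ≤ t) :
    IsShrinkBranch lam p (shrinkPos lam p)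
      (fun s => s * shrinkPos lam p s - shrinkPot lam p s) t where
  shrink_eq := (scalarShrink_of_le hlam ht).symm
  conj_eq := (scalarConj_of_le hlam ht).symm
  exists_hasDerivAt := by
    have ht₀ : 0 < t := hlam.trans_le ht
    refine ⟨_, hasDerivAt_shrinkPos ht₀, (((hasDerivAt_id t).mul (hasDerivAt_shrinkPos ht₀)).sub
      (hasDerivAt_shrinkPot ht₀)).congr_deriv (by simp), ?_⟩
    have hle : lam ^ (2 - p) * t ^ (p - 2) ≤ 1 := by
      have := mul_le_mul_of_nonneg_left (Real.rpow_le_rpow_of_nonpos hlam ht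
        (by linarith : p - 2 ≤ 0)) (Real.rpow_nonneg hlam.le (2 - p))
      rwa [← Real.rpow_add hlam, sub_add_sub_cancel', sub_self, Real.rpow_zero] at this
    have hnonneg : 0 ≤ lam ^ (2 - p) * t ^ (p - 2) := by positivity
    rw [abs_le]
    constructor <;> nlinarith

lemma isShrinkBranch_of_abs_le (hp : p ≤ 2) (ht : |t| ≤ lam) :
    IsShrinkBranch lam p (fun _ => 0) (fun _ => 0) t where
  shrink_eq := (scalarShrink_of_abs_le ht).symm
  conj_eq := (scalarConj_of_abs_le ht).symm
  exists_hasDerivAt := ⟨0, hasDerivAt_const _ _, by simpa using hasDerivAt_const t (0 : ℝ),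
    by simpa using hp⟩

lemma IsShrinkBranch.comp_neg {ξ η : ℝ → ℝ} (h : IsShrinkBranch lam p ξ η (-t)) :
    IsShrinkBranch lam p (fun s => -ξ (-s)) (fun s => η (-s)) t where
  shrink_eq := by rw [h.shrink_eq, scalarShrink_neg, neg_neg]
  conj_eq := by rw [h.conj_eq, scalarConj_neg]
  exists_hasDerivAt := by
    obtain ⟨d, hξ, hη, hd⟩ := h.exists_hasDerivAt
    exact ⟨d, (hξ.comp t (hasDerivAt_neg t)).neg.congr_deriv (by ring),
      (hη.comp t (hasDerivAt_neg t)).congr_deriv (by ring), hd⟩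

theorem exists_analyticAt_isShrinkBranch {ι : Type*} (hlam : 0 < lam) (hp : p ≤ 1)
    (𝒰 : Ultrafilter ι) {t : ι → ℝ} {a : ℝ} (ht : Tendsto t 𝒰 (𝓝 a)) :
    ∃ ξ η, AnalyticAt ℝ ξ a ∧ AnalyticAt ℝ η a ∧ ∀ᶠ k in 𝒰, IsShrinkBranch lam p ξ η (t k) := by
  have hconj {s : ℝ} (hs : 0 < s) :
      AnalyticAt ℝ (fun s => s * shrinkPos lam p s - shrinkPot lam p s) s :=
    (analyticAt_id.mul (analyticAt_shrinkPos hs)).sub (analyticAt_shrinkPot hs)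
  have hcases : (∀ᶠ k in 𝒰, lam ≤ t k) ∨ (∀ᶠ k in 𝒰, lam ≤ -t k) ∨ ∀ᶠ k in 𝒰, |t k| ≤ lam := by
    simp only [← Ultrafilter.eventually_or, abs_le']
    exact .of_forall fun k => by grind
  obtain h | h | h := hcases
  · have ha : 0 < a := hlam.trans_le (ge_of_tendsto ht h)
    exact ⟨_, _, analyticAt_shrinkPos ha, hconj ha, h.mono fun k => isShrinkBranch_of_le hlam hp⟩
  · have ha : 0 < -a := hlam.trans_le (ge_of_tendsto ht.neg h)
    exact ⟨_, _, ((analyticAt_shrinkPos ha).comp_of_eq analyticAt_id.neg rfl).neg,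
      (hconj ha).comp_of_eq (f := fun s => -s) analyticAt_id.neg rfl,
      h.mono fun k hk => (isShrinkBranch_of_le hlam hp hk).comp_neg⟩
  · exact ⟨_, _, analyticAt_const, analyticAt_const,
      h.mono fun k => isShrinkBranch_of_abs_le (by linarith)⟩

end Branches

section DotProduct

variable {m n : ℕ}

lemma l2_nonneg (v : Fin n → ℝ) : 0 ≤ l2 v := Real.sqrt_nonneg _

lemma l2_sq (v : Fin n → ℝ) : l2 v ^ 2 = v ⬝ᵥ v := by
  rw [l2, Real.sq_sqrt (Finset.sum_nonneg fun i _ => sq_nonneg _)]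
  simp only [dotProduct, sq]

lemma l2_smul (c : ℝ) (v : Fin n → ℝ) : l2 (c • v) = |c| * l2 v := by
  simp only [l2, Pi.smul_apply, smul_eq_mul, mul_pow, ← Finset.mul_sum]
  rw [Real.sqrt_mul (sq_nonneg c), Real.sqrt_sq_eq_abs]

lemma norm_sq_le_dotProduct_self (v : Fin n → ℝ) : ‖v‖ ^ 2 ≤ v ⬝ᵥ v := by
  have hle : ‖v‖ ≤ l2 v := (pi_norm_le_iff_of_nonneg (l2_nonneg v)).2 fun i =>
    Real.abs_le_sqrt (Finset.single_le_sum (f := fun i => v i ^ 2) (fun i _ => sq_nonneg _)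
      (Finset.mem_univ i))
  exact (pow_le_pow_left₀ (norm_nonneg v) hle 2).trans_eq (l2_sq v)

lemma dotProduct_sub_self (u v : Fin n → ℝ) :
    (u - v) ⬝ᵥ (u - v) = u ⬝ᵥ u - 2 * (u ⬝ᵥ v) + v ⬝ᵥ v := by
  simp only [sub_dotProduct, dotProduct_sub, dotProduct_comm v u]
  ring

lemma bddAbove_l2_mulVec (A : Matrix (Fin m) (Fin n) ℝ) :
    BddAbove {c | ∃ v : Fin n → ℝ, l2 v ≤ 1 ∧ c = l2 (A.mulVec v)} := by
  refine ⟨Real.sqrt (∑ j, ∑ i, A j i ^ 2), ?_⟩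
  rintro c ⟨v, hv, rfl⟩
  have hv' : ∑ i, v i ^ 2 ≤ 1 := by simpa [l2] using hv
  refine Real.sqrt_le_sqrt (Finset.sum_le_sum fun j _ => ?_)
  exact (Finset.sum_mul_sq_le_sq_mul_sq Finset.univ (A j) v).trans
    (mul_le_of_le_one_right (Finset.sum_nonneg fun i _ => sq_nonneg _) hv')

lemma l2_mulVec_le (A : Matrix (Fin m) (Fin n) ℝ) (v : Fin n → ℝ) :
    l2 (A.mulVec v) ≤ specNorm A * l2 v := by
  obtain h | h := (l2_nonneg v).eq_or_lt
  · have hv : v = 0 := dotProduct_self_eq_zero.1 (by rw [← l2_sq, ← h, zero_pow two_ne_zero])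
    simp [hv, l2]
  · have hunit : l2 ((l2 v)⁻¹ • v) ≤ 1 := by
      rw [l2_smul, abs_of_pos (inv_pos.2 h), inv_mul_cancel₀ h.ne']
    have hle : l2 (A.mulVec ((l2 v)⁻¹ • v)) ≤ specNorm A :=
      le_csSup (bddAbove_l2_mulVec A) ⟨_, hunit, rfl⟩
    rwa [Matrix.mulVec_smul, l2_smul, abs_of_pos (inv_pos.2 h), inv_mul_le_iff₀ h, mul_comm] at hle

lemma mulVec_dotProduct_self_le {A : Matrix (Fin m) (Fin n) ℝ} (hA : specNorm A ≤ 1)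
    (v : Fin n → ℝ) : A.mulVec v ⬝ᵥ A.mulVec v ≤ v ⬝ᵥ v := by
  rw [← l2_sq, ← l2_sq]
  exact pow_le_pow_left₀ (l2_nonneg _)
    ((l2_mulVec_le A v).trans (mul_le_of_le_one_left (l2_nonneg v) hA)) 2

lemma transpose_mulVec_dotProduct_self_le {A : Matrix (Fin m) (Fin n) ℝ} (hA : specNorm A ≤ 1)
    (z : Fin m → ℝ) : A.transpose.mulVec z ⬝ᵥ A.transpose.mulVec z ≤ z ⬝ᵥ z := by
  set w := A.transpose.mulVec z
  have hadj : w ⬝ᵥ w = z ⬝ᵥ A.mulVec w := A.dotProduct_transpose_mulVec w z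
  have hcontr : A.mulVec w ⬝ᵥ A.mulVec w ≤ w ⬝ᵥ w := mulVec_dotProduct_self_le hA w
  have hsq : 0 ≤ (z - A.mulVec w) ⬝ᵥ (z - A.mulVec w) := by rw [← l2_sq]; positivity
  rw [dotProduct_sub_self] at hsq
  linarith

end DotProduct

section GradientStep

variable {m n : ℕ} (A : Matrix (Fin m) (Fin n) ℝ) (b : Fin m → ℝ)

/-- The gradient step with unit step size for the least-squares term `‖A s - b‖² / 2`. -/
def gradStep (s : Fin n → ℝ) : Fin n → ℝ := s - A.transpose.mulVec (A.mulVec s - b)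

lemma continuous_gradStep : Continuous (gradStep A b) :=
  continuous_id.sub (continuous_const.matrix_mulVec
    ((continuous_const.matrix_mulVec continuous_id).sub continuous_const))

lemma gradStep_sub_gradStep (s s' : Fin n → ℝ) : gradStep A b s - gradStep A b s' =
    (s - s') - A.transpose.mulVec (A.mulVec (s - s')) := by
  simp only [gradStep, Matrix.mulVec_sub]
  abel

lemma dist_gradStep_sq_le {A : Matrix (Fin m) (Fin n) ℝ} (hA : specNorm A ≤ 1)
    (b : Fin m → ℝ) (s s' : Fin n → ℝ) : dist (gradStep A b s) (gradStep A b s') ^ 2 ≤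
      (s - s') ⬝ᵥ (s - s') - A.mulVec (s - s') ⬝ᵥ A.mulVec (s - s') := by
  rw [dist_eq_norm, gradStep_sub_gradStep]
  refine (norm_sq_le_dotProduct_self _).trans ?_
  rw [dotProduct_sub_self, A.dotProduct_transpose_mulVec (s - s')]
  linarith [transpose_mulVec_dotProduct_self_le hA (A.mulVec (s - s'))]

lemma l2_mulVec_sub_sq_sub (s s' : Fin n → ℝ) :
    (l2 (A.mulVec s - b) ^ 2 - s ⬝ᵥ s) - (l2 (A.mulVec s' - b) ^ 2 - s' ⬝ᵥ s') =
      (s - s') ⬝ᵥ (s - s') - A.mulVec (s - s') ⬝ᵥ A.mulVec (s - s') -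
        2 * (gradStep A b s ⬝ᵥ (s - s')) := by
  have hres : A.mulVec s' - b = A.mulVec s - b - A.mulVec (s - s') := by
    rw [Matrix.mulVec_sub]
    abel
  have hs' : s' ⬝ᵥ s' = s ⬝ᵥ s - 2 * (s ⬝ᵥ (s - s')) + (s - s') ⬝ᵥ (s - s') := by
    rw [← dotProduct_sub_self, sub_sub_cancel]
  have hgrad : gradStep A b s ⬝ᵥ (s - s') =
      s ⬝ᵥ (s - s') - (A.mulVec s - b) ⬝ᵥ A.mulVec (s - s') := by
    rw [gradStep, sub_dotProduct, dotProduct_comm (A.transpose.mulVec _),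
      A.dotProduct_transpose_mulVec]
  rw [l2_sq, l2_sq, hres, dotProduct_sub_self (A.mulVec s - b), hs', hgrad]
  ring

end GradientStep

section BranchEnergy

variable {m n : ℕ} (A : Matrix (Fin m) (Fin n) ℝ) (b : Fin m → ℝ)

/-- The objective `F_p`, as a function of the variable `t` preceding shrinkage, with the
shrinkage map and the conjugate potential in coordinate `i` replaced by `ξ i` and `η i`. -/
def branchEnergy (ξ η : Fin n → ℝ → ℝ) (t : Fin n → ℝ) : ℝ :=
  ∑ i, (η i (t i) - ξ i (t i) ^ 2 / 2) + l2 (A.mulVec (fun i => ξ i (t i)) - b) ^ 2 / 2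

variable {ξ η : Fin n → ℝ → ℝ} {ξ' t : Fin n → ℝ}

lemma analyticAt_branchEnergy (hξ : ∀ i, AnalyticAt ℝ (ξ i) (t i))
    (hη : ∀ i, AnalyticAt ℝ (η i) (t i)) : AnalyticAt ℝ (branchEnergy A b ξ η) t := by
  have hcoord {f : Fin n → ℝ → ℝ} (hf : ∀ i, AnalyticAt ℝ (f i) (t i)) (i : Fin n) :
      AnalyticAt ℝ (fun t : Fin n → ℝ => f i (t i)) t :=
    (hf i).comp_of_eq (analyticAt_coord i t) rfl
  have hres (j : Fin m) :
      AnalyticAt ℝ (fun t : Fin n → ℝ => (A.mulVec (fun i => ξ i (t i)) - b) j) t :=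
    (Finset.analyticAt_fun_sum Finset.univ fun i _ =>
      analyticAt_const.mul (hcoord hξ i)).sub analyticAt_const
  unfold branchEnergy
  simp only [l2_sq]
  exact (Finset.analyticAt_fun_sum _ fun i _ =>
    (hcoord hη i).sub ((hcoord hξ i).pow 2).div_const).add
      (Finset.analyticAt_fun_sum _ fun j _ => (hres j).mul (hres j)).div_const

lemma hasFDerivAt_branchEnergy (hξ : ∀ i, HasDerivAt (ξ i) (ξ' i) (t i))
    (hη : ∀ i, HasDerivAt (η i) (t i * ξ' i) (t i)) :
    HasFDerivAt (branchEnergy A b ξ η)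
      (∑ i, ((t - gradStep A b fun i => ξ i (t i)) i * ξ' i) •
        ContinuousLinearMap.proj (R := ℝ) (φ := fun _ : Fin n => ℝ) i) t := by
  have hcoord {f : Fin n → ℝ → ℝ} {f' : Fin n → ℝ} (hf : ∀ i, HasDerivAt (f i) (f' i) (t i))
      (i : Fin n) := (hf i).comp_hasFDerivAt t (hasFDerivAt_apply (𝕜 := ℝ) i t)
  have hpen := HasFDerivAt.fun_sum (u := Finset.univ) fun i _ =>
    (hcoord hη i).sub (((hcoord hξ i).pow 2).mul_const (1 / 2))
  have hres (j : Fin m) := (HasFDerivAt.fun_sum (u := Finset.univ) fun i _ =>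
    (hcoord hξ i).const_mul (A j i)).sub_const (b j)
  have hfit := (HasFDerivAt.fun_sum (u := Finset.univ) fun j _ =>
    ((hres j).pow 2)).mul_const (1 / 2)
  have hfun : branchEnergy A b ξ η = fun t => ∑ i, (η i (t i) - ξ i (t i) ^ 2 * (1 / 2)) +
      (∑ j, (∑ i, A j i * ξ i (t i) - b j) ^ 2) * (1 / 2) := by
    funext t
    simp only [branchEnergy, l2_sq, dotProduct, Matrix.mulVec, Pi.sub_apply]
    ring_nf
  rw [hfun]
  refine (hpen.add hfit).congr_fderiv ?_
  ext v
  have hadj : ∑ i, ξ' i * v i * A.transpose.mulVec (A.mulVec (fun i => ξ i (t i)) - b) i =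
      ∑ j, (A.mulVec (fun i => ξ i (t i)) j - b j) * ∑ i, A j i * (ξ' i * v i) :=
    A.dotProduct_transpose_mulVec _ _
  have hgrad : ∑ i, (t - gradStep A b fun i => ξ i (t i)) i * ξ' i * v i =
      ∑ i, (t i * ξ' i * v i - ξ i (t i) * ξ' i * v i) +
        ∑ i, ξ' i * v i * A.transpose.mulVec (A.mulVec (fun i => ξ i (t i)) - b) i := by
    rw [← Finset.sum_add_distrib]
    refine Finset.sum_congr rfl fun i _ => ?_
    simp only [gradStep, Pi.sub_apply]
    ring
  simp only [add_apply, sub_apply, sum_apply, smul_apply, ContinuousLinearMap.proj_apply,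
    Function.comp_apply, smul_eq_mul, nsmul_eq_mul, Nat.add_one_sub_one, pow_one, Nat.cast_ofNat]
  rw [hgrad, hadj, Finset.mul_sum]
  congr 1
  · exact Finset.sum_congr rfl fun i _ => by ring
  · exact Finset.sum_congr rfl fun j _ => by rw [Matrix.mulVec, dotProduct]; ring

lemma norm_fderiv_branchEnergy_le {C : ℝ} (hξ : ∀ i, HasDerivAt (ξ i) (ξ' i) (t i))
    (hη : ∀ i, HasDerivAt (η i) (t i * ξ' i) (t i)) (hC : ∀ i, |ξ' i| ≤ C) :
    ‖fderiv ℝ (branchEnergy A b ξ η) t‖ ≤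
      n * C * dist t (gradStep A b fun i => ξ i (t i)) := by
  rw [(hasFDerivAt_branchEnergy A b hξ hη).fderiv, dist_eq_norm]
  set w := t - gradStep A b fun i => ξ i (t i)
  have hproj (i : Fin n) :
      ‖ContinuousLinearMap.proj (R := ℝ) (φ := fun _ : Fin n => ℝ) i‖ ≤ 1 :=
    ContinuousLinearMap.opNorm_le_bound _ zero_le_one fun v => by
      simpa using norm_le_pi_norm v i
  have hterm (i : Fin n) :
      ‖(w i * ξ' i) • ContinuousLinearMap.proj (R := ℝ) (φ := fun _ : Fin n => ℝ) i‖ ≤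
        C * ‖w‖ := by
    rw [norm_smul, norm_mul, mul_comm C]
    exact mul_le_of_le_one_right (by positivity) (hproj i) |>.trans
      (mul_le_mul (norm_le_pi_norm w i) (hC i) (norm_nonneg _) (norm_nonneg w))
  refine (norm_sum_le _ _).trans ((Finset.sum_le_sum fun i _ => hterm i).trans_eq ?_)
  rw [Finset.sum_const, Finset.card_univ, Fintype.card_fin, nsmul_eq_mul, mul_assoc]

end BranchEnergy

section ShrinkEnergy

variable {m n : ℕ} {lam p : ℝ}

lemma Sp_apply (hlam : 0 < lam) (hp : p ≤ 1) (t : Fin n → ℝ) (i : Fin n) :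
    Sp lam p t i = scalarShrink lam p (t i) :=
  pshrinkFun_abs_mul_sign hlam hp (t i)

lemma Sp_zero (hlam : 0 < lam) (hp : p ≤ 1) : Sp lam p (0 : Fin n → ℝ) = 0 :=
  funext fun i => (Sp_apply hlam hp 0 i).trans (scalarShrink_of_abs_le (by simpa using hlam.le))

lemma continuous_Sp (hlam : 0 < lam) (hp : p ≤ 1) :
    Continuous (Sp lam p : (Fin n → ℝ) → Fin n → ℝ) :=
  continuous_pi fun i => ((continuous_scalarShrink hlam).comp (continuous_apply i)).congr fun t =>
    (Sp_apply hlam hp t i).symm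

/-- The objective `F_p` as a function of the variable `t` preceding shrinkage, that is
`F_p (S_p t)`. -/
def shrinkEnergy (lam p : ℝ) (A : Matrix (Fin m) (Fin n) ℝ) (b : Fin m → ℝ) (t : Fin n → ℝ) : ℝ :=
  ∑ i, scalarPenalty lam p (t i) + l2 (A.mulVec (Sp lam p t) - b) ^ 2 / 2

variable {A : Matrix (Fin m) (Fin n) ℝ} {b : Fin m → ℝ}

lemma scalarPenalty_le_shrinkEnergy (hlam : 0 < lam) (hp : p ≤ 1) (t : Fin n → ℝ) (i : Fin n) :
    scalarPenalty lam p (t i) ≤ shrinkEnergy lam p A b t :=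
  (Finset.single_le_sum (f := fun i => scalarPenalty lam p (t i))
    (fun i _ => scalarPenalty_nonneg hlam hp (t i)) (Finset.mem_univ i)).trans
      (le_add_of_nonneg_right (by positivity))

lemma shrinkEnergy_nonneg (hlam : 0 < lam) (hp : p ≤ 1) (t : Fin n → ℝ) :
    0 ≤ shrinkEnergy lam p A b t :=
  add_nonneg (Finset.sum_nonneg fun i _ => scalarPenalty_nonneg hlam hp (t i)) (by positivity)

lemma shrinkEnergy_zero (hlam : 0 < lam) (hp : p ≤ 1) :
    shrinkEnergy lam p A b 0 = l2 b ^ 2 / 2 := by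
  have hpen : scalarPenalty lam p 0 = 0 := scalarPenalty_of_abs_le (by simpa using hlam.le)
  simp [shrinkEnergy, Sp_zero hlam hp, hpen, l2]

lemma shrinkEnergy_eq_sum_scalarConj (hlam : 0 < lam) (hp : p ≤ 1) (t : Fin n → ℝ) :
    shrinkEnergy lam p A b t = ∑ i, scalarConj lam p (t i) +
      (l2 (A.mulVec (Sp lam p t) - b) ^ 2 - Sp lam p t ⬝ᵥ Sp lam p t) / 2 := by
  simp only [shrinkEnergy, scalarPenalty, ← Sp_apply hlam hp, Finset.sum_sub_distrib,
    ← Finset.sum_div, dotProduct, ← sq]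
  ring

lemma dotProduct_Sp_sub_le (hlam : 0 < lam) (hp : p ≤ 1) (t t' : Fin n → ℝ) :
    t' ⬝ᵥ (Sp lam p t - Sp lam p t') ≤
      ∑ i, scalarConj lam p (t i) - ∑ i, scalarConj lam p (t' i) := by
  rw [← Finset.sum_sub_distrib, dotProduct]
  refine Finset.sum_le_sum fun i _ => ?_
  rw [Pi.sub_apply, Sp_apply hlam hp, Sp_apply hlam hp, scalarConj, scalarConj]
  linarith [scalarShrink_mul_sub_le hlam hp (t i) (t' i)]

theorem dist_gradStep_Sp_sq_le (hlam : 0 < lam) (hp : p ≤ 1) (hA : specNorm A ≤ 1)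
    {t t' : Fin n → ℝ} (ht' : t' = gradStep A b (Sp lam p t)) :
    dist t' (gradStep A b (Sp lam p t')) ^ 2 ≤
      2 * (shrinkEnergy lam p A b t - shrinkEnergy lam p A b t') := by
  have hdist := dist_gradStep_sq_le hA b (Sp lam p t) (Sp lam p t')
  have hquad := l2_mulVec_sub_sq_sub A b (Sp lam p t) (Sp lam p t')
  rw [← ht'] at hdist hquad
  rw [shrinkEnergy_eq_sum_scalarConj hlam hp, shrinkEnergy_eq_sum_scalarConj hlam hp]
  linarith [dotProduct_Sp_sub_le hlam hp t t']

end ShrinkEnergy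

section Convergence

variable {m n : ℕ} {lam p : ℝ} {A : Matrix (Fin m) (Fin n) ℝ} {b : Fin m → ℝ} {t : ℕ → Fin n → ℝ}
  {l : ℝ}

lemma branch_eq_Sp (hlam : 0 < lam) (hp : p ≤ 1) {ξ η : Fin n → ℝ → ℝ} {t : Fin n → ℝ}
    (h : ∀ i, IsShrinkBranch lam p (ξ i) (η i) (t i)) : (fun i => ξ i (t i)) = Sp lam p t :=
  funext fun i => (h i).shrink_eq.trans (Sp_apply hlam hp t i).symm

lemma branchEnergy_eq_shrinkEnergy (hlam : 0 < lam) (hp : p ≤ 1) {ξ η : Fin n → ℝ → ℝ}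
    {t : Fin n → ℝ} (h : ∀ i, IsShrinkBranch lam p (ξ i) (η i) (t i)) :
    branchEnergy A b ξ η t = shrinkEnergy lam p A b t := by
  rw [branchEnergy, branch_eq_Sp hlam hp h]
  simp only [(h _).shrink_eq, (h _).conj_eq, shrinkEnergy, scalarPenalty]

lemma norm_fderiv_branchEnergy_le_dist (hlam : 0 < lam) (hp : p ≤ 1) {ξ η : Fin n → ℝ → ℝ}
    {t : Fin n → ℝ} (h : ∀ i, IsShrinkBranch lam p (ξ i) (η i) (t i)) :
    ‖fderiv ℝ (branchEnergy A b ξ η) t‖ ≤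
      n * (2 - p) * dist t (gradStep A b (Sp lam p t)) := by
  choose ξ' hξ hη hξ' using fun i => (h i).exists_hasDerivAt
  simpa only [branch_eq_Sp hlam hp h] using norm_fderiv_branchEnergy_le A b hξ hη hξ'

theorem exists_eventually_lojasiewiczBound_of_tendsto {ι : Type*} (hlam : 0 < lam) (hp : p ≤ 1)
    {𝒰 : Ultrafilter ι} {t : ι → Fin n → ℝ} {a : Fin n → ℝ} (ht : Tendsto t 𝒰 (𝓝 a))
    (hl : Tendsto (fun k => shrinkEnergy lam p A b (t k)) 𝒰 (𝓝 l)) :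
    ∃ M, ∀ᶠ k in 𝒰, LojasiewiczBound M |shrinkEnergy lam p A b (t k) - l|
      (dist (t k) (gradStep A b (Sp lam p (t k)))) := by
  choose ξ η hξ hη hbranch using fun i =>
    exists_analyticAt_isShrinkBranch hlam hp 𝒰 (tendsto_pi_nhds.1 ht i)
  have hbranch' := eventually_all.2 hbranch
  have han := analyticAt_branchEnergy A b hξ hη
  have hlim : branchEnergy A b ξ η a = l :=
    tendsto_nhds_unique (han.continuousAt.tendsto.comp ht)
      (hl.congr' (hbranch'.mono fun k hk => (branchEnergy_eq_shrinkEnergy hlam hp hk).symm))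
  obtain ⟨M₀, hM₀⟩ := lojasiewicz_gradient_inequality han
  obtain ⟨M, hM⟩ := LojasiewiczBound.exists_of_le_mul M₀ (n * (2 - p))
  have hsmall : ∀ᶠ k in 𝒰, |shrinkEnergy lam p A b (t k) - l| ≤ 1 :=
    (hl.sub_const l).abs.eventually (ge_mem_nhds (by simp))
  refine ⟨M, ?_⟩
  filter_upwards [hbranch', ht.eventually hM₀, hsmall] with k hk hloj hle
  rw [hlim, branchEnergy_eq_shrinkEnergy hlam hp hk] at hloj
  exact hM _ _ _ hloj (abs_nonneg _) hle dist_nonneg (norm_fderiv_branchEnergy_le_dist hlam hp hk)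

theorem exists_eventually_lojasiewiczBound (hlam : 0 < lam) (hp : p ≤ 1)
    (hbdd : ∃ R, ∀ k, ‖t k‖ ≤ R)
    (hl : Tendsto (fun k => shrinkEnergy lam p A b (t k)) atTop (𝓝 l)) :
    ∃ M, ∀ᶠ k in atTop, LojasiewiczBound M |shrinkEnergy lam p A b (t k) - l|
      (dist (t k) (gradStep A b (Sp lam p (t k)))) := by
  obtain ⟨R, hR⟩ := hbdd
  obtain ⟨M, hM⟩ := exists_eventually_of_forall_ultrafilter (F := atTop)
    (Q := fun M k => LojasiewiczBound M |shrinkEnergy lam p A b (t k) - l|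
      (dist (t k) (gradStep A b (Sp lam p (t k))))) fun 𝒰 h𝒰 => by
    obtain ⟨a, -, ha⟩ := (isCompact_closedBall (0 : Fin n → ℝ) R).ultrafilter_le_nhds (𝒰.map t)
      (le_principal_iff.2 (mem_map.2 (univ_mem' fun k => by simpa using hR k)))
    exact exists_eventually_lojasiewiczBound_of_tendsto hlam hp ha (hl.mono_left h𝒰)
  have hsmall : ∀ᶠ k in atTop, |shrinkEnergy lam p A b (t k) - l| ≤ 1 :=
    (hl.sub_const l).abs.eventually (ge_mem_nhds (by simp))
  refine ⟨M, ?_⟩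
  filter_upwards [hM, hsmall] with k ⟨M', hM', hloj⟩ hle
  exact hloj.mono hM' (abs_nonneg _) hle (by gcongr)

lemma exists_norm_le_of_shrinkEnergy_le (hlam : 0 < lam) (hp : p ≤ 1) {B : ℝ}
    (hB : p < 0 → B < lam ^ 2 * (p - 2) / (2 * p)) :
    ∃ R, ∀ t, shrinkEnergy lam p A b t ≤ B → ‖t‖ ≤ R := by
  obtain ⟨R, hR⟩ := exists_abs_le_of_scalarPenalty_le hlam hp hB
  exact ⟨max R 0, fun t ht => (pi_norm_le_iff_of_nonneg (le_max_right _ _)).2 fun i =>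
    le_max_of_le_left (hR _ ((scalarPenalty_le_shrinkEnergy hlam hp t i).trans ht))⟩

theorem exists_tendsto_of_eq_gradStep_Sp (hlam : 0 < lam) (hp : p ≤ 1) (hA : specNorm A ≤ 1)
    (ht : ∀ k, t (k + 1) = gradStep A b (Sp lam p (t k)))
    (h₀ : p < 0 → shrinkEnergy lam p A b (t 0) < lam ^ 2 * (p - 2) / (2 * p)) :
    ∃ a, Tendsto t atTop (𝓝 a) := by
  have hdesc (k : ℕ) : dist (t (k + 1)) (t (k + 2)) ^ 2 ≤
      2 * (shrinkEnergy lam p A b (t k) - shrinkEnergy lam p A b (t (k + 1))) := by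
    rw [ht (k + 1)]
    exact dist_gradStep_Sp_sq_le hlam hp hA (ht k)
  have hanti : Antitone fun k => shrinkEnergy lam p A b (t k) := antitone_nat_of_succ_le fun k =>
    sub_nonneg.1 (nonneg_of_mul_nonneg_right ((sq_nonneg _).trans (hdesc k)) two_pos)
  have hbelow : BddBelow (Set.range fun k => shrinkEnergy lam p A b (t k)) :=
    ⟨0, Set.forall_mem_range.2 fun k => shrinkEnergy_nonneg hlam hp _⟩
  obtain ⟨R, hR⟩ := exists_norm_le_of_shrinkEnergy_le hlam hp h₀
  obtain ⟨M, hM⟩ := exists_eventually_lojasiewiczBound hlam hp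
    ⟨R, fun k => hR _ (hanti (Nat.zero_le k))⟩ (tendsto_atTop_ciInf hanti hbelow)
  refine cauchySeq_tendsto_of_complete (cauchySeq_of_lojasiewiczBound (m := M) two_pos
    (ciInf_le hbelow) hdesc (hM.mono fun k hk => ?_))
  rwa [abs_of_nonneg (sub_nonneg.2 (ciInf_le hbelow k)), ← ht k] at hk

lemma shrinkEnergy_gradStep_zero_lt (hlam : 0 < lam) (hA : specNorm A ≤ 1) (hp : p < 0)
    (hb : lam ^ 2 > p * l2 b ^ 2 / (p - 2)) :
    shrinkEnergy lam p A b (gradStep A b 0) < lam ^ 2 * (p - 2) / (2 * p) := by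
  have hp₁ : p ≤ 1 := by linarith
  have hdesc := (sq_nonneg _).trans (dist_gradStep_Sp_sq_le (b := b) hlam hp₁ hA (t := 0) rfl)
  rw [Sp_zero hlam hp₁, shrinkEnergy_zero hlam hp₁] at hdesc
  have hlt : l2 b ^ 2 / 2 < lam ^ 2 * (p - 2) / (2 * p) := by
    rw [gt_iff_lt, div_lt_iff_of_neg (by linarith)] at hb
    rw [lt_div_iff_of_neg (by linarith)]
    linarith
  linarith

end Convergence

theorem stmt19_general (lam p : ℝ) (hlam : 0 < lam) (hp : p ≤ 1)
    {m n : ℕ} (A : Matrix (Fin m) (Fin n) ℝ) (hA : specNorm A ≤ 1)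
    (b : Fin m → ℝ) (x : ℕ → Fin n → ℝ)
    (hiter : ∀ k : ℕ,
      x (k + 1) = Sp lam p (x k - A.transpose.mulVec (A.mulVec (x k) - b)))
    (hcase : 0 ≤ p ∨
      (p < 0 ∧ lam ^ 2 > p * (l2 b) ^ 2 / (p - 2) ∧ x 0 = 0)) :
    ∃ xbar : Fin n → ℝ,
      Filter.Tendsto x Filter.atTop (nhds xbar) ∧
      xbar = Sp lam p (xbar - A.transpose.mulVec (A.mulVec xbar - b)) := by
  have ht (k : ℕ) : gradStep A b (x (k + 1)) = gradStep A b (Sp lam p (gradStep A b (x k))) :=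
    congrArg (gradStep A b) (hiter k)
  have h₀ (hp₀ : p < 0) :
      shrinkEnergy lam p A b (gradStep A b (x 0)) < lam ^ 2 * (p - 2) / (2 * p) := by
    obtain ⟨-, hb, hx₀⟩ := hcase.resolve_left hp₀.not_ge
    rw [hx₀]
    exact shrinkEnergy_gradStep_zero_lt hlam hA hp₀ hb
  obtain ⟨a, ha⟩ :=
    exists_tendsto_of_eq_gradStep_Sp (t := fun k => gradStep A b (x k)) hlam hp hA ht h₀
  have hlim : Tendsto x atTop (𝓝 (Sp lam p a)) := by
    rw [← tendsto_add_atTop_iff_nat 1, funext hiter]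
    exact ((continuous_Sp hlam hp).tendsto a).comp ha
  have hfix : a = gradStep A b (Sp lam p a) :=
    tendsto_nhds_unique ha (((continuous_gradStep A b).tendsto _).comp hlim)
  exact ⟨Sp lam p a, hlim, congrArg (Sp lam p) hfix⟩

/-- global convergence of IPS to a fixed point of the iteration map
(equivalently, a first-order stationary point of `F_p`). -/
theorem stmt19 (lam p : ℝ) (hlam : 0 < lam) (hp : p < 1)
    {m n : ℕ} (A : Matrix (Fin m) (Fin n) ℝ) (hA : specNorm A < 1)
    (b : Fin m → ℝ) (x : ℕ → Fin n → ℝ)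
    (hiter : ∀ k : ℕ,
      x (k + 1) = Sp lam p (x k - A.transpose.mulVec (A.mulVec (x k) - b)))
    (hcase : 0 ≤ p ∨
      (p < 0 ∧ lam ^ 2 > p * (l2 b) ^ 2 / (p - 2) ∧ x 0 = 0)) :
    ∃ xbar : Fin n → ℝ,
      Filter.Tendsto x Filter.atTop (nhds xbar) ∧
      xbar = Sp lam p (xbar - A.transpose.mulVec (A.mulVec xbar - b)) :=
  stmt19_general lam p hlam hp.le A hA.le b x hiter hcase

end
end
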